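/- arXiv:2602.04544 — 3 statements merged into one kernel-verified Lean document; each statement's English description precedes it below -/
import Mathlib

section
/- For every N ≥ 1 and every n ∈ ℕ, the following are equivalent: (1) there exists an ℝ-linear map f : ℝⁿ → M(N,ℂ) such that every f(v) is skew-symmetric (f(v)ᵀ = −f(v)) and f(v) f(v)ᴴ = ‖v‖² I_N for all v ∈ ℝⁿ; (2) there exists an ℝ-linear map f : ℝⁿ → M(N,ℂ) with every f(v) skew-symmetric and f(v) invertible for every nonzero v; (3) n ≤ ρ(N/8) + 6. (Entry 𝔤 = 𝔰𝔬*(2N) of the Hurwitz–Radon value theorem; it recovers Au-Yeung's number ℂ_{sk-s}(N).) -/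
open Matrix

/-- Extended Hurwitz–Radon number: writing the 2-adic valuation of `t` as `4a + b`
with `a ∈ ℤ` and `b ∈ {0,1,2,3}`, `ρ(t) := 8a + 2^b`. -/
noncomputable def hrRho (t : ℚ) : ℤ :=
  8 * (padicValRat 2 t / 4) + 2 ^ (padicValRat 2 t % 4).toNat

/-!
The upper bound is an index computation. A family of real `m × m` matrices, all of whose nonzero
real combinations are invertible, is the symbol of an elliptic operator
`∑ i, X i * x i + Y i * ∂ i` on `L²(ℝ^ι; ℝ^m)`. In the Hermite basis, conjugated by a power of the
number operator, it becomes a bounded skew-adjoint Fredholm operator that is odd for the parity of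
the Hermite degree. The difference of the dimensions of the even and the odd part of its kernel is a
homotopy invariant, and deforming the symbol to Clifford matrices computes it in terms of `m` alone.
A skew-symmetric complex matrix `A` yields the conjugate-linear map `v ↦ A (conj v)`. Its real
matrix is again skew-symmetric and anticommutes with the complex structure, so that after tensoring
with a Clifford system both parts of the kernel are Clifford modules. The dimensions of Clifford
modules are divisible by powers of two, so the value of the index bounds the number of matrices in
terms of the `2`-adic valuation of `N`. Tensor products of Pauli matrices attain the bound.
-/

open Module ContinuousLinearMap
open scoped InnerProductSpace Kronecker

/-! ### The index of skew-adjoint odd operators -/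

section Index

variable {E : Type*} [NormedAddCommGroup E] [InnerProductSpace ℝ E]

/-- The part of the kernel of `T` on which the grading `P` acts by the scalar `e`. -/
def gradedKer (T P : E →L[ℝ] E) (e : ℝ) : Submodule ℝ E :=
  T.ker ⊓ End.eigenspace (P : E →ₗ[ℝ] E) e

lemma mem_gradedKer {T P : E →L[ℝ] E} {e : ℝ} {u : E} :
    u ∈ gradedKer T P e ↔ T u = 0 ∧ P u = e • u := by
  simp [gradedKer]

/-- The index of an operator `T` that is odd with respect to the grading `P`: the difference of the
dimensions of the even and the odd part of its kernel. It is meaningful only when `T` has a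
finite-dimensional kernel. -/
noncomputable def gradedIndex (T P : E →L[ℝ] E) : ℤ :=
  (finrank ℝ (gradedKer T P 1) : ℤ) - finrank ℝ (gradedKer T P (-1))

/-- `T` is bounded below on the orthogonal complement of a finite-dimensional subspace. For
skew-adjoint operators this is equivalent to being Fredholm. -/
def IsBoundedBelowModFinite (T : E →L[ℝ] E) : Prop :=
  ∃ F : Submodule ℝ E, FiniteDimensional ℝ F ∧ ∃ c > 0, ∀ u ∈ Fᗮ, c * ‖u‖ ≤ ‖T u‖

lemma IsBoundedBelowModFinite.finiteDimensional_ker {T : E →L[ℝ] E}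
    (hT : IsBoundedBelowModFinite T) : FiniteDimensional ℝ T.ker := by
  obtain ⟨F, _, c, hc, hbound⟩ := hT
  refine Module.Finite.of_injective
    ((F.orthogonalProjectionOnto : E →ₗ[ℝ] F) ∘ₗ T.ker.subtype) ?_
  rw [← LinearMap.ker_eq_bot, LinearMap.ker_eq_bot']
  rintro ⟨u, hu⟩ hproj
  have h := hbound u (Submodule.orthogonalProjectionOnto_eq_zero_iff.1 hproj)
  rw [show T u = 0 from hu, norm_zero] at h
  simpa using le_antisymm (nonpos_of_mul_nonpos_right h hc) (norm_nonneg u)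

lemma apply_apply_of_mul_eq_neg {P S : E →L[ℝ] E} (hPS : P * S = -(S * P)) (u : E) :
    P (S u) = -S (P u) :=
  congr($hPS u)

section Compression

variable (K : Submodule ℝ E) [K.HasOrthogonalProjection]

/-- The compression of `S` to the orthogonal complement of `K`. -/
noncomputable def compression (S : E →L[ℝ] E) : Kᗮ →L[ℝ] Kᗮ :=
  Kᗮ.orthogonalProjectionOnto.comp (S.comp Kᗮ.subtypeL)

lemma continuous_compression : Continuous (compression K) := by
  unfold compression
  fun_prop

/-- The Lyapunov–Schmidt lift: when the compression of `S` to `Kᗮ` is invertible, it sends `u` to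
the unique `w` with `u - w ∈ Kᗮ` and `S w ∈ K`. -/
noncomputable def schmidtLift (S : E →L[ℝ] E) : E →ₗ[ℝ] E :=
  LinearMap.id - (Kᗮ.subtypeL.comp
    ((Ring.inverse (compression K S)).comp (Kᗮ.orthogonalProjectionOnto.comp S)) : E →ₗ[ℝ] E)

lemma sub_schmidtLift_mem {S : E →L[ℝ] E} (u : E) : u - schmidtLift K S u ∈ Kᗮ := by
  simp [schmidtLift]

variable {K}

lemma eq_zero_of_schmidtLift_eq_zero {S : E →L[ℝ] E} {u : E} (hu : u ∈ K)
    (h : schmidtLift K S u = 0) : u = 0 := by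
  have hortho := sub_schmidtLift_mem (S := S) K u
  rw [h, sub_zero] at hortho
  exact (Submodule.inf_orthogonal_eq_bot K ▸ Submodule.mem_inf.2 ⟨hu, hortho⟩ :)

lemma apply_schmidtLift_mem {S : E →L[ℝ] E} (hS : IsUnit (compression K S)) (u : E) :
    S (schmidtLift K S u) ∈ K := by
  refine (Submodule.orthogonal_orthogonal K).le
    (Submodule.orthogonalProjectionOnto_eq_zero_iff.1 ?_)
  have h := congr($(Ring.mul_inverse_cancel _ hS) (Kᗮ.orthogonalProjectionOnto (S u)))
  simp only [mul_apply_eq_comp, one_apply_eq_self] at h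
  simp only [schmidtLift, LinearMap.sub_apply, LinearMap.id_apply, map_sub, sub_eq_zero]
  exact h.symm

lemma eq_zero_of_apply_mem {S : E →L[ℝ] E} (hS : IsUnit (compression K S)) {w : E}
    (hw : w ∈ Kᗮ) (hSw : S w ∈ K) : w = 0 := by
  have hzero : compression K S ⟨w, hw⟩ = 0 := by
    rw [compression, ContinuousLinearMap.comp_apply, ContinuousLinearMap.comp_apply,
      Submodule.subtypeL_apply,
      Submodule.orthogonalProjectionOnto_eq_zero_iff, Submodule.orthogonal_orthogonal]
    exact hSw
  have hinv := congr($(Ring.inverse_mul_cancel _ hS) ⟨w, hw⟩)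
  rw [mul_apply_eq_comp, hzero, map_zero, one_apply_eq_self] at hinv
  exact (congrArg Subtype.val hinv).symm

lemma schmidtLift_eq {S : E →L[ℝ] E} (hS : IsUnit (compression K S)) {u w : E}
    (hw : u - w ∈ Kᗮ) (hSw : S w ∈ K) : schmidtLift K S u = w := by
  refine (sub_eq_zero.1 (eq_zero_of_apply_mem hS ?_ ?_)).symm
  · simpa using sub_mem (sub_schmidtLift_mem K u) hw
  · simpa using sub_mem hSw (apply_schmidtLift_mem hS u)

lemma schmidtLift_starProjection {S : E →L[ℝ] E} (hS : IsUnit (compression K S)) {u : E}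
    (hu : S u = 0) : schmidtLift K S (K.starProjection u) = u := by
  refine schmidtLift_eq hS ?_ (hu ▸ K.zero_mem)
  simpa using neg_mem (Submodule.sub_starProjection_mem_orthogonal (K := K) u)

end Compression

variable [CompleteSpace E]

lemma inner_apply_left_of_mem_skewAdjoint {T : E →L[ℝ] E} (hT : T ∈ skewAdjoint (E →L[ℝ] E))
    (u v : E) : ⟪T u, v⟫_ℝ = -⟪u, T v⟫_ℝ := by
  rw [← adjoint_inner_right, ← star_eq_adjoint, skewAdjoint.mem_iff.1 hT,
    _root_.neg_apply, inner_neg_right]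

lemma IsBoundedBelowModFinite.isClosed_range {T : E →L[ℝ] E} (hT : IsBoundedBelowModFinite T) :
    IsClosed (T.range : Set E) := by
  obtain ⟨F, _, c, hc, hbound⟩ := hT
  have hlip : AntilipschitzWith (Real.toNNReal c⁻¹) (T.comp Fᗮ.subtypeL) := by
    refine antilipschitz_of_bound _ fun u => ?_
    rw [Real.coe_toNNReal _ (inv_nonneg.2 hc.le), inv_mul_eq_div, le_div_iff₀ hc, mul_comm]
    exact hbound u u.2
  have hclosed : IsClosed (Fᗮ.map (T : E →ₗ[ℝ] E) : Set E) := by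
    convert hlip.isClosed_range (T.comp Fᗮ.subtypeL).uniformContinuous using 1
    ext; simp
  rw [← Submodule.map_top, ← F.sup_orthogonal_of_hasOrthogonalProjection, sup_comm,
    Submodule.map_sup]
  exact Submodule.isClosed_sup_finiteDimensional _ _ hclosed

lemma range_eq_orthogonal_ker {T : E →L[ℝ] E} (hskew : T ∈ skewAdjoint (E →L[ℝ] E))
    (hT : IsBoundedBelowModFinite T) : T.range = T.kerᗮ := by
  have hrange : (adjoint T).range = T.range := by
    rw [← star_eq_adjoint, skewAdjoint.mem_iff.1 hskew, toLinearMap_neg, LinearMap.range_neg]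
  rw [T.orthogonal_ker, hrange, hT.isClosed_range.submodule_topologicalClosure_eq]

lemma isUnit_compression_ker {T : E →L[ℝ] E} (hskew : T ∈ skewAdjoint (E →L[ℝ] E))
    (hT : IsBoundedBelowModFinite T) [T.ker.HasOrthogonalProjection] :
    IsUnit (compression T.ker T) := by
  have hrange := range_eq_orthogonal_ker hskew hT
  have hcoe (u : T.kerᗮ) : (compression T.ker T u : E) = T u :=
    Submodule.starProjection_eq_self_iff.2 (hrange.le ⟨u, rfl⟩)
  refine isUnit_iff_bijective.2 ⟨(injective_iff_map_eq_zero _).2 fun u hu => ?_, fun w => ?_⟩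
  · have hker : T u = 0 := by rw [← hcoe, hu, ZeroMemClass.coe_zero]
    exact Subtype.ext (Submodule.inf_orthogonal_eq_bot T.ker ▸ Submodule.mem_inf.2 ⟨hker, u.2⟩ :)
  · obtain ⟨u, hu⟩ := hrange.ge w.2
    refine ⟨⟨u - T.ker.starProjection u, Submodule.sub_starProjection_mem_orthogonal u⟩,
      Subtype.ext ?_⟩
    have hproj : T (T.ker.starProjection u) = 0 := Submodule.starProjection_apply_mem T.ker u
    rw [hcoe, map_sub, hproj, sub_zero]
    exact hu

lemma apply_mem_orthogonal_of_isSelfAdjoint {P : E →L[ℝ] E} {K : Submodule ℝ E}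
    (hP : IsSelfAdjoint P) (hPK : ∀ u ∈ K, P u ∈ K) {u : E} (hu : u ∈ Kᗮ) : P u ∈ Kᗮ := by
  refine (Submodule.mem_orthogonal _ _).2 fun k hk => ?_
  rw [← adjoint_inner_left, ← star_eq_adjoint, hP.star_eq]
  exact (Submodule.mem_orthogonal _ _).1 hu _ (hPK k hk)

section LyapunovSchmidt

variable {K : Submodule ℝ E} [K.HasOrthogonalProjection] {S P : E →L[ℝ] E}

lemma schmidtLift_grading (hS : IsUnit (compression K S)) (hP : IsSelfAdjoint P)
    (hPS : P * S = -(S * P)) (hPK : ∀ u ∈ K, P u ∈ K) (u : E) :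
    schmidtLift K S (P u) = P (schmidtLift K S u) := by
  refine schmidtLift_eq hS ?_ ?_
  · rw [← map_sub]
    exact apply_mem_orthogonal_of_isSelfAdjoint hP hPK (sub_schmidtLift_mem K u)
  · rw [← neg_mem_iff, ← apply_apply_of_mul_eq_neg hPS]
    exact hPK _ (apply_schmidtLift_mem hS u)

lemma apply_schmidtLift_mem_inf_eigenspace (hS : IsUnit (compression K S)) (hP : IsSelfAdjoint P)
    (hPS : P * S = -(S * P)) (hPK : ∀ u ∈ K, P u ∈ K) {e e' : ℝ} (he : e' = -e) {u : E}
    (hu : u ∈ K ⊓ End.eigenspace (P : E →ₗ[ℝ] E) e) :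
    S (schmidtLift K S u) ∈ K ⊓ End.eigenspace (P : E →ₗ[ℝ] E) e' := by
  have hPu : P u = e • u := End.mem_eigenspace_iff.1 hu.2
  refine ⟨apply_schmidtLift_mem hS u, End.mem_eigenspace_iff.2 ?_⟩
  rw [coe_coe, apply_apply_of_mul_eq_neg hPS, ← schmidtLift_grading hS hP hPS hPK, hPu, map_smul,
    map_smul, he, neg_smul]

lemma finrank_ker_apply_schmidtLift (hS : IsUnit (compression K S)) (hP : IsSelfAdjoint P)
    (hPS : P * S = -(S * P)) (hPK : ∀ u ∈ K, P u ∈ K) (e : ℝ) :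
    finrank ℝ (((S : E →ₗ[ℝ] E) ∘ₗ schmidtLift K S).domRestrict
      (K ⊓ End.eigenspace (P : E →ₗ[ℝ] E) e)).ker = finrank ℝ (gradedKer S P e) := by
  set U := K ⊓ End.eigenspace (P : E →ₗ[ℝ] E) e
  set a := ((S : E →ₗ[ℝ] E) ∘ₗ schmidtLift K S).domRestrict U
  set lift : a.ker →ₗ[ℝ] E := schmidtLift K S ∘ₗ U.subtype ∘ₗ a.ker.subtype
  have hcomm := schmidtLift_grading hS hP hPS hPK
  have hinj : Function.Injective lift := (injective_iff_map_eq_zero _).2 fun u hu =>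
    Subtype.ext (Subtype.ext (eq_zero_of_schmidtLift_eq_zero u.1.2.1 hu))
  suffices hrange : lift.range = gradedKer S P e by
    rw [← hrange, LinearMap.finrank_range_of_inj hinj]
  refine le_antisymm ?_ fun u hu => ?_
  · rintro _ ⟨u, rfl⟩
    have hPu : P (u : U) = e • (u : E) := End.mem_eigenspace_iff.1 u.1.2.2
    refine mem_gradedKer.2 ⟨u.2, ?_⟩
    change P (schmidtLift K S _) = e • schmidtLift K S _
    rw [← hcomm]
    exact (congrArg _ hPu).trans (map_smul _ _ _)
  · obtain ⟨hSu, hPu⟩ := mem_gradedKer.1 hu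
    have hlift := schmidtLift_starProjection hS hSu
    have hK : K.starProjection u ∈ K := Submodule.starProjection_apply_mem K u
    have hPproj : P (K.starProjection u) = e • K.starProjection u := by
      refine sub_eq_zero.1 (eq_zero_of_schmidtLift_eq_zero (S := S)
        (sub_mem (hPK _ hK) (K.smul_mem e hK)) ?_)
      rw [map_sub, hcomm, map_smul, hlift, hPu, sub_self]
    refine ⟨⟨⟨K.starProjection u, hK, End.mem_eigenspace_iff.2 hPproj⟩, ?_⟩, hlift⟩
    exact (congrArg S hlift).trans hSu

lemma inner_apply_schmidtLift (hskew : S ∈ skewAdjoint (E →L[ℝ] E))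
    (hS : IsUnit (compression K S)) (u v : E) :
    ⟪S (schmidtLift K S u), v⟫_ℝ = -⟪u, S (schmidtLift K S v)⟫_ℝ := by
  have hlift (x y : E) : ⟪S (schmidtLift K S x), schmidtLift K S y⟫_ℝ =
      ⟪S (schmidtLift K S x), y⟫_ℝ := by
    rw [← sub_eq_zero, ← inner_sub_right, ← neg_sub, inner_neg_right, neg_eq_zero]
    exact (Submodule.mem_orthogonal _ _).1 (sub_schmidtLift_mem K y) _ (apply_schmidtLift_mem hS x)
  rw [← hlift u, inner_apply_left_of_mem_skewAdjoint hskew, real_inner_comm, hlift v,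
    real_inner_comm]

end LyapunovSchmidt

lemma finrank_ker_sub_finrank_ker_of_inner_eq_neg {X Y : Type*}
    [NormedAddCommGroup X] [InnerProductSpace ℝ X] [FiniteDimensional ℝ X]
    [NormedAddCommGroup Y] [InnerProductSpace ℝ Y] [FiniteDimensional ℝ Y]
    (a : X →ₗ[ℝ] Y) (b : Y →ₗ[ℝ] X) (hab : ∀ x y, ⟪a x, y⟫_ℝ = -⟪x, b y⟫_ℝ) :
    (finrank ℝ a.ker : ℤ) - finrank ℝ b.ker = finrank ℝ X - finrank ℝ Y := by
  have hortho : a.rangeᗮ = b.ker := by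
    ext y
    refine ⟨fun hy => ?_, ?_⟩
    · have h := (Submodule.mem_orthogonal _ _).1 hy (a (b y)) ⟨_, rfl⟩
      simpa [hab] using h
    · rintro (hy : b y = 0) _ ⟨x, rfl⟩
      rw [hab, hy, inner_zero_right, neg_zero]
  have hrank := LinearMap.finrank_range_add_finrank_ker a
  have hcodim := Submodule.finrank_add_finrank_orthogonal a.range
  rw [hortho] at hcodim
  omega

lemma gradedIndex_eq_of_isUnit_compression {S P : E →L[ℝ] E} (K : Submodule ℝ E)
    [FiniteDimensional ℝ K] (hskew : S ∈ skewAdjoint (E →L[ℝ] E)) (hP : IsSelfAdjoint P)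
    (hPS : P * S = -(S * P)) (hPK : ∀ u ∈ K, P u ∈ K) (hS : IsUnit (compression K S)) :
    gradedIndex S P = (finrank ℝ (K ⊓ End.eigenspace (P : E →ₗ[ℝ] E) 1 : Submodule ℝ E) : ℤ)
      - finrank ℝ (K ⊓ End.eigenspace (P : E →ₗ[ℝ] E) (-1) : Submodule ℝ E) := by
  have hmem {e e' : ℝ} (he : e' = -e) (u : ↥(K ⊓ End.eigenspace (P : E →ₗ[ℝ] E) e)) :
      ((S : E →ₗ[ℝ] E) ∘ₗ schmidtLift K S).domRestrict _ u ∈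
        K ⊓ End.eigenspace (P : E →ₗ[ℝ] E) e' :=
    apply_schmidtLift_mem_inf_eigenspace hS hP hPS hPK he u.2
  have h := finrank_ker_sub_finrank_ker_of_inner_eq_neg
    (LinearMap.codRestrict _ _ (hmem rfl)) (LinearMap.codRestrict _ _ (hmem (neg_neg 1).symm))
    fun x y => inner_apply_schmidtLift hskew hS x y
  rw [gradedIndex, ← h, ← finrank_ker_apply_schmidtLift hS hP hPS hPK,
    ← finrank_ker_apply_schmidtLift hS hP hPS hPK, LinearMap.ker_codRestrict,
    LinearMap.ker_codRestrict]

/-- The operators whose `gradedIndex` is a homotopy invariant: `T` is skew-adjoint, Fredholm and odd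
with respect to the self-adjoint grading `P`. -/
structure IsOddFredholm (P T : E →L[ℝ] E) : Prop where
  isSelfAdjoint : IsSelfAdjoint P
  mul_eq_neg : P * T = -(T * P)
  mem_skewAdjoint : T ∈ skewAdjoint (E →L[ℝ] E)
  isBoundedBelowModFinite : IsBoundedBelowModFinite T

lemma IsOddFredholm.eventually_gradedIndex_eq {P T : E →L[ℝ] E} (hT : IsOddFredholm P T) :
    ∀ᶠ S in nhds T, IsOddFredholm P S → gradedIndex S P = gradedIndex T P := by
  have := hT.isBoundedBelowModFinite.finiteDimensional_ker
  have hPK : ∀ u ∈ T.ker, P u ∈ T.ker := fun u hu => by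
    have h := apply_apply_of_mul_eq_neg hT.mul_eq_neg u
    rw [show T u = 0 from hu, map_zero] at h
    exact neg_eq_zero.1 h.symm
  have hunit := isUnit_compression_ker hT.mem_skewAdjoint hT.isBoundedBelowModFinite
  have hopen : IsOpen {A : T.kerᗮ →L[ℝ] T.kerᗮ | IsUnit A} :=
    Units.isOpen (R := T.kerᗮ →L[ℝ] T.kerᗮ)
  filter_upwards [(continuous_compression T.ker).continuousAt.eventually_mem
    (hopen.mem_nhds hunit)] with S hunitS hS
  exact gradedIndex_eq_of_isUnit_compression T.ker hS.mem_skewAdjoint hS.isSelfAdjoint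
    hS.mul_eq_neg hPK hunitS

theorem gradedIndex_eq_of_path {P : E →L[ℝ] E} {T : ℝ → E →L[ℝ] E} (hcont : Continuous T)
    (hT : ∀ s, IsOddFredholm P (T s)) (s t : ℝ) : gradedIndex (T s) P = gradedIndex (T t) P := by
  have hlocal : IsLocallyConstant fun s => gradedIndex (T s) P := by
    refine (IsLocallyConstant.iff_eventually_eq _).2 fun s => ?_
    filter_upwards [hcont.continuousAt.eventually (hT s).eventually_gradedIndex_eq] with t ht
    exact ht (hT t)
  exact hlocal.apply_eq_of_isPreconnected isPreconnected_univ (Set.mem_univ s) (Set.mem_univ t)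

end Index

/-! ### Weighted composition operators on `ℓ²` -/

section WeightedComp

variable {J K V W : Type*} [NormedAddCommGroup V] [NormedAddCommGroup W]

lemma hasSum_norm_sq (u : lp (fun _ : J ↦ V) 2) : HasSum (fun a ↦ ‖u a‖ ^ 2) (‖u‖ ^ 2) := by
  simpa using lp.hasSum_norm (by norm_num) u

lemma memℓp_two_of_norm_le {f : J → W} (v : lp (fun _ : K ↦ V) 2) {σ : J → K}
    (hσ : σ.Injective) {C : ℝ} (h : ∀ a, ‖f a‖ ≤ C * ‖v (σ a)‖) : Memℓp f 2 := by
  refine memℓp_gen ?_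
  have hv : Summable fun a ↦ C ^ 2 * ‖v (σ a)‖ ^ 2 :=
    ((hasSum_norm_sq v).summable.comp_injective hσ).mul_left _
  refine Summable.of_nonneg_of_le (fun a ↦ by positivity) (fun a ↦ ?_) hv
  simpa [mul_pow] using pow_le_pow_left₀ (norm_nonneg _) (h a) 2

lemma norm_le_mul_norm_of_injective {u : lp (fun _ : J ↦ W) 2} {v : lp (fun _ : K ↦ V) 2}
    {σ : J → K} (hσ : σ.Injective) {C : ℝ} (hC : 0 ≤ C) (h : ∀ a, ‖u a‖ ≤ C * ‖v (σ a)‖) :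
    ‖u‖ ≤ C * ‖v‖ := by
  refine le_of_sq_le_sq ?_ (by positivity)
  have hv := (hasSum_norm_sq v).summable
  calc ‖u‖ ^ 2 = ∑' a, ‖u a‖ ^ 2 := (hasSum_norm_sq u).tsum_eq.symm
    _ ≤ ∑' b, C ^ 2 * ‖v b‖ ^ 2 :=
      (hasSum_norm_sq u).summable.tsum_le_tsum_of_inj σ hσ (fun _ _ ↦ by positivity)
        (fun a ↦ by simpa [mul_pow] using pow_le_pow_left₀ (norm_nonneg _) (h a) 2)
        (hv.mul_left _)
    _ = (C * ‖v‖) ^ 2 := by rw [tsum_mul_left, (hasSum_norm_sq v).tsum_eq, mul_pow]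

variable [NormedSpace ℝ V] [NormedSpace ℝ W]

lemma norm_apply_le_iSup_mul {B : J → V →L[ℝ] W} (hB : BddAbove (Set.range fun a ↦ ‖B a‖))
    (a : J) (v : V) : ‖B a v‖ ≤ (⨆ a, ‖B a‖) * ‖v‖ :=
  (B a).le_of_opNorm_le (le_ciSup hB a) v

/-- The operator `(B u)(a) = B a (u (σ a))` from `ℓ²(K; V)` to `ℓ²(J; W)`, for an injective
reindexing `σ` and a bounded family of coefficients `B`. -/
noncomputable def weightedComp (σ : J → K) (hσ : σ.Injective) (B : J → V →L[ℝ] W)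
    (hB : BddAbove (Set.range fun a ↦ ‖B a‖)) :
    lp (fun _ : K ↦ V) 2 →L[ℝ] lp (fun _ : J ↦ W) 2 :=
  LinearMap.mkContinuous
    { toFun u := ⟨fun a ↦ B a (u (σ a)),
        memℓp_two_of_norm_le u hσ fun a ↦ norm_apply_le_iSup_mul hB a _⟩
      map_add' u v := by ext a; exact map_add (B a) (u (σ a)) (v (σ a))
      map_smul' c u := by ext a; exact map_smul (B a) c (u (σ a)) }
    (⨆ a, ‖B a‖)
    fun _ ↦ norm_le_mul_norm_of_injective hσ (Real.iSup_nonneg fun _ ↦ norm_nonneg _)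
      fun a ↦ norm_apply_le_iSup_mul hB a _

variable (J) in
/-- The operator `ℓ²(J; V) → ℓ²(J; W)` applying `B` to each coefficient. -/
noncomputable def coeffMap (B : V →L[ℝ] W) : lp (fun _ : J ↦ V) 2 →L[ℝ] lp (fun _ : J ↦ W) 2 :=
  weightedComp id Function.injective_id (fun _ ↦ B) ⟨‖B‖, by rintro _ ⟨_, rfl⟩; rfl⟩

@[simp]
lemma coeffMap_apply (B : V →L[ℝ] W) (u : lp (fun _ : J ↦ V) 2) (a : J) :
    coeffMap J B u a = B (u a) := rfl

lemma bddAbove_range_norm_smul_id {c : J → ℝ} (hc : BddAbove (Set.range fun a ↦ |c a|)) :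
    BddAbove (Set.range fun a ↦ ‖c a • ContinuousLinearMap.id ℝ V‖) := by
  obtain ⟨C, hC⟩ := hc
  refine ⟨C, ?_⟩
  rintro _ ⟨a, rfl⟩
  calc ‖c a • ContinuousLinearMap.id ℝ V‖ ≤ |c a| * 1 := by
        rw [norm_smul, Real.norm_eq_abs]; gcongr; exact norm_id_le
    _ ≤ C := by simpa using hC ⟨a, rfl⟩

variable (V) in
/-- The operator `(c u)(a) = c a • u (σ a)` on `ℓ²(J; V)` for a bounded scalar weight `c`. -/
noncomputable def scalarComp (σ : J → J) (hσ : σ.Injective) (c : J → ℝ)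
    (hc : BddAbove (Set.range fun a ↦ |c a|)) : lp (fun _ : J ↦ V) 2 →L[ℝ] lp (fun _ : J ↦ V) 2 :=
  weightedComp σ hσ (fun a ↦ c a • ContinuousLinearMap.id ℝ V) (bddAbove_range_norm_smul_id hc)

@[simp]
lemma scalarComp_apply (σ : J → J) (hσ : σ.Injective) (c : J → ℝ)
    (hc : BddAbove (Set.range fun a ↦ |c a|)) (u : lp (fun _ : J ↦ V) 2) (a : J) :
    scalarComp V σ hσ c hc u a = c a • u (σ a) := rfl

end WeightedComp

section CoeffHom

variable {J V : Type*} [NormedAddCommGroup V] [InnerProductSpace ℝ V] [CompleteSpace V]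

variable (J V) in
/-- `coeffMap` as a homomorphism of star algebras. -/
noncomputable def coeffHom :
    (V →L[ℝ] V) →⋆ₐ[ℝ] (lp (fun _ : J ↦ V) 2 →L[ℝ] lp (fun _ : J ↦ V) 2) where
  toFun := coeffMap J
  map_one' := rfl
  map_mul' _ _ := rfl
  map_zero' := rfl
  map_add' _ _ := rfl
  commutes' _ := rfl
  map_star' B := by
    rw [star_eq_adjoint, star_eq_adjoint, eq_adjoint_iff]
    intro u v
    simp only [lp.inner_eq_tsum, coeffMap_apply, adjoint_inner_left]

@[simp]
lemma coeffHom_apply (B : V →L[ℝ] V) (u : lp (fun _ : J ↦ V) 2) (a : J) :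
    coeffHom J V B u a = B (u a) := rfl

end CoeffHom

/-! ### Dirac operators in star rings -/

section AnticommutingSums

variable {ι R : Type*} [Fintype ι] [Ring R]

lemma sum_sum_eq_sum_diag {M : Type*} [AddCommGroup M] {f : ι → ι → M}
    (h : ∀ i j, i ≠ j → f i j + f j i = 0) : ∑ i, ∑ j, f i j = ∑ i, f i i := by
  classical
  have hoff : ∑ p ∈ Finset.univ.offDiag, f p.1 p.2 = 0 :=
    Finset.sum_involution (fun p _ ↦ p.swap) (fun p hp ↦ h _ _ (Finset.mem_offDiag.1 hp).2.2)
      (fun p hp _ heq ↦ (Finset.mem_offDiag.1 hp).2.2 (congrArg Prod.snd heq))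
      (fun p hp ↦ by simpa [eq_comm] using hp) (fun p _ ↦ p.swap_swap)
  rw [← Finset.sum_product', ← Finset.diag_union_offDiag,
    Finset.sum_union (Finset.disjoint_diag_offDiag _), hoff, add_zero, Finset.sum_diag]

lemma sum_mul_self_eq_sum_mul_self {c : ι → R} {b : ι → R}
    (hc : ∀ i j, i ≠ j → c i * c j = -(c j * c i)) (hb : ∀ i j, i ≠ j → Commute (b i) (b j))
    (hcb : ∀ i j, Commute (c i) (b j)) :
    (∑ i, c i * b i) * ∑ i, c i * b i = ∑ i, c i * c i * (b i * b i) := by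
  have hswap : ∀ i j, c i * b i * (c j * b j) = c i * c j * (b i * b j) := fun i j ↦
    (hcb j i).symm.mul_mul_mul_comm _ _
  rw [Finset.sum_mul_sum]
  simp only [hswap]
  refine sum_sum_eq_sum_diag fun i j hij ↦ ?_
  rw [hc i j hij, (hb i j hij).eq, neg_mul, neg_add_cancel]

lemma sum_mul_sum_add_sum_mul_sum {X Y p q : ι → R} (hXY : ∀ i j, X i * Y j = -(Y j * X i))
    (hpq : ∀ i j, i ≠ j → Commute (p i) (q j)) (hXq : ∀ i j, Commute (X i) (q j))
    (hYp : ∀ i j, Commute (Y i) (p j)) :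
    (∑ i, X i * p i) * (∑ i, Y i * q i) + (∑ i, Y i * q i) * (∑ i, X i * p i) =
      ∑ i, X i * Y i * (p i * q i - q i * p i) := by
  have hterm : ∀ i j, X i * p i * (Y j * q j) + Y j * q j * (X i * p i) =
      X i * Y j * (p i * q j - q j * p i) := by
    intro i j
    rw [(hYp j i).symm.mul_mul_mul_comm, (hXq i j).symm.mul_mul_mul_comm, hXY i j]
    noncomm_ring
  rw [Finset.sum_mul_sum, Finset.sum_mul_sum, Finset.sum_comm (f := fun i j ↦ _ * (X j * p j)),
    ← Finset.sum_add_distrib]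
  simp only [← Finset.sum_add_distrib, hterm]
  refine sum_sum_eq_sum_diag fun i j hij ↦ ?_
  rw [(hpq i j hij).eq, (hpq j i hij.symm).eq, sub_self, sub_self, mul_zero, mul_zero, add_zero]

end AnticommutingSums

section DiracSum

variable {ι R S : Type*} [Fintype ι] [Ring R] [StarRing R] [Ring S] [StarRing S]

/-- A family `X` of skew-adjoint symbols, all of whose nonzero real combinations are invertible,
together with anticommuting self-adjoint involutions `Y` anticommuting with `X`. It makes
`∑ i, X i * x i + Y i * ∂ i` an elliptic operator. -/
structure IsEllipticPair [Algebra ℝ R] (X Y : ι → R) : Prop where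
  star_left i : star (X i) = -X i
  star_right i : star (Y i) = Y i
  sq_right i : Y i * Y i = 1
  anticomm_right i j : i ≠ j → Y i * Y j = -(Y j * Y i)
  anticomm i j : X i * Y j = -(Y j * X i)
  isUnit (x : ι → ℝ) : x ≠ 0 → IsUnit (∑ i, x i • X i)

lemma IsEllipticPair.map [Algebra ℝ R] [Algebra ℝ S] {X Y : ι → R} (h : IsEllipticPair X Y)
    (φ : R →⋆ₐ[ℝ] S) : IsEllipticPair (φ ∘ X) (φ ∘ Y) where
  star_left i := by simp [← map_star, h.star_left]
  star_right i := by simp [← map_star, h.star_right]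
  sq_right i := by simp [← map_mul, h.sq_right]
  anticomm_right i j hij := by simp [← map_mul, ← map_neg, h.anticomm_right i j hij]
  anticomm i j := by simp [← map_mul, ← map_neg, h.anticomm i j]
  isUnit x hx := by simpa [map_sum, map_smul] using (h.isUnit x hx).map φ

/-- With `a i` the annihilation operators, `a i + star (a i)` and `a i - star (a i)` are, up to
normalisation, multiplication by the `i`-th coordinate and the `i`-th partial derivative. -/
def diracSum (X Y a : ι → R) : R :=
  ∑ i, (X i * (a i + star (a i)) + Y i * (a i - star (a i)))

lemma diracSum_mem_skewAdjoint {X Y a : ι → R} (hX : ∀ i, star (X i) = -X i)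
    (hY : ∀ i, star (Y i) = Y i) (hXa : ∀ i, Commute (X i) (a i))
    (hYa : ∀ i, Commute (Y i) (a i)) : diracSum X Y a ∈ skewAdjoint R := by
  refine sum_mem fun i _ ↦ ?_
  have hXa' : Commute (X i) (star (a i)) := by simpa [hX] using (hXa i).star_star
  have hYa' : Commute (Y i) (star (a i)) := by simpa [hY] using (hYa i).star_star
  rw [skewAdjoint.mem_iff]
  simp only [star_add, star_mul, star_sub, star_star, hX, hY, mul_neg]
  rw [add_comm (star (a i)), ← ((hXa i).add_right hXa').eq, ← (hYa'.sub_right (hYa i)).eq]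
  noncomm_ring

lemma mul_diracSum_eq_neg {X Y a : ι → R} {b : R} (hX : ∀ i, b * X i = -(X i * b))
    (hY : ∀ i, b * Y i = -(Y i * b)) (ha : ∀ i, Commute b (a i))
    (ha' : ∀ i, Commute b (star (a i))) : b * diracSum X Y a = -(diracSum X Y a * b) := by
  rw [diracSum, Finset.mul_sum, Finset.sum_mul, ← Finset.sum_neg_distrib]
  refine Finset.sum_congr rfl fun i _ ↦ ?_
  rw [mul_add, ← mul_assoc, ← mul_assoc, hX, hY, neg_mul, neg_mul, mul_assoc, mul_assoc,
    ((ha i).add_right (ha' i)).eq, ((ha i).sub_right (ha' i)).eq]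
  noncomm_ring

lemma mul_diracSum_eq_neg_of_odd {X Y a : ι → R} {p : R} (hX : ∀ i, Commute p (X i))
    (hY : ∀ i, Commute p (Y i)) (ha : ∀ i, p * a i = -(a i * p))
    (ha' : ∀ i, p * star (a i) = -(star (a i) * p)) :
    p * diracSum X Y a = -(diracSum X Y a * p) := by
  rw [diracSum, Finset.mul_sum, Finset.sum_mul, ← Finset.sum_neg_distrib]
  refine Finset.sum_congr rfl fun i _ ↦ ?_
  rw [mul_add, ← mul_assoc, ← mul_assoc, (hX i).eq, (hY i).eq, mul_assoc, mul_assoc, mul_add,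
    mul_sub, ha, ha']
  noncomm_ring

lemma IsEllipticPair.diracSum_mul_self [Algebra ℝ R] {X Y a : ι → R} (h : IsEllipticPair X Y)
    (ha : ∀ i j, i ≠ j → Commute (a i) (a j)) (ha' : ∀ i j, i ≠ j → Commute (a i) (star (a j)))
    (hXa : ∀ i j, Commute (X i) (a j)) (hYa : ∀ i j, Commute (Y i) (a j)) :
    diracSum X Y a * diracSum X Y a =
      (∑ i, X i * (a i + star (a i))) * (∑ i, X i * (a i + star (a i))) +
      ∑ i, (a i - star (a i)) * (a i - star (a i)) +
      ∑ i, X i * Y i * (2 • (star (a i) * a i - a i * star (a i))) := by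
  have hXa' : ∀ i j, Commute (X i) (star (a j)) := fun i j ↦ by
    simpa [h.star_left] using (hXa i j).star_star
  have hYa' : ∀ i j, Commute (Y i) (star (a j)) := fun i j ↦ by
    simpa [h.star_right] using (hYa i j).star_star
  have hstar : ∀ i j, i ≠ j → Commute (star (a i)) (a j) := fun i j hij ↦ (ha' j i hij.symm).symm
  have hstar' : ∀ i j, i ≠ j → Commute (star (a i)) (star (a j)) := fun i j hij ↦
    (ha i j hij).star_star
  have hcross := sum_mul_sum_add_sum_mul_sum (p := fun i ↦ a i + star (a i))
    (q := fun i ↦ a i - star (a i)) h.anticomm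
    (fun i j hij ↦ ((ha i j hij).sub_right (ha' i j hij)).add_left
      ((hstar i j hij).sub_right (hstar' i j hij)))
    (fun i j ↦ (hXa i j).sub_right (hXa' i j)) (fun i j ↦ (hYa i j).add_right (hYa' i j))
  have hmom := sum_mul_self_eq_sum_mul_self (b := fun i ↦ a i - star (a i)) h.anticomm_right
    (fun i j hij ↦ ((ha i j hij).sub_right (ha' i j hij)).sub_left
      ((hstar i j hij).sub_right (hstar' i j hij)))
    (fun i j ↦ (hYa i j).sub_right (hYa' i j))
  have hcomm : ∀ i, (a i + star (a i)) * (a i - star (a i)) - (a i - star (a i)) *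
      (a i + star (a i)) = 2 • (star (a i) * a i - a i * star (a i)) := fun i ↦ by noncomm_ring
  simp only [h.sq_right, one_mul] at hmom
  simp only [hcomm] at hcross
  rw [diracSum, Finset.sum_add_distrib, add_mul, mul_add, mul_add, ← hmom, ← hcross]
  abel

end DiracSum

/-! ### Ladder operators on Fock space -/

section Ladder

/-- The Fock space over `ℝ^ι` with values in `V`: the coefficient at `α` is that of the
`α`-th Hermite function in `L²(ℝ^ι; V)`. -/
abbrev FockSpace (ι V : Type*) [NormedAddCommGroup V] : Type _ := lp (fun _ : ι → ℕ ↦ V) 2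

variable {ι V : Type*} [DecidableEq ι] [NormedAddCommGroup V]

lemma eq_zero_or_exists_eq_add_single (i : ι) (α : ι → ℕ) :
    α i = 0 ∨ ∃ β : ι → ℕ, α = β + Pi.single i 1 := by
  refine (Nat.eq_zero_or_pos (α i)).imp_right fun hi ↦ ⟨α - Pi.single i 1, ?_⟩
  ext j
  obtain rfl | hj := eq_or_ne j i
  · simp [Nat.sub_add_cancel hi]
  · simp [hj]

variable [InnerProductSpace ℝ V]

variable (V) in
/-- The operator `(c u)(α) = c α • u (α + eᵢ)` for a bounded weight `c`. -/
noncomputable def lowering (i : ι) (c : (ι → ℕ) → ℝ) (hc : BddAbove (Set.range fun α ↦ |c α|)) :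
    FockSpace ι V →L[ℝ] FockSpace ι V :=
  scalarComp V (· + Pi.single i 1) (add_left_injective _) c hc

variable {i : ι} {c : (ι → ℕ) → ℝ} {hc : BddAbove (Set.range fun α ↦ |c α|)}

@[simp]
lemma lowering_apply (u : FockSpace ι V) (α : ι → ℕ) :
    lowering V i c hc u α = c α • u (α + Pi.single i 1) := rfl

lemma lowering_single_add [DecidableEq (ι → ℕ)] (β : ι → ℕ) (v : V) :
    lowering V i c hc (lp.single 2 (β + Pi.single i 1) v) = c β • lp.single 2 β v := by
  ext α
  rw [lowering_apply, lp.coeFn_smul, Pi.smul_apply, lp.single_apply, lp.single_apply,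
    Pi.single_apply, Pi.single_apply]
  by_cases h : α = β
  · simp [h]
  · simp [h]

lemma lowering_single_of_eq_zero [DecidableEq (ι → ℕ)] {β : ι → ℕ} (hβ : β i = 0) (v : V) :
    lowering V i c hc (lp.single 2 β v) = 0 := by
  ext α
  have hne : α + Pi.single i 1 ≠ β := fun h ↦ by simp [← h] at hβ
  rw [lowering_apply, lp.single_apply_ne _ _ _ hne, smul_zero, lp.coeFn_zero, Pi.zero_apply]

variable [CompleteSpace V]

lemma inner_star_lowering_apply [DecidableEq (ι → ℕ)] (u : FockSpace ι V) (β : ι → ℕ) (v : V) :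
    ⟪star (lowering V i c hc) u β, v⟫_ℝ = ⟪u, lowering V i c hc (lp.single 2 β v)⟫_ℝ := by
  rw [star_eq_adjoint, ← adjoint_inner_left, lp.inner_single_right]

@[simp]
lemma star_lowering_apply_add (u : FockSpace ι V) (β : ι → ℕ) :
    star (lowering V i c hc) u (β + Pi.single i 1) = c β • u β := by
  classical
  refine ext_inner_right ℝ fun v ↦ ?_
  rw [inner_star_lowering_apply, lowering_single_add, inner_smul_right, lp.inner_single_right,
    real_inner_smul_left]

lemma star_lowering_apply_of_eq_zero (u : FockSpace ι V) {β : ι → ℕ} (hβ : β i = 0) :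
    star (lowering V i c hc) u β = 0 := by
  classical
  refine ext_inner_right ℝ fun v ↦ ?_
  rw [inner_star_lowering_apply, lowering_single_of_eq_zero hβ, inner_zero_right, inner_zero_left]

lemma commute_coeffHom_lowering (B : V →L[ℝ] V) :
    Commute (coeffHom (ι → ℕ) V B) (lowering V i c hc) := by
  ext u α
  exact map_smul B (c α) _

lemma commute_coeffHom_star_lowering (B : V →L[ℝ] V) :
    Commute (coeffHom (ι → ℕ) V B) (star (lowering V i c hc)) := by
  simpa [← map_star] using (commute_coeffHom_lowering (star B)).star_star

variable {j : ι} {d : (ι → ℕ) → ℝ} {hd : BddAbove (Set.range fun α ↦ |d α|)}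

omit [CompleteSpace V] in
lemma commute_lowering (hcj : ∀ α, c (α + Pi.single j 1) = c α)
    (hdi : ∀ α, d (α + Pi.single i 1) = d α) :
    Commute (lowering V i c hc) (lowering V j d hd) := by
  ext u α
  change c α • d (α + _) • u (α + Pi.single i 1 + Pi.single j 1) =
    d α • c (α + _) • u (α + Pi.single j 1 + Pi.single i 1)
  rw [hcj, hdi, smul_comm, add_right_comm]

lemma commute_lowering_star_lowering (hij : i ≠ j) (hcj : ∀ α, c (α + Pi.single j 1) = c α)
    (hdi : ∀ α, d (α + Pi.single i 1) = d α) :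
    Commute (lowering V i c hc) (star (lowering V j d hd)) := by
  ext u α
  change c α • star (lowering V j d hd) u (α + Pi.single i 1) =
    star (lowering V j d hd) (lowering V i c hc u) α
  obtain hα | ⟨β, rfl⟩ := eq_zero_or_exists_eq_add_single j α
  · rw [star_lowering_apply_of_eq_zero _ hα, star_lowering_apply_of_eq_zero, smul_zero]
    simp [hα, hij.symm]
  · rw [add_right_comm, star_lowering_apply_add, star_lowering_apply_add, lowering_apply, hcj, hdi,
      smul_comm]

end Ladder

section Diagonal

variable {J V : Type*} [NormedAddCommGroup V] [InnerProductSpace ℝ V] [CompleteSpace V]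

lemma isSelfAdjoint_scalarComp_id (c : J → ℝ) (hc : BddAbove (Set.range fun a ↦ |c a|)) :
    IsSelfAdjoint (scalarComp V id Function.injective_id c hc) := by
  rw [isSelfAdjoint_iff_isSymmetric]
  intro u v
  simp [lp.inner_eq_tsum, real_inner_smul_left, real_inner_smul_right]

lemma commute_scalarComp_coeffHom (σ : J → J) (hσ : σ.Injective) (c : J → ℝ)
    (hc : BddAbove (Set.range fun a ↦ |c a|)) (B : V →L[ℝ] V) :
    Commute (scalarComp V σ hσ c hc) (coeffHom J V B) := by
  ext u a
  exact (map_smul B (c a) _).symm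

end Diagonal

section Parity

variable {ι V : Type*} [Fintype ι] [NormedAddCommGroup V] [InnerProductSpace ℝ V]

/-- The total degree of a multi-index. -/
def totalDegree (α : ι → ℕ) : ℕ := ∑ i, α i

lemma apply_le_totalDegree (α : ι → ℕ) (i : ι) : α i ≤ totalDegree α :=
  Finset.single_le_sum (fun _ _ ↦ Nat.zero_le _) (Finset.mem_univ i)

@[simp]
lemma totalDegree_add_single [DecidableEq ι] (α : ι → ℕ) (i : ι) :
    totalDegree (α + Pi.single i 1) = totalDegree α + 1 := by
  simp [totalDegree, Finset.sum_add_distrib]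

variable (ι V) in
/-- The grading operator of the Fock space, equal to `(-1) ^ d` in degree `d`. -/
noncomputable def parity : FockSpace ι V →L[ℝ] FockSpace ι V :=
  scalarComp V id Function.injective_id (fun α ↦ (-1) ^ totalDegree α)
    ⟨1, by rintro _ ⟨α, rfl⟩; simp⟩

@[simp]
lemma parity_apply (u : FockSpace ι V) (α : ι → ℕ) :
    parity ι V u α = (-1 : ℝ) ^ totalDegree α • u α := rfl

variable [DecidableEq ι] {i : ι} {c : (ι → ℕ) → ℝ} {hc : BddAbove (Set.range fun α ↦ |c α|)}

lemma parity_mul_lowering :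
    parity ι V * lowering V i c hc = -(lowering V i c hc * parity ι V) := by
  ext u α
  change (-1 : ℝ) ^ totalDegree α • c α • u (α + Pi.single i 1) =
    -(c α • (-1 : ℝ) ^ totalDegree (α + Pi.single i 1) • u (α + Pi.single i 1))
  rw [totalDegree_add_single, pow_succ, smul_comm, mul_neg_one, neg_smul, smul_neg, neg_neg]

lemma parity_mul_star_lowering [CompleteSpace V] :
    parity ι V * star (lowering V i c hc) = -(star (lowering V i c hc) * parity ι V) := by
  have hP : star (parity ι V) = parity ι V := isSelfAdjoint_scalarComp_id _ _
  have h := congrArg star (parity_mul_lowering (V := V) (i := i) (hc := hc))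
  rw [star_neg, star_mul, star_mul, hP] at h
  rw [h, neg_neg]

end Parity

/-! ### The ellipticity estimate -/

section JointEigenvectors

variable {ι E : Type*} [NormedAddCommGroup E] [InnerProductSpace ℝ E]

lemma exists_finsupp_joint_eigenvectors [FiniteDimensional ℝ E] {T : ι → End ℝ E}
    (hT : ∀ i, (T i).IsSymmetric) (hcomm : ∀ i j, i ≠ j → Commute (T i) (T j)) (v : E) :
    ∃ f : (ι → ℝ) →₀ E, (∀ x i, T i (f x) = x i • f x) ∧ ∑ x ∈ f.support, f x = v := by
  classical
  have hv : v ∈ ⨆ x : ι → ℝ, ⨅ i, (T i).eigenspace (x i) := by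
    rw [(LinearMap.IsSymmetric.directSum_isInternal_of_pairwise_commute hT
      hcomm).submodule_iSup_eq_top]
    trivial
  obtain ⟨f, hf, hfv⟩ := (Submodule.mem_iSup_iff_exists_finsupp _ _).1 hv
  exact ⟨f, fun x i ↦ End.mem_eigenspace_iff.1 ((Submodule.mem_iInf _).1 (hf x) i), hfv⟩

lemma norm_sum_sq_of_joint_eigenvectors {T : ι → End ℝ E} (hT : ∀ i, (T i).IsSymmetric)
    {f : (ι → ℝ) → E} (hf : ∀ x i, T i (f x) = x i • f x) (s : Finset (ι → ℝ)) :
    ‖∑ x ∈ s, f x‖ ^ 2 = ∑ x ∈ s, ‖f x‖ ^ 2 := by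
  simpa using (LinearMap.IsSymmetric.orthogonalFamily_iInf_eigenspaces hT).norm_sum
    (fun x ↦ ⟨f x, (Submodule.mem_iInf _).2 fun i ↦ End.mem_eigenspace_iff.2 (hf x i)⟩) s

variable [Fintype ι]

/-- Commuting symmetric operators may be substituted for the real variables of a symbol estimate:
on each joint eigenspace they act as scalars. -/
lemma mul_sum_norm_sq_le_norm_sum_sq [FiniteDimensional ℝ E] {T X : ι → End ℝ E}
    (hT : ∀ i, (T i).IsSymmetric) (hcomm : ∀ i j, i ≠ j → Commute (T i) (T j))
    (hTX : ∀ i j, Commute (T i) (X j)) {c : ℝ}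
    (hX : ∀ (x : ι → ℝ) v, c * ((∑ i, x i ^ 2) * ‖v‖ ^ 2) ≤ ‖∑ i, x i • X i v‖ ^ 2) (v : E) :
    c * ∑ i, ‖T i v‖ ^ 2 ≤ ‖∑ i, X i (T i v)‖ ^ 2 := by
  obtain ⟨f, hf, rfl⟩ := exists_finsupp_joint_eigenvectors hT hcomm v
  have hTX_apply : ∀ i j u, T i (X j u) = X j (T i u) := fun i j u ↦
    LinearMap.congr_fun (hTX i j).eq u
  have hTf : ∀ i, T i (∑ x ∈ f.support, f x) = ∑ x ∈ f.support, x i • f x := fun i ↦ by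
    rw [map_sum]; exact Finset.sum_congr rfl fun x _ ↦ hf x i
  have hnormT : ∀ i, ‖T i (∑ x ∈ f.support, f x)‖ ^ 2 = ∑ x ∈ f.support, x i ^ 2 * ‖f x‖ ^ 2 := by
    intro i
    rw [hTf, norm_sum_sq_of_joint_eigenvectors hT fun x j ↦ by rw [map_smul, hf, smul_comm]]
    simp only [norm_smul, mul_pow, Real.norm_eq_abs, sq_abs]
  have hXT : ∑ i, X i (T i (∑ x ∈ f.support, f x)) =
      ∑ x ∈ f.support, ∑ i, x i • X i (f x) := by
    rw [Finset.sum_comm]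
    simp only [hTf, map_sum, map_smul]
  rw [hXT, norm_sum_sq_of_joint_eigenvectors hT fun x j ↦ ?_]
  · simp only [hnormT]
    rw [Finset.sum_comm, Finset.mul_sum]
    refine Finset.sum_le_sum fun x _ ↦ ?_
    rw [← Finset.sum_mul]
    exact hX x (f x)
  · simp only [map_sum, map_smul, hTX_apply, hf, Finset.smul_sum]
    exact Finset.sum_congr rfl fun i _ ↦ smul_comm _ _ _

lemma mul_sum_norm_sq_le_norm_sum_sq_of_mem {T X : ι → E →L[ℝ] E} {G : Submodule ℝ E}
    [FiniteDimensional ℝ G] (hTG : ∀ i, ∀ v ∈ G, T i v ∈ G) (hXG : ∀ i, ∀ v ∈ G, X i v ∈ G)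
    (hT : ∀ i, (T i : E →ₗ[ℝ] E).IsSymmetric) (hcomm : ∀ i j, i ≠ j → Commute (T i) (T j))
    (hTX : ∀ i j, Commute (T i) (X j)) {c : ℝ}
    (hX : ∀ (x : ι → ℝ) v, c * ((∑ i, x i ^ 2) * ‖v‖ ^ 2) ≤ ‖∑ i, x i • X i v‖ ^ 2)
    {v : E} (hv : v ∈ G) : c * ∑ i, ‖T i v‖ ^ 2 ≤ ‖∑ i, X i (T i v)‖ ^ 2 := by
  have hcommute : ∀ {A B : E →L[ℝ] E} (hA : ∀ v ∈ G, (A : E →ₗ[ℝ] E) v ∈ G)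
      (hB : ∀ v ∈ G, (B : E →ₗ[ℝ] E) v ∈ G), Commute A B →
      Commute ((A : E →ₗ[ℝ] E).restrict hA) ((B : E →ₗ[ℝ] E).restrict hB) :=
    fun _ _ hAB ↦ LinearMap.ext fun u ↦ Subtype.ext (congr($hAB.eq (u : E)))
  simpa using mul_sum_norm_sq_le_norm_sum_sq
    (T := fun i ↦ (T i : E →ₗ[ℝ] E).restrict (hTG i))
    (X := fun i ↦ (X i : E →ₗ[ℝ] E).restrict (hXG i))
    (fun i u w ↦ hT i u w) (fun i j hij ↦ hcommute _ _ (hcomm i j hij))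
    (fun i j ↦ hcommute _ _ (hTX i j)) (c := c) (fun x u ↦ by simpa using hX x u) ⟨v, hv⟩

end JointEigenvectors

section EllipticEstimate

variable {ι E : Type*} [Fintype ι] [NormedAddCommGroup E] [InnerProductSpace ℝ E] [CompleteSpace E]
  {X Y a : ι → E →L[ℝ] E}

lemma IsEllipticPair.exists_norm_le_mul_of_norm_eq_one (h : IsEllipticPair X Y) :
    ∃ C, ∀ x : EuclideanSpace ℝ ι, ‖x‖ = 1 → ∀ v, ‖v‖ ≤ C * ‖∑ i, x i • X i v‖ := by
  have hunit : ∀ x : EuclideanSpace ℝ ι, ‖x‖ = 1 → IsUnit (∑ i, x i • X i) := fun x hx ↦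
    h.isUnit x fun h0 ↦ by simp [EuclideanSpace.norm_eq, h0] at hx
  have hcont : ContinuousOn (fun x : EuclideanSpace ℝ ι ↦ Ring.inverse (∑ i, x i • X i))
      (Metric.sphere 0 1) := by
    intro x hx
    obtain ⟨U, hU⟩ := hunit x (by simpa using hx)
    refine ContinuousAt.continuousWithinAt (ContinuousAt.comp (g := Ring.inverse) ?_ ?_)
    · simpa only [hU] using NormedRing.inverse_continuousAt U
    · fun_prop
  obtain ⟨C, hC⟩ := (isCompact_sphere _ _).exists_bound_of_continuousOn hcont
  refine ⟨C, fun x hx v ↦ ?_⟩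
  have hinv := congr($(Ring.inverse_mul_cancel _ (hunit x hx)) v)
  calc ‖v‖ = ‖Ring.inverse (∑ i, x i • X i) ((∑ i, x i • X i) v)‖ := congrArg norm hinv.symm
    _ ≤ C * ‖(∑ i, x i • X i) v‖ := le_of_opNorm_le _ (hC x (by simpa using hx)) _
    _ = C * ‖∑ i, x i • X i v‖ := by simp only [_root_.sum_apply, _root_.smul_apply]

lemma IsEllipticPair.exists_mul_norm_sq_le (h : IsEllipticPair X Y) :
    ∃ b : ℝ, 0 < b ∧ b ≤ 1 ∧
      ∀ (x : ι → ℝ) v, b ^ 2 * ((∑ i, x i ^ 2) * ‖v‖ ^ 2) ≤ ‖∑ i, x i • X i v‖ ^ 2 := by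
  obtain ⟨C, hC⟩ := h.exists_norm_le_mul_of_norm_eq_one
  refine ⟨(max C 1)⁻¹, by positivity, inv_le_one_of_one_le₀ (le_max_right _ _), fun x v ↦ ?_⟩
  suffices hmain : ∀ y : EuclideanSpace ℝ ι,
      (max C 1)⁻¹ ^ 2 * (‖y‖ ^ 2 * ‖v‖ ^ 2) ≤ ‖∑ i, y i • X i v‖ ^ 2 by
    simpa [EuclideanSpace.norm_sq_eq] using hmain (WithLp.toLp 2 x)
  intro y
  obtain rfl | hy := eq_or_ne y 0
  · simp
  have hscale : ∑ i, y i • X i v = ‖y‖ • ∑ i, (‖y‖⁻¹ • y) i • X i v := by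
    simp [Finset.smul_sum, smul_smul, mul_inv_cancel_left₀ (norm_ne_zero_iff.2 hy)]
  have hunit : ‖‖y‖⁻¹ • y‖ = 1 := norm_smul_inv_norm (𝕜 := ℝ) hy
  have hbound : ‖v‖ ≤ max C 1 * ‖∑ i, (‖y‖⁻¹ • y) i • X i v‖ :=
    (hC _ hunit v).trans (by gcongr; exact le_max_left _ _)
  rw [hscale, norm_smul, norm_norm, ← mul_pow, ← mul_pow, inv_mul_eq_div, mul_div_assoc]
  gcongr
  rwa [div_le_iff₀' (by positivity)]

lemma norm_sq_eq_of_mem_skewAdjoint {T : E →L[ℝ] E} (hT : T ∈ skewAdjoint (E →L[ℝ] E)) (v : E) :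
    ‖T v‖ ^ 2 = -⟪(T * T) v, v⟫_ℝ := by
  rw [← real_inner_self_eq_norm_sq]
  change _ = -⟪T (T v), v⟫_ℝ
  rw [inner_apply_left_of_mem_skewAdjoint hT (T v), neg_neg]

lemma IsEllipticPair.norm_diracSum_apply_sq (h : IsEllipticPair X Y)
    (ha : ∀ i j, i ≠ j → Commute (a i) (a j)) (ha' : ∀ i j, i ≠ j → Commute (a i) (star (a j)))
    (hXa : ∀ i j, Commute (X i) (a j)) (hYa : ∀ i j, Commute (Y i) (a j)) {v : E}
    (hv : ∀ i, star (a i) (a i v) - a i (star (a i) v) = -v) :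
    ‖diracSum X Y a v‖ ^ 2 = ‖∑ i, X i (a i v + star (a i) v)‖ ^ 2 +
      ∑ i, ‖a i v - star (a i) v‖ ^ 2 + 2 * ∑ i, ⟪(X i * Y i) v, v⟫_ℝ := by
  have hskew := diracSum_mem_skewAdjoint h.star_left h.star_right (fun i ↦ hXa i i) fun i ↦ hYa i i
  have hpos : ∑ i, X i * (a i + star (a i)) ∈ skewAdjoint (E →L[ℝ] E) := by
    refine sum_mem fun i _ ↦ ?_
    have hXa' : Commute (X i) (star (a i)) := by simpa [h.star_left] using (hXa i i).star_star
    rw [skewAdjoint.mem_iff, star_mul, star_add, star_star, h.star_left, add_comm (star (a i)),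
      mul_neg, ((hXa i i).add_right hXa').eq]
  have hmom : ∀ i, a i - star (a i) ∈ skewAdjoint (E →L[ℝ] E) := fun i ↦ by
    rw [skewAdjoint.mem_iff, star_sub, star_star, neg_sub]
  have hposv : (∑ i, X i * (a i + star (a i))) v = ∑ i, X i (a i v + star (a i) v) :=
    _root_.sum_apply ..
  have hcomm : ∀ i, ⟪(X i * Y i * (2 • (star (a i) * a i - a i * star (a i)))) v, v⟫_ℝ =
      -(2 * ⟪(X i * Y i) v, v⟫_ℝ) := fun i ↦ by
    change ⟪(X i * Y i) (2 • (star (a i) (a i v) - a i (star (a i) v))), v⟫_ℝ = _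
    rw [hv, ← Nat.cast_smul_eq_nsmul ℝ, smul_neg, map_neg, map_smul, inner_neg_left,
      real_inner_smul_left, Nat.cast_ofNat]
  rw [norm_sq_eq_of_mem_skewAdjoint hskew, h.diracSum_mul_self ha ha' hXa hYa, ← hposv,
    norm_sq_eq_of_mem_skewAdjoint hpos]
  simp only [_root_.add_apply, _root_.sum_apply _ _ v, inner_add_left, sum_inner, hcomm,
    ← _root_.sub_apply, norm_sq_eq_of_mem_skewAdjoint (hmom _), Finset.sum_neg_distrib,
    Finset.mul_sum]
  ring

lemma IsEllipticPair.mul_sum_norm_sq_le_norm_diracSum_sq (h : IsEllipticPair X Y)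
    (ha : ∀ i j, i ≠ j → Commute (a i) (a j)) (ha' : ∀ i j, i ≠ j → Commute (a i) (star (a j)))
    (hXa : ∀ i j, Commute (X i) (a j)) (hYa : ∀ i j, Commute (Y i) (a j))
    {G : Submodule ℝ E} [FiniteDimensional ℝ G] (hXG : ∀ i, ∀ v ∈ G, X i v ∈ G)
    (haG : ∀ i, ∀ v ∈ G, a i v + star (a i) v ∈ G) {b : ℝ} (hb : b ^ 2 ≤ 1)
    (hX : ∀ (x : ι → ℝ) v, b ^ 2 * ((∑ i, x i ^ 2) * ‖v‖ ^ 2) ≤ ‖∑ i, x i • X i v‖ ^ 2)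
    {v : E} (hvG : v ∈ G) (hv : ∀ i, star (a i) (a i v) - a i (star (a i) v) = -v) :
    2 * b ^ 2 * ∑ i, ‖star (a i) v‖ ^ 2 ≤
      ‖diracSum X Y a v‖ ^ 2 + 2 * (∑ i, ‖X i * Y i‖) * ‖v‖ ^ 2 := by
  have hXa' : ∀ i j, Commute (X i) (star (a j)) := fun i j ↦ by
    simpa [h.star_left] using (hXa i j).star_star
  have hpos := mul_sum_norm_sq_le_norm_sum_sq_of_mem (T := fun i ↦ a i + star (a i)) haG hXG
    (fun i ↦ (IsSelfAdjoint.add_star_self (a i)).isSymmetric)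
    (fun i j hij ↦ ((ha i j hij).add_right (ha' i j hij)).add_left
      ((ha' j i hij.symm).symm.add_right (ha i j hij).star_star))
    (fun i j ↦ ((hXa j i).add_right (hXa' j i)).symm) hX hvG
  have hcross : ∀ i, -(‖X i * Y i‖ * ‖v‖ ^ 2) ≤ ⟪(X i * Y i) v, v⟫_ℝ := fun i ↦ by
    refine neg_le_of_abs_le ((abs_real_inner_le_norm _ _).trans ?_)
    rw [sq, ← mul_assoc]
    gcongr
    exact le_opNorm _ _
  have hpar : ∀ i, 2 * ‖star (a i) v‖ ^ 2 ≤
      ‖a i v + star (a i) v‖ ^ 2 + ‖a i v - star (a i) v‖ ^ 2 := fun i ↦ by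
    nlinarith [parallelogram_law_with_norm ℝ (a i v) (star (a i) v), sq_nonneg ‖a i v‖]
  rw [h.norm_diracSum_apply_sq ha ha' hXa hYa hv, mul_assoc 2 (∑ i, ‖X i * Y i‖), Finset.sum_mul]
  have hsum_par := Finset.sum_le_sum fun i (_ : i ∈ Finset.univ) ↦ hpar i
  have hsum_cross := Finset.sum_le_sum fun i (_ : i ∈ Finset.univ) ↦ hcross i
  rw [← Finset.mul_sum, Finset.sum_add_distrib] at hsum_par
  rw [Finset.sum_neg_distrib] at hsum_cross
  have hmom : 0 ≤ ∑ i, ‖a i v - star (a i) v‖ ^ 2 := by positivity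
  have hpos' : b ^ 2 * ∑ i, ‖a i v + star (a i) v‖ ^ 2 ≤
    ‖∑ i, X i (a i v + star (a i) v)‖ ^ 2 := hpos
  nlinarith [mul_le_mul_of_nonneg_left hsum_par (sq_nonneg b), mul_le_mul_of_nonneg_right hb hmom]

end EllipticEstimate

/-! ### The Dirac operator on Fock space -/

section FockWeight

/-- The weight `(d + 1) ^ (-1/4)`. Conjugating by it turns an operator of order one in the
oscillator scale, such as the Dirac operator, into a bounded one. -/
noncomputable def fockWeight (d : ℕ) : ℝ := (√√(d + 1))⁻¹

lemma fockWeight_pos (d : ℕ) : 0 < fockWeight d := by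
  unfold fockWeight; positivity

lemma fockWeight_antitone : Antitone fockWeight := fun d e h ↦ by
  unfold fockWeight; gcongr

lemma fockWeight_le_one (d : ℕ) : fockWeight d ≤ 1 := by
  simpa [fockWeight] using fockWeight_antitone (Nat.zero_le d)

lemma fockWeight_sq_mul_sqrt (d : ℕ) : fockWeight d ^ 2 * √(d + 1) = 1 := by
  rw [fockWeight, inv_pow, Real.sq_sqrt (by positivity), inv_mul_cancel₀ (by positivity)]

lemma fockWeight_sq_sq_mul (d : ℕ) : (fockWeight d ^ 2) ^ 2 * (d + 1) = 1 := by
  rw [← Real.sq_sqrt (show (0 : ℝ) ≤ d + 1 by positivity), ← mul_pow, fockWeight_sq_mul_sqrt,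
    one_pow]

lemma fockWeight_sq_mul_sqrt_le_one {k d : ℕ} (hkd : k ≤ d) :
    fockWeight d ^ 2 * √(k + 1) ≤ 1 :=
  (fockWeight_sq_mul_sqrt d).le.trans' (by gcongr)

lemma fockWeight_mul_fockWeight_succ_le (d : ℕ) :
    fockWeight d * fockWeight (d + 1) ≤ fockWeight d ^ 2 := by
  rw [sq]
  exact mul_le_mul_of_nonneg_left (fockWeight_antitone d.le_succ) (fockWeight_pos d).le

lemma fockWeight_sub_fockWeight_succ_le (d : ℕ) :
    fockWeight d - fockWeight (d + 1) ≤ fockWeight d ^ 2 := by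
  have hroot : √√((d + 1 : ℕ) + 1) ≤ √√(d + 1) + 1 := by
    rw [Real.sqrt_le_left (by positivity), Real.sqrt_le_left (by positivity)]
    have h4 : (√√((d : ℝ) + 1) ^ 2) ^ 2 = d + 1 := by
      rw [Real.sq_sqrt (by positivity), Real.sq_sqrt (by positivity)]
    have hpos : 0 < √√((d : ℝ) + 1) := by positivity
    push_cast
    nlinarith [pow_pos hpos 2, pow_pos hpos 3]
  have hsub : fockWeight d - fockWeight (d + 1) =
      fockWeight d * fockWeight (d + 1) * (√√((d + 1 : ℕ) + 1) - √√(d + 1)) := by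
    unfold fockWeight; field_simp
  have hw := mul_pos (fockWeight_pos d) (fockWeight_pos (d + 1))
  rw [hsub]
  nlinarith [fockWeight_mul_fockWeight_succ_le d]

lemma tendsto_fockWeight : Filter.Tendsto fockWeight .atTop (nhds 0) :=
  (Real.tendsto_sqrt_atTop.comp (Real.tendsto_sqrt_atTop.comp
    (Filter.tendsto_atTop_add_const_right _ 1 tendsto_natCast_atTop_atTop))).inv_tendsto_atTop

end FockWeight

section Commutator

variable {E : Type*} [NormedAddCommGroup E] [InnerProductSpace ℝ E] [CompleteSpace E]
  {A : E →L[ℝ] E}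

lemma norm_mul_star_sub_star_mul (hA : IsSelfAdjoint A) (B : E →L[ℝ] E) :
    ‖A * star B - star B * A‖ = ‖A * B - B * A‖ := by
  have hstar : star (A * B - B * A) = star B * A - A * star B := by
    rw [star_sub, star_mul, star_mul, hA.star_eq]
  rw [norm_sub_rev, ← hstar]
  exact LinearIsometryEquiv.norm_map adjoint _

lemma norm_mul_diracSum_sub_diracSum_mul_le {ι : Type*} [Fintype ι] {X Y a : ι → E →L[ℝ] E}
    (hA : IsSelfAdjoint A) (hX : ∀ i, Commute A (X i)) (hY : ∀ i, Commute A (Y i))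
    (ha : ∀ i, ‖A * a i - a i * A‖ ≤ 1) :
    ‖A * diracSum X Y a - diracSum X Y a * A‖ ≤ ∑ i, 2 * (‖X i‖ + ‖Y i‖) := by
  have hterm : ∀ i, A * (X i * (a i + star (a i)) + Y i * (a i - star (a i))) -
      (X i * (a i + star (a i)) + Y i * (a i - star (a i))) * A =
      X i * ((A * a i - a i * A) + (A * star (a i) - star (a i) * A)) +
        Y i * ((A * a i - a i * A) - (A * star (a i) - star (a i) * A)) := fun i ↦ by
    rw [mul_add, ← mul_assoc, ← mul_assoc, (hX i).eq, (hY i).eq]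
    noncomm_ring
  rw [diracSum, Finset.mul_sum, Finset.sum_mul, ← Finset.sum_sub_distrib]
  refine norm_sum_le_of_le _ fun i _ ↦ ?_
  rw [hterm]
  have ha' := (norm_mul_star_sub_star_mul hA (a i)).trans_le (ha i)
  calc _ ≤ ‖X i‖ * (1 + 1) + ‖Y i‖ * (1 + 1) :=
        norm_add_le_of_le (norm_mul_le_of_le le_rfl (norm_add_le_of_le (ha i) ha'))
          (norm_mul_le_of_le le_rfl (norm_sub_le_of_le (ha i) ha'))
    _ = 2 * (‖X i‖ + ‖Y i‖) := by ring

end Commutator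

section Annihilation

variable {ι V : Type*} [Fintype ι] [NormedAddCommGroup V] [InnerProductSpace ℝ V]

variable (ι V) in
/-- The diagonal operator with entries `fockWeight`. -/
noncomputable def weightOp : FockSpace ι V →L[ℝ] FockSpace ι V :=
  scalarComp V id Function.injective_id (fun α ↦ fockWeight (totalDegree α)) ⟨1, by
    rintro _ ⟨α, rfl⟩
    simpa [abs_of_pos (fockWeight_pos _)] using fockWeight_le_one _⟩

@[simp]
lemma weightOp_apply (u : FockSpace ι V) (α : ι → ℕ) :
    weightOp ι V u α = fockWeight (totalDegree α) • u α := rfl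

lemma isSelfAdjoint_weightOp [CompleteSpace V] : IsSelfAdjoint (weightOp ι V) :=
  isSelfAdjoint_scalarComp_id _ _

lemma norm_weightOp_apply_le {u : FockSpace ι V} {d : ℕ}
    (hu : ∀ α, totalDegree α < d → u α = 0) : ‖weightOp ι V u‖ ≤ fockWeight d * ‖u‖ := by
  refine norm_le_mul_norm_of_injective Function.injective_id (fockWeight_pos d).le fun α ↦ ?_
  rw [weightOp_apply, norm_smul, Real.norm_of_nonneg (fockWeight_pos _).le, id]
  obtain hα | hα := lt_or_ge (totalDegree α) d
  · simp [hu α hα]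
  · gcongr
    exact fockWeight_antitone hα

variable [DecidableEq ι]

variable (V) in
/-- The annihilation operator `aᵢ`, with entries `√(αᵢ + 1)`, conjugated by the weight
`fockWeight` so as to be bounded. -/
noncomputable def annihilation (i : ι) : FockSpace ι V →L[ℝ] FockSpace ι V :=
  lowering V i (fun α ↦ fockWeight (totalDegree α) * fockWeight (totalDegree α + 1) * √(α i + 1))
    ⟨1, by
      rintro _ ⟨α, rfl⟩
      have hw := mul_pos (fockWeight_pos (totalDegree α)) (fockWeight_pos (totalDegree α + 1))
      dsimp only
      rw [abs_of_nonneg (by positivity)]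
      exact (fockWeight_sq_mul_sqrt_le_one (apply_le_totalDegree α i)).trans'
        (by gcongr; exact fockWeight_mul_fockWeight_succ_le _)⟩

variable (V) in
/-- The annihilation operator `aᵢ` cut off to the basis vectors with `αᵢ ≤ m`. -/
noncomputable def truncAnnihilation (m : ℕ) (i : ι) : FockSpace ι V →L[ℝ] FockSpace ι V :=
  lowering V i (fun α ↦ if α i < m then √(α i + 1) else 0) ⟨√(m + 1), by
    rintro _ ⟨α, rfl⟩
    dsimp only
    split_ifs with h
    · rw [abs_of_nonneg (by positivity)]; gcongr
    · rw [abs_zero]; positivity⟩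

variable {m : ℕ} {i j : ι}

lemma annihilation_apply (u : FockSpace ι V) (α : ι → ℕ) : annihilation V i u α =
    (fockWeight (totalDegree α) * fockWeight (totalDegree α + 1) * √(α i + 1)) •
      u (α + Pi.single i 1) := rfl

omit [Fintype ι] in
lemma truncAnnihilation_apply (u : FockSpace ι V) (α : ι → ℕ) : truncAnnihilation V m i u α =
    (if α i < m then √(α i + 1) else 0) • u (α + Pi.single i 1) := rfl

lemma annihilation_apply_eq {u : FockSpace ι V} {α : ι → ℕ}
    (h : α i < m ∨ u (α + Pi.single i 1) = 0) :
    annihilation V i u α =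
      fockWeight (totalDegree α) • truncAnnihilation V m i (weightOp ι V u) α := by
  rw [annihilation_apply, truncAnnihilation_apply, weightOp_apply, totalDegree_add_single]
  obtain h | h := h
  · rw [if_pos h, smul_smul, smul_smul]; ring_nf
  · simp [h]

lemma norm_weightOp_mul_sub_truncAnnihilation_mul_le :
    ‖weightOp ι V * truncAnnihilation V m i - truncAnnihilation V m i * weightOp ι V‖ ≤ 1 := by
  refine opNorm_le_bound _ zero_le_one fun u ↦
    norm_le_mul_norm_of_injective (add_left_injective (Pi.single i 1)) zero_le_one fun α ↦ ?_
  change ‖fockWeight (totalDegree α) • (if α i < m then √(α i + 1) else 0) •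
    u (α + Pi.single i 1) - (if α i < m then √(α i + 1) else 0) •
    fockWeight (totalDegree (α + Pi.single i 1)) • u (α + Pi.single i 1)‖ ≤ _
  rw [smul_smul, smul_smul, mul_comm (ite _ _ _), ← sub_smul, ← sub_mul, norm_smul,
    totalDegree_add_single]
  gcongr
  have hsub := sub_nonneg.2 (fockWeight_antitone (totalDegree α).le_succ)
  split_ifs
  · rw [Real.norm_of_nonneg (by positivity)]
    exact (fockWeight_sq_mul_sqrt_le_one (apply_le_totalDegree α i)).trans'
      (by gcongr; exact fockWeight_sub_fockWeight_succ_le _)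
  · simp

variable [CompleteSpace V]

lemma star_annihilation_apply_add (u : FockSpace ι V) (β : ι → ℕ) :
    star (annihilation V i) u (β + Pi.single i 1) =
      (fockWeight (totalDegree β) * fockWeight (totalDegree β + 1) * √(β i + 1)) • u β :=
  star_lowering_apply_add u β

lemma star_annihilation_apply_of_eq_zero (u : FockSpace ι V) {α : ι → ℕ} (hα : α i = 0) :
    star (annihilation V i) u α = 0 :=
  star_lowering_apply_of_eq_zero u hα

omit [Fintype ι] in
lemma star_truncAnnihilation_apply_add (u : FockSpace ι V) (β : ι → ℕ) :
    star (truncAnnihilation V m i) u (β + Pi.single i 1) =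
      (if β i < m then √(β i + 1) else 0) • u β :=
  star_lowering_apply_add u β

omit [Fintype ι] in
lemma star_truncAnnihilation_apply_of_eq_zero (u : FockSpace ι V) {α : ι → ℕ} (hα : α i = 0) :
    star (truncAnnihilation V m i) u α = 0 :=
  star_lowering_apply_of_eq_zero u hα

lemma star_annihilation_apply_eq {u : FockSpace ι V} {α : ι → ℕ}
    (h : ∀ β, α = β + Pi.single i 1 → β i < m ∨ u β = 0) :
    star (annihilation V i) u α =
      fockWeight (totalDegree α) • star (truncAnnihilation V m i) (weightOp ι V u) α := by
  obtain hα | ⟨β, rfl⟩ := eq_zero_or_exists_eq_add_single i α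
  · rw [star_annihilation_apply_of_eq_zero _ hα, star_truncAnnihilation_apply_of_eq_zero _ hα,
      smul_zero]
  · rw [star_annihilation_apply_add, star_truncAnnihilation_apply_add, weightOp_apply,
      totalDegree_add_single]
    obtain h | h := h β rfl
    · rw [if_pos h, smul_smul, smul_smul]; ring_nf
    · simp [h]

omit [Fintype ι]

lemma truncAnnihilation_star_apply (v : FockSpace ι V) {α : ι → ℕ} (hα : α i < m) :
    truncAnnihilation V m i (star (truncAnnihilation V m i) v) α = (α i + 1 : ℝ) • v α := by
  rw [truncAnnihilation_apply, star_truncAnnihilation_apply_add, if_pos hα, smul_smul,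
    Real.mul_self_sqrt (by positivity)]

lemma star_truncAnnihilation_apply (v : FockSpace ι V) {α : ι → ℕ} (hα : α i ≤ m) :
    star (truncAnnihilation V m i) (truncAnnihilation V m i v) α = (α i : ℝ) • v α := by
  obtain hα | ⟨β, rfl⟩ := eq_zero_or_exists_eq_add_single i α
  · rw [star_truncAnnihilation_apply_of_eq_zero _ hα, hα, Nat.cast_zero, zero_smul]
  · have hβ : β i < m := by simpa using hα
    rw [star_truncAnnihilation_apply_add, truncAnnihilation_apply, if_pos hβ, smul_smul,
      Real.mul_self_sqrt (by positivity)]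
    simp

lemma star_truncAnnihilation_apply_sub {v : FockSpace ι V} (hv : ∀ α, v α ≠ 0 → α i < m) :
    star (truncAnnihilation V m i) (truncAnnihilation V m i v) -
      truncAnnihilation V m i (star (truncAnnihilation V m i) v) = -v := by
  ext α
  change star (truncAnnihilation V m i) (truncAnnihilation V m i v) α -
    truncAnnihilation V m i (star (truncAnnihilation V m i) v) α = -v α
  by_cases hα : α i < m
  · rw [star_truncAnnihilation_apply v hα.le, truncAnnihilation_star_apply v hα, add_smul, one_smul]
    abel
  · have hvα : v α = 0 := not_imp_comm.1 (hv α) hα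
    rw [truncAnnihilation_apply, if_neg hα, hvα]
    obtain hα0 | ⟨β, rfl⟩ := eq_zero_or_exists_eq_add_single i α
    · simp [star_truncAnnihilation_apply_of_eq_zero _ hα0]
    · rw [star_truncAnnihilation_apply_add, truncAnnihilation_apply, hvα]; simp

omit [CompleteSpace V] in
lemma commute_truncAnnihilation (hij : i ≠ j) :
    Commute (truncAnnihilation V m i) (truncAnnihilation V m j) :=
  commute_lowering (by simp [hij]) (by simp [hij.symm])

lemma commute_truncAnnihilation_star (hij : i ≠ j) :
    Commute (truncAnnihilation V m i) (star (truncAnnihilation V m j)) :=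
  commute_lowering_star_lowering hij (by simp [hij]) (by simp [hij.symm])

end Annihilation

section Dirac

variable {ι V : Type*} [Fintype ι] [DecidableEq ι] [NormedAddCommGroup V] [InnerProductSpace ℝ V]
  [CompleteSpace V] {X Y : ι → V →L[ℝ] V}

/-- The Dirac operator `∑ i, X i * x i + Y i * ∂ i` on `L²(ℝ^ι; V)` in the Hermite basis,
conjugated by `fockWeight` so as to be bounded. -/
noncomputable def dirac (X Y : ι → V →L[ℝ] V) : FockSpace ι V →L[ℝ] FockSpace ι V :=
  diracSum (coeffHom (ι → ℕ) V ∘ X) (coeffHom (ι → ℕ) V ∘ Y) (annihilation V)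

/-- The Dirac operator built from the truncated annihilation operators. -/
noncomputable def truncDirac (m : ℕ) (X Y : ι → V →L[ℝ] V) : FockSpace ι V →L[ℝ] FockSpace ι V :=
  diracSum (coeffHom (ι → ℕ) V ∘ X) (coeffHom (ι → ℕ) V ∘ Y) (truncAnnihilation V m)

omit [DecidableEq ι] in
lemma diracSum_coeffHom_apply (a : ι → FockSpace ι V →L[ℝ] FockSpace ι V) (u : FockSpace ι V)
    (α : ι → ℕ) :
    diracSum (coeffHom (ι → ℕ) V ∘ X) (coeffHom (ι → ℕ) V ∘ Y) a u α =
      ∑ i, (X i (a i u α + star (a i) u α) + Y i (a i u α - star (a i) u α)) := by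
  rw [diracSum, _root_.sum_apply, lp.coeFn_sum, Finset.sum_apply]
  rfl

lemma dirac_apply_eq {m : ℕ} {u : FockSpace ι V} {α : ι → ℕ}
    (h : totalDegree α < m ∨ ∀ β, u β ≠ 0 → totalDegree β < m) :
    dirac X Y u α = fockWeight (totalDegree α) • truncDirac m X Y (weightOp ι V u) α := by
  have hlt : ∀ β γ : ι → ℕ, totalDegree β ≤ totalDegree α → totalDegree β ≤ totalDegree γ →
      ∀ i, β i < m ∨ u γ = 0 := by
    intro β γ hβ hγ i
    refine or_iff_not_imp_right.2 fun hu ↦ (apply_le_totalDegree β i).trans_lt ?_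
    exact h.elim hβ.trans_lt fun h ↦ hγ.trans_lt (h γ hu)
  have ha : ∀ i, annihilation V i u α =
      fockWeight (totalDegree α) • truncAnnihilation V m i (weightOp ι V u) α := fun i ↦
    annihilation_apply_eq (hlt α _ le_rfl (by simp) i)
  have ha' : ∀ i, star (annihilation V i) u α =
      fockWeight (totalDegree α) • star (truncAnnihilation V m i) (weightOp ι V u) α := fun i ↦
    star_annihilation_apply_eq fun β hβ ↦ hlt β β (by simp [hβ]) le_rfl i
  rw [dirac, truncDirac, diracSum_coeffHom_apply, diracSum_coeffHom_apply, Finset.smul_sum]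
  simp only [ha, ha', ← smul_add, ← smul_sub, map_smul]

lemma dirac_eq_of_support {m : ℕ} {u : FockSpace ι V} (hu : ∀ α, u α ≠ 0 → totalDegree α < m) :
    dirac X Y u = weightOp ι V (truncDirac m X Y (weightOp ι V u)) := by
  ext α
  exact dirac_apply_eq (.inr hu)

lemma dirac_mem_skewAdjoint (hX : ∀ i, star (X i) = -X i) (hY : ∀ i, star (Y i) = Y i) :
    dirac X Y ∈ skewAdjoint (FockSpace ι V →L[ℝ] FockSpace ι V) :=
  diracSum_mem_skewAdjoint (fun i ↦ by simp [← map_star, hX]) (fun i ↦ by simp [← map_star, hY])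
    (fun _ ↦ commute_coeffHom_lowering _) fun _ ↦ commute_coeffHom_lowering _

lemma parity_mul_dirac : parity ι V * dirac X Y = -(dirac X Y * parity ι V) :=
  mul_diracSum_eq_neg_of_odd (fun _ ↦ commute_scalarComp_coeffHom ..)
    (fun _ ↦ commute_scalarComp_coeffHom ..) (fun _ ↦ parity_mul_lowering)
    fun _ ↦ parity_mul_star_lowering

lemma exists_norm_weightOp_truncDirac_sub_le (X Y : ι → V →L[ℝ] V) :
    ∃ C, 0 ≤ C ∧ ∀ m u, ‖weightOp ι V (truncDirac m X Y u) - truncDirac m X Y (weightOp ι V u)‖ ≤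
      C * ‖u‖ :=
  ⟨_, by positivity, fun _ u ↦ le_of_opNorm_le _ (norm_mul_diracSum_sub_diracSum_mul_le
    isSelfAdjoint_weightOp (fun _ ↦ commute_scalarComp_coeffHom ..)
    (fun _ ↦ commute_scalarComp_coeffHom ..)
    fun _ ↦ norm_weightOp_mul_sub_truncAnnihilation_mul_le) u⟩

end Dirac

section SupportedOn

variable {J V : Type*} [NormedAddCommGroup V] [InnerProductSpace ℝ V]

variable (V) in
/-- The vectors of `ℓ²(J; V)` supported on `s`. -/
def supportedOn (s : Set J) : Submodule ℝ (lp (fun _ : J ↦ V) 2) where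
  carrier := {u | ∀ a ∉ s, u a = 0}
  add_mem' hu hv a ha := by simp [hu a ha, hv a ha]
  zero_mem' _ _ := rfl
  smul_mem' c u hu a ha := by simp [hu a ha]

lemma finiteDimensional_supportedOn [FiniteDimensional ℝ V] {s : Set J} (hs : s.Finite) :
    FiniteDimensional ℝ (supportedOn V s) := by
  have := hs.to_subtype
  let restr : supportedOn V s →ₗ[ℝ] s → V :=
    { toFun u a := u.1 a
      map_add' _ _ := rfl
      map_smul' _ _ := rfl }
  refine FiniteDimensional.of_injective restr fun u v huv ↦ ?_
  ext a
  by_cases ha : a ∈ s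
  · exact congrFun huv ⟨a, ha⟩
  · exact (u.2 a ha).trans (v.2 a ha).symm

lemma apply_eq_zero_of_mem_supportedOn_orthogonal {s : Set J} {u : lp (fun _ : J ↦ V) 2}
    (hu : u ∈ (supportedOn V s)ᗮ) {a : J} (ha : a ∈ s) : u a = 0 := by
  classical
  have hsingle : lp.single 2 a (u a) ∈ supportedOn V s := fun b hb ↦
    lp.single_apply_ne _ _ _ fun h ↦ hb (h ▸ ha)
  have h := hu _ hsingle
  rwa [lp.inner_single_left, inner_self_eq_zero] at h

end SupportedOn

section Coercivity

variable {ι V : Type*} [Fintype ι] [DecidableEq ι] [NormedAddCommGroup V] [InnerProductSpace ℝ V]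
  [CompleteSpace V]

omit [Fintype ι] in
lemma truncAnnihilation_add_star_mem_supportedOn {m : ℕ} (i : ι) {v : FockSpace ι V}
    (hv : v ∈ supportedOn V (Set.Iic fun _ : ι ↦ m)) :
    truncAnnihilation V m i v + star (truncAnnihilation V m i) v ∈
      supportedOn V (Set.Iic fun _ : ι ↦ m) := by
  refine add_mem (fun α hα ↦ ?_) fun α hα ↦ ?_
  · have hα' : α + Pi.single i 1 ∉ Set.Iic fun _ : ι ↦ m := fun h ↦
      hα (le_self_add.trans (Set.mem_Iic.1 h))
    rw [truncAnnihilation_apply, hv _ hα', smul_zero]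
  · obtain hα0 | ⟨β, rfl⟩ := eq_zero_or_exists_eq_add_single i α
    · exact star_truncAnnihilation_apply_of_eq_zero _ hα0
    rw [star_truncAnnihilation_apply_add]
    by_cases hβm : β i < m
    · have hβ : β ∉ Set.Iic fun _ : ι ↦ m := fun h ↦ hα fun j ↦ by
        obtain rfl | hj := eq_or_ne j i
        · simpa using hβm
        · simpa [hj] using h j
      rw [hv β hβ, smul_zero]
    · rw [if_neg hβm, zero_smul]

omit [Fintype ι] in
lemma hasSum_norm_sq_star_truncAnnihilation {m : ℕ} {i : ι} {z : FockSpace ι V}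
    (hz : ∀ α, z α ≠ 0 → α i < m) :
    HasSum (fun α ↦ (α i + 1) * ‖z α‖ ^ 2) (‖star (truncAnnihilation V m i) z‖ ^ 2) := by
  have hinner : ‖star (truncAnnihilation V m i) z‖ ^ 2 =
      ⟪truncAnnihilation V m i (star (truncAnnihilation V m i) z), z⟫_ℝ := by
    rw [← real_inner_self_eq_norm_sq, star_eq_adjoint, adjoint_inner_right]
  rw [hinner]
  refine (lp.hasSum_inner _ _).congr_fun fun α ↦ ?_
  by_cases hα : z α = 0
  · simp [hα]
  · rw [truncAnnihilation_star_apply z (hz α hα), real_inner_smul_left, real_inner_self_eq_norm_sq]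

/-- In degree `d` the operator `∑ i, aᵢ aᵢ*` is `d + card ι`, which dominates the order of the
weight. -/
lemma half_mul_norm_sq_le_sum_norm_sq {m : ℕ} {u : FockSpace ι V} (hu0 : u 0 = 0)
    (hum : ∀ α, u α ≠ 0 → totalDegree α < m) :
    2⁻¹ * ‖u‖ ^ 2 ≤
      ∑ i, ‖star (truncAnnihilation V m i) (weightOp ι V (weightOp ι V u))‖ ^ 2 := by
  have hz : ∀ i α, weightOp ι V (weightOp ι V u) α ≠ 0 → α i < m := fun i α hα ↦
    (apply_le_totalDegree α i).trans_lt (hum α fun h ↦ hα (by simp [h]))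
  refine hasSum_le (fun α ↦ ?_) ((hasSum_norm_sq u).mul_left 2⁻¹)
    (hasSum_sum fun i _ ↦ hasSum_norm_sq_star_truncAnnihilation (hz i))
  by_cases hα : u α = 0
  · simp [hα]
  have hdeg : 1 ≤ totalDegree α := by
    by_contra! h
    refine hα ((congrArg u ?_).trans hu0)
    ext i
    simpa using (apply_le_totalDegree α i).trans_lt h
  have hnorm : ‖weightOp ι V (weightOp ι V u) α‖ ^ 2 =
      (fockWeight (totalDegree α) ^ 2) ^ 2 * ‖u α‖ ^ 2 := by
    rw [weightOp_apply, weightOp_apply, smul_smul, ← sq, norm_smul, mul_pow, Real.norm_eq_abs,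
      sq_abs]
  have hsum : (totalDegree α : ℝ) ≤ ∑ i, ((α i : ℝ) + 1) := by
    rw [totalDegree, Nat.cast_sum]
    exact Finset.sum_le_sum fun i _ ↦ by simp
  have hdeg' : (1 : ℝ) ≤ totalDegree α := by exact_mod_cast hdeg
  rw [← Finset.sum_mul, hnorm, ← mul_assoc]
  gcongr
  nlinarith [fockWeight_sq_sq_mul (totalDegree α), sq_nonneg (fockWeight (totalDegree α) ^ 2)]

variable [FiniteDimensional ℝ V] {X Y : ι → V →L[ℝ] V}

lemma IsEllipticPair.exists_mul_norm_sq_le_norm_truncDirac_sq (h : IsEllipticPair X Y) :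
    ∃ b C : ℝ, 0 < b ∧ 0 ≤ C ∧ ∀ (m : ℕ) (u : FockSpace ι V), u 0 = 0 →
      (∀ α, u α ≠ 0 → totalDegree α < m) →
      b ^ 2 * ‖u‖ ^ 2 ≤ ‖truncDirac m X Y (weightOp ι V (weightOp ι V u))‖ ^ 2 +
        C * ‖weightOp ι V (weightOp ι V u)‖ ^ 2 := by
  have hH := h.map (coeffHom (ι → ℕ) V)
  obtain ⟨b, hb0, hb1, hb⟩ := hH.exists_mul_norm_sq_le
  refine ⟨b, 2 * ∑ i, ‖coeffHom (ι → ℕ) V (X i) * coeffHom (ι → ℕ) V (Y i)‖, hb0, by positivity,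
    fun m u hu0 hum ↦ ?_⟩
  have hz : ∀ α, weightOp ι V (weightOp ι V u) α ≠ 0 → totalDegree α < m := fun α hα ↦
    hum α fun h ↦ hα (by simp [h])
  have hbox : weightOp ι V (weightOp ι V u) ∈ supportedOn V (Set.Iic fun _ : ι ↦ m) :=
    fun α hα ↦ by_contra fun hzα ↦
      hα fun i ↦ ((apply_le_totalDegree α i).trans_lt (hz α hzα)).le
  have := finiteDimensional_supportedOn (V := V) (Set.finite_Iic fun _ : ι ↦ m)
  have hest := hH.mul_sum_norm_sq_le_norm_diracSum_sq (a := truncAnnihilation V m)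
    (fun i j hij ↦ commute_truncAnnihilation hij)
    (fun i j hij ↦ commute_truncAnnihilation_star hij)
    (fun _ _ ↦ commute_coeffHom_lowering _) (fun _ _ ↦ commute_coeffHom_lowering _)
    (G := supportedOn V (Set.Iic fun _ : ι ↦ m)) (fun i v hv α hα ↦ by simp [hv α hα])
    (fun i v hv ↦ truncAnnihilation_add_star_mem_supportedOn i hv)
    (pow_le_one₀ hb0.le hb1) hb hbox
    (fun i ↦ star_truncAnnihilation_apply_sub fun α hα ↦
      (apply_le_totalDegree α i).trans_lt (hz α hα))
  refine le_trans ?_ hest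
  nlinarith [mul_le_mul_of_nonneg_left (half_mul_norm_sq_le_sum_norm_sq hu0 hum) (sq_nonneg b)]

lemma IsEllipticPair.exists_mul_norm_le_norm_dirac (h : IsEllipticPair X Y) :
    ∃ d : ℕ, ∃ c : ℝ, 0 < c ∧ ∀ (m : ℕ) (u : FockSpace ι V), (∀ α, totalDegree α < d → u α = 0) →
      (∀ α, u α ≠ 0 → totalDegree α < m) → c * ‖u‖ ≤ ‖dirac X Y u‖ := by
  obtain ⟨b, C, hb, hC, hest⟩ := h.exists_mul_norm_sq_le_norm_truncDirac_sq
  obtain ⟨C', hC', hcomm⟩ := exists_norm_weightOp_truncDirac_sub_le X Y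
  obtain ⟨d, hd, hd1⟩ := ((tendsto_fockWeight.eventually_le_const
    (show 0 < b / (4 * (1 + C + C')) by positivity)).and (Filter.eventually_ge_atTop 1)).exists
  refine ⟨d, b / 2, by positivity, fun m u hud hum ↦ ?_⟩
  set ε := fockWeight d
  have hε : 0 < ε := fockWeight_pos d
  rw [le_div_iff₀ (by positivity)] at hd
  have hWu : ‖weightOp ι V u‖ ≤ ε * ‖u‖ := norm_weightOp_apply_le hud
  have hWWu : ‖weightOp ι V (weightOp ι V u)‖ ≤ ε * ‖u‖ :=
    (norm_weightOp_apply_le (d := 0) (by simp)).trans (by simpa [fockWeight] using hWu)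
  have hdirac : ‖truncDirac m X Y (weightOp ι V (weightOp ι V u))‖ ≤
      ‖dirac X Y u‖ + C' * (ε * ‖u‖) := by
    have hsub := (hcomm m (weightOp ι V u)).trans (mul_le_mul_of_nonneg_left hWu hC')
    rw [dirac_eq_of_support hum]
    exact (norm_le_norm_add_norm_sub _ _).trans (add_le_add_right hsub _)
  have hest := hest m u (hud 0 (by simpa [totalDegree] using Nat.pos_of_ne_zero (by lia))) hum
  by_contra! hlt
  have hU : 0 < b * ‖u‖ := by nlinarith [norm_nonneg (dirac X Y u)]
  have hεu : 0 ≤ ε * ‖u‖ := by positivity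
  have hsmall : (1 + C + C') * (ε * ‖u‖) ≤ b * ‖u‖ / 4 := by nlinarith [norm_nonneg u]
  have hA : ‖truncDirac m X Y (weightOp ι V (weightOp ι V u))‖ ^ 2 ≤ (3 / 4 * (b * ‖u‖)) ^ 2 := by
    gcongr
    nlinarith [mul_nonneg hC hεu]
  have hz : C * ‖weightOp ι V (weightOp ι V u)‖ ^ 2 ≤ (b * ‖u‖ / 4) * (b * ‖u‖ / 4) := calc
    C * ‖weightOp ι V (weightOp ι V u)‖ ^ 2 ≤ C * (ε * ‖u‖) * (ε * ‖u‖) := by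
      rw [mul_assoc, ← sq]; gcongr
    _ ≤ (b * ‖u‖ / 4) * (b * ‖u‖ / 4) := by gcongr <;> nlinarith [mul_nonneg hC hεu]
  nlinarith

lemma IsEllipticPair.isBoundedBelowModFinite_dirac (h : IsEllipticPair X Y) :
    IsBoundedBelowModFinite (dirac X Y) := by
  classical
  obtain ⟨d, c, hc, hbound⟩ := h.exists_mul_norm_le_norm_dirac
  have hfin : {α : ι → ℕ | totalDegree α < d}.Finite :=
    (Set.finite_Iic fun _ ↦ d).subset fun α hα i ↦ ((apply_le_totalDegree α i).trans_lt hα).le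
  refine ⟨supportedOn V {α | totalDegree α < d}, finiteDimensional_supportedOn hfin, c, hc,
    fun u hu ↦ ?_⟩
  have hlim := lp.hasSum_single (by simp) u
  refine le_of_tendsto_of_tendsto (hlim.norm.const_mul c)
    (((dirac X Y).continuous.tendsto _).comp hlim).norm (.of_forall fun s ↦ ?_)
  have happly : ∀ α, (∑ β ∈ s, lp.single 2 β (u β)) α = if α ∈ s then u α else 0 := fun α ↦ by
    rw [lp.coeFn_sum, Finset.sum_apply]
    simp only [lp.single_apply, Pi.single_apply, Finset.sum_ite_eq]
  refine hbound (s.sup totalDegree + 1) _ (fun α hα ↦ ?_) fun α hα ↦ ?_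
  · rw [happly, apply_eq_zero_of_mem_supportedOn_orthogonal hu hα, ite_self]
  · rw [happly] at hα
    exact Nat.lt_succ_of_le (Finset.le_sup (by_contra fun h ↦ hα (if_neg h)))

lemma IsEllipticPair.isOddFredholm_dirac (h : IsEllipticPair X Y) :
    IsOddFredholm (parity ι V) (dirac X Y) where
  isSelfAdjoint := isSelfAdjoint_scalarComp_id _ _
  mul_eq_neg := parity_mul_dirac
  mem_skewAdjoint := dirac_mem_skewAdjoint h.star_left h.star_right
  isBoundedBelowModFinite := h.isBoundedBelowModFinite_dirac

end Coercivity

/-! ### The kernel of a Clifford Dirac operator -/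

section Clifford

/-- An elliptic pair whose symbols are anticommuting complex structures: the symbols of a quantum
harmonic oscillator, whose Dirac operator has an explicit kernel. -/
structure IsCliffordPair {ι R : Type*} [Fintype ι] [Ring R] [StarRing R] [Algebra ℝ R]
    (X Y : ι → R) : Prop extends IsEllipticPair X Y where
  sq_left i : X i * X i = -1
  anticomm_left i j : i ≠ j → X i * X j = -(X j * X i)

namespace IsCliffordPair

variable {ι R : Type*} [Fintype ι] [Ring R] [StarRing R] [Algebra ℝ R] {X Y : ι → R} {i j : ι}

lemma mul_mul_mul_self (h : IsCliffordPair X Y) : Y i * X i * (Y i * X i) = 1 := by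
  rw [mul_assoc, ← mul_assoc (X i), h.anticomm, neg_mul, mul_neg, mul_assoc (Y i), h.sq_left,
    mul_neg_one, mul_neg, neg_neg, h.sq_right]

lemma mul_mul_left (h : IsCliffordPair X Y) : Y i * X i * X i = -(X i * (Y i * X i)) := by
  rw [← mul_assoc, h.anticomm, neg_mul, neg_neg]

lemma commute_left_mul (h : IsCliffordPair X Y) (hij : i ≠ j) : Commute (X i) (Y j * X j) := by
  rw [commute_iff_eq, ← mul_assoc, h.anticomm, neg_mul, mul_assoc, h.anticomm_left i j hij, mul_neg,
    neg_neg, mul_assoc]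

lemma commute_mul_mul (h : IsCliffordPair X Y) (hij : i ≠ j) :
    Commute (Y i * X i) (Y j * X j) := by
  refine Commute.mul_left ?_ (h.commute_left_mul hij)
  rw [commute_iff_eq, ← mul_assoc, h.anticomm_right i j hij, neg_mul, mul_assoc,
    ← neg_eq_iff_eq_neg.2 (h.anticomm j i), mul_neg, neg_neg, mul_assoc]

end IsCliffordPair

lemma IsCliffordPair.map {ι R S : Type*} [Fintype ι] [Ring R] [StarRing R] [Algebra ℝ R]
    [Ring S] [StarRing S] [Algebra ℝ S] {X Y : ι → R} (h : IsCliffordPair X Y) (φ : R →⋆ₐ[ℝ] S) :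
    IsCliffordPair (φ ∘ X) (φ ∘ Y) where
  toIsEllipticPair := h.toIsEllipticPair.map φ
  sq_left i := by simp [← map_mul, h.sq_left]
  anticomm_left i j hij := by simp [← map_mul, ← map_neg, h.anticomm_left i j hij]

lemma IsCliffordPair.diracSum_mul_self_eq {ι R : Type*} [Fintype ι] [Ring R]
    [StarRing R] [Algebra ℝ R] {X Y a : ι → R} (h : IsCliffordPair X Y)
    (ha : ∀ i j, i ≠ j → Commute (a i) (a j)) (ha' : ∀ i j, i ≠ j → Commute (a i) (star (a j)))
    (hXa : ∀ i j, Commute (X i) (a j)) (hYa : ∀ i j, Commute (Y i) (a j)) :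
    diracSum X Y a * diracSum X Y a =
      ∑ i, 2 • (Y i * X i * (a i * star (a i) - star (a i) * a i) -
        (a i * star (a i) + star (a i) * a i)) := by
  have hXa' : ∀ i j, Commute (X i) (star (a j)) := fun i j ↦ by
    simpa [h.star_left] using (hXa i j).star_star
  have hpos := sum_mul_self_eq_sum_mul_self (b := fun i ↦ a i + star (a i)) h.anticomm_left
    (fun i j hij ↦ ((ha i j hij).add_right (ha' i j hij)).add_left
      ((ha' j i hij.symm).symm.add_right (ha i j hij).star_star))
    (fun i j ↦ (hXa i j).add_right (hXa' i j))
  rw [h.diracSum_mul_self ha ha' hXa hYa, hpos, ← Finset.sum_add_distrib, ← Finset.sum_add_distrib]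
  refine Finset.sum_congr rfl fun i _ ↦ ?_
  rw [h.sq_left, h.anticomm]
  noncomm_ring

variable {ι V : Type*} [Fintype ι] [DecidableEq ι] [NormedAddCommGroup V] [InnerProductSpace ℝ V]
  [CompleteSpace V] {X Y : ι → V →L[ℝ] V} {u : FockSpace ι V} {α : ι → ℕ} {m : ℕ}

lemma truncDirac_apply_eq_zero (hu : ∀ β, totalDegree β ≤ totalDegree α + 1 → u β = 0) :
    truncDirac m X Y u α = 0 := by
  have ha : ∀ i, truncAnnihilation V m i u α = 0 := fun i ↦ by
    rw [truncAnnihilation_apply, hu _ (totalDegree_add_single α i).le, smul_zero]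
  have ha' : ∀ i, star (truncAnnihilation V m i) u α = 0 := fun i ↦ by
    obtain hα | ⟨β, rfl⟩ := eq_zero_or_exists_eq_add_single i α
    · exact star_truncAnnihilation_apply_of_eq_zero _ hα
    · rw [star_truncAnnihilation_apply_add, hu β (by rw [totalDegree_add_single]; lia), smul_zero]
  rw [truncDirac, diracSum_coeffHom_apply]
  simp [ha, ha']

lemma IsCliffordPair.truncDirac_truncDirac_apply (h : IsCliffordPair X Y) (u : FockSpace ι V)
    (hα : ∀ i, α i < m) :
    truncDirac m X Y (truncDirac m X Y u) α =
      ∑ i, (2 : ℝ) • (Y i (X i (u α)) - (2 * α i + 1 : ℝ) • u α) := by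
  have hmul := (h.map (coeffHom (ι → ℕ) V)).diracSum_mul_self_eq (a := truncAnnihilation V m)
    (fun i j hij ↦ commute_truncAnnihilation hij)
    (fun i j hij ↦ commute_truncAnnihilation_star hij)
    (fun _ _ ↦ commute_coeffHom_lowering _) (fun _ _ ↦ commute_coeffHom_lowering _)
  have happly := congr(($hmul u) α)
  rw [_root_.sum_apply, lp.coeFn_sum, Finset.sum_apply] at happly
  refine happly.trans (Finset.sum_congr rfl fun i _ ↦ ?_)
  change 2 • (Y i (X i (truncAnnihilation V m i (star (truncAnnihilation V m i) u) α -
    star (truncAnnihilation V m i) (truncAnnihilation V m i u) α)) -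
    (truncAnnihilation V m i (star (truncAnnihilation V m i) u) α +
      star (truncAnnihilation V m i) (truncAnnihilation V m i u) α)) = _
  rw [truncAnnihilation_star_apply u (hα i), star_truncAnnihilation_apply u (hα i).le, ← sub_smul,
    ← add_smul, ← Nat.cast_smul_eq_nsmul ℝ, add_sub_cancel_left, one_smul, Nat.cast_ofNat,
    add_right_comm, ← two_mul]

omit [DecidableEq ι] [CompleteSpace V] in
lemma eq_and_eq_zero_or_eq_zero_of_sum_eq_zero {τ : ι → V → V} {k : ι → ℕ} {v : V}
    (hτ : ∀ i, ‖τ i v‖ = ‖v‖) (h : ∑ i, (2 : ℝ) • (τ i v - (2 * k i + 1 : ℝ) • v) = 0) (i : ι) :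
    τ i v = v ∧ (k i = 0 ∨ v = 0) := by
  have hterm : ∀ i, ⟪(2 : ℝ) • (τ i v - (2 * k i + 1 : ℝ) • v), v⟫_ℝ =
      -(‖τ i v - v‖ ^ 2 + 4 * k i * ‖v‖ ^ 2) := fun i ↦ by
    rw [norm_sub_sq_real, hτ, real_inner_smul_left, inner_sub_left, real_inner_smul_left,
      real_inner_self_eq_norm_sq]
    ring
  have hsum : ∑ i, (‖τ i v - v‖ ^ 2 + 4 * k i * ‖v‖ ^ 2) = 0 := by
    simpa only [sum_inner, hterm, Finset.sum_neg_distrib, inner_zero_left, neg_eq_zero] using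
      congr(⟪$h, v⟫_ℝ)
  have hi := (Finset.sum_eq_zero_iff_of_nonneg fun i _ ↦ by positivity).1 hsum i (Finset.mem_univ i)
  rw [add_eq_zero_iff_of_nonneg (by positivity) (by positivity)] at hi
  simpa [sub_eq_zero] using hi

omit [DecidableEq ι] in
lemma IsCliffordPair.norm_apply_apply (h : IsCliffordPair X Y) (i : ι) (v : V) :
    ‖Y i (X i v)‖ = ‖v‖ := by
  have hstar : star (Y i * X i) * (Y i * X i) = 1 := by
    rw [star_mul, h.star_left, h.star_right, mul_assoc, ← mul_assoc (Y i), h.sq_right, one_mul,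
      neg_mul, h.sq_left, neg_neg]
  exact (norm_map_iff_adjoint_comp_self (Y i * X i)).2 hstar v

lemma IsCliffordPair.apply_of_dirac_eq_zero (h : IsCliffordPair X Y)
    (hu : dirac X Y u = 0) (α : ι → ℕ) (i : ι) :
    Y i (X i (u α)) = u α ∧ (α i = 0 ∨ u α = 0) := by
  have htrunc : ∀ β, totalDegree β < totalDegree α + 2 →
      truncDirac (totalDegree α + 2) X Y (weightOp ι V u) β = 0 := fun β hβ ↦ by
    have hβ0 := dirac_apply_eq (X := X) (Y := Y) (u := u) (.inl hβ)
    rw [hu, eq_comm] at hβ0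
    exact (smul_eq_zero.1 hβ0).resolve_left (fockWeight_pos _).ne'
  have hsq := h.truncDirac_truncDirac_apply (m := totalDegree α + 2) (weightOp ι V u) (α := α)
    fun i ↦ (apply_le_totalDegree α i).trans_lt (by lia)
  rw [truncDirac_apply_eq_zero fun β hβ ↦ htrunc β (by lia)] at hsq
  have hv := eq_and_eq_zero_or_eq_zero_of_sum_eq_zero (τ := fun i v ↦ Y i (X i v))
    (fun i ↦ h.norm_apply_apply i _) hsq.symm i
  simpa [weightOp_apply, (fockWeight_pos _).ne'] using hv

lemma IsCliffordPair.dirac_eq_zero_iff (h : IsCliffordPair X Y) :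
    dirac X Y u = 0 ↔ (∀ α ≠ 0, u α = 0) ∧ ∀ i, Y i (X i (u 0)) = u 0 := by
  refine ⟨fun hu ↦ ⟨fun α hα ↦ ?_, fun i ↦ (h.apply_of_dirac_eq_zero hu 0 i).1⟩, ?_⟩
  · obtain ⟨i, hi⟩ := Function.ne_iff.1 hα
    exact (h.apply_of_dirac_eq_zero hu α i).2.resolve_left hi
  rintro ⟨hsupp, hfix⟩
  ext α
  rw [dirac, diracSum_coeffHom_apply]
  refine Finset.sum_eq_zero fun i _ ↦ ?_
  have ha : annihilation V i u α = 0 := by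
    rw [annihilation_apply, hsupp _ fun h0 ↦ by simpa using congrFun h0 i, smul_zero]
  have hXY : X i (u 0) = Y i (u 0) := by
    conv_rhs => rw [← hfix i]
    exact congr($(h.sq_right i) (X i (u 0))).symm
  obtain ⟨t, ht⟩ : ∃ t : ℝ, star (annihilation V i) u α = t • u 0 := by
    obtain hα | ⟨β, rfl⟩ := eq_zero_or_exists_eq_add_single i α
    · exact ⟨0, by rw [star_annihilation_apply_of_eq_zero _ hα, zero_smul]⟩
    · obtain rfl | hβ := eq_or_ne β 0
      · exact ⟨_, star_annihilation_apply_add u 0⟩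
      · exact ⟨0, by rw [star_annihilation_apply_add, hsupp β hβ, smul_zero, zero_smul]⟩
  simp [ha, ht, hXY]

end Clifford

section Halving

variable {V : Type*} [AddCommGroup V] [Module ℝ V] [FiniteDimensional ℝ V]

lemma finrank_eq_two_mul_finrank_inf_eigenspace {τ x : V →ₗ[ℝ] V} (hτ : τ * τ = 1)
    (hx : Function.Injective x) (hτx : τ * x = -(x * τ)) {W : Submodule ℝ V}
    (hτW : ∀ v ∈ W, τ v ∈ W) (hxW : ∀ v ∈ W, x v ∈ W) :
    finrank ℝ W = 2 * finrank ℝ ↥(W ⊓ End.eigenspace τ 1) := by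
  have hττ : ∀ v, τ (τ v) = v := fun v ↦ congr($hτ v)
  have hle : ∀ c : ℝ, finrank ℝ ↥(W ⊓ End.eigenspace τ c) ≤
      finrank ℝ ↥(W ⊓ End.eigenspace τ (-c)) := fun c ↦ by
    have hmaps : ∀ v ∈ W ⊓ End.eigenspace τ c, x v ∈ W ⊓ End.eigenspace τ (-c) := by
      rintro v ⟨hvW, hv⟩
      refine ⟨hxW v hvW, End.mem_eigenspace_iff.2 ?_⟩
      rw [show τ (x v) = -x (τ v) from congr($hτx v), End.mem_eigenspace_iff.1 hv, map_smul,
        neg_smul]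
    exact LinearMap.finrank_le_finrank_of_injective
      (f := x.restrict hmaps) fun v w h ↦ Subtype.ext (hx congr(($h : V)))
  have hsup : (W ⊓ End.eigenspace τ 1) ⊔ (W ⊓ End.eigenspace τ (-1)) = W := by
    refine le_antisymm (sup_le inf_le_left inf_le_left) fun v hv ↦ Submodule.mem_sup.2
      ⟨(2⁻¹ : ℝ) • (v + τ v), ⟨W.smul_mem _ (add_mem hv (hτW v hv)), ?_⟩,
        (2⁻¹ : ℝ) • (v - τ v), ⟨W.smul_mem _ (sub_mem hv (hτW v hv)), ?_⟩, by module⟩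
    all_goals
      simp only [SetLike.mem_coe, End.mem_eigenspace_iff, map_smul, map_add, map_sub, hττ]
      module
  have hinf : (W ⊓ End.eigenspace τ 1) ⊓ (W ⊓ End.eigenspace τ (-1)) = ⊥ :=
    ((End.disjoint_genEigenspace τ (by norm_num) 1 1).mono inf_le_right inf_le_right).eq_bot
  have hdim := Submodule.finrank_sup_add_finrank_inf_eq (W ⊓ End.eigenspace τ 1)
    (W ⊓ End.eigenspace τ (-1))
  rw [hsup, hinf, finrank_bot, add_zero] at hdim
  have h₁ := hle 1
  have h₂ := hle (-1)
  rw [neg_neg] at h₂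
  lia

lemma two_pow_card_mul_finrank_iInf_eigenspace {ι : Type*} {τ x : ι → V →ₗ[ℝ] V}
    (hτ : ∀ i, τ i * τ i = 1) (hx : ∀ i, Function.Injective (x i))
    (hτx : ∀ i, τ i * x i = -(x i * τ i)) (hττ : ∀ i j, i ≠ j → Commute (τ i) (τ j))
    (hxτ : ∀ i j, i ≠ j → Commute (x i) (τ j)) (s : Finset ι) :
    2 ^ s.card * finrank ℝ ↥(⨅ i ∈ s, End.eigenspace (τ i) 1) = finrank ℝ V := by
  classical
  induction s using Finset.induction_on with
  | empty =>
    rw [show ⨅ i ∈ (∅ : Finset ι), End.eigenspace (τ i) 1 = ⊤ by simp, finrank_top]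
    simp
  | insert i s hi ih =>
    have hmaps : ∀ f : V →ₗ[ℝ] V, (∀ j ∈ s, Commute f (τ j)) →
        ∀ v ∈ ⨅ j ∈ s, End.eigenspace (τ j) 1, f v ∈ ⨅ j ∈ s, End.eigenspace (τ j) 1 := by
      intro f hf v hv
      simp only [Submodule.mem_iInf, End.mem_eigenspace_iff, one_smul] at hv ⊢
      exact fun j hj ↦ congr($((hf j hj).eq) v).symm.trans congr(f $(hv j hj))
    have hne : ∀ j ∈ s, i ≠ j := fun j hj hij ↦ hi (hij ▸ hj)
    have hhalf := finrank_eq_two_mul_finrank_inf_eigenspace (hτ i) (hx i) (hτx i)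
      (hmaps (τ i) fun j hj ↦ hττ i j (hne j hj)) (hmaps (x i) fun j hj ↦ hxτ i j (hne j hj))
    rw [Finset.card_insert_of_notMem hi, Finset.iInf_insert, inf_comm, pow_succ, mul_assoc, ← hhalf,
      ih]

end Halving

section CliffordIndex

variable {ι V : Type*} [Fintype ι] [DecidableEq ι] [NormedAddCommGroup V] [InnerProductSpace ℝ V]
  [CompleteSpace V] {X Y : ι → V →L[ℝ] V}

lemma IsCliffordPair.gradedKer_dirac_neg_one (h : IsCliffordPair X Y) :
    gradedKer (dirac X Y) (parity ι V) (-1) = ⊥ := by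
  refine (Submodule.eq_bot_iff _).2 fun u hu ↦ ?_
  obtain ⟨hker, hodd⟩ := mem_gradedKer.1 hu
  have hsupp := (h.dirac_eq_zero_iff.1 hker).1
  ext α
  obtain rfl | hα := eq_or_ne α 0
  · have h0 : u 0 = -u 0 := by simpa [totalDegree] using congr($hodd 0)
    have := IsAddTorsionFree.of_isTorsionFree ℝ V
    exact self_eq_neg.1 h0
  · exact hsupp α hα

lemma IsCliffordPair.gradedKer_dirac_one (h : IsCliffordPair X Y) [DecidableEq (ι → ℕ)] :
    gradedKer (dirac X Y) (parity ι V) 1 =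
      (⨅ i ∈ Finset.univ, End.eigenspace ((Y i * X i : V →L[ℝ] V) : V →ₗ[ℝ] V) 1).map
        (lp.lsingle (E := fun _ : ι → ℕ ↦ V) 2 0 : V →ₗ[ℝ] FockSpace ι V) := by
  ext u
  simp only [mem_gradedKer, h.dirac_eq_zero_iff, Submodule.mem_map, Submodule.mem_iInf,
    Finset.mem_univ, forall_const, End.mem_eigenspace_iff, one_smul, lp.lsingle_apply]
  constructor
  · rintro ⟨⟨hsupp, hfix⟩, -⟩
    refine ⟨u 0, hfix, ?_⟩
    ext α
    obtain rfl | hα := eq_or_ne α 0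
    · simp
    · rw [lp.single_apply_ne _ _ _ hα, hsupp α hα]
  · rintro ⟨v, hfix, rfl⟩
    have hsupp : ∀ α ≠ 0, lp.single (E := fun _ : ι → ℕ ↦ V) 2 0 v α = 0 := fun α hα ↦
      lp.single_apply_ne _ _ _ hα
    refine ⟨⟨hsupp, by simpa using hfix⟩, ?_⟩
    ext α
    obtain rfl | hα := eq_or_ne α 0
    · simp [totalDegree]
    · simp only [parity_apply, hsupp α hα, smul_zero]

lemma IsCliffordPair.two_pow_card_mul_gradedIndex_dirac [FiniteDimensional ℝ V]
    (h : IsCliffordPair X Y) :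
    2 ^ Fintype.card ι * gradedIndex (dirac X Y) (parity ι V) = finrank ℝ V := by
  classical
  have hpow := two_pow_card_mul_finrank_iInf_eigenspace
    (τ := fun i ↦ toLinearMapRingHom (Y i * X i)) (x := fun i ↦ toLinearMapRingHom (X i))
    (fun i ↦ by rw [← map_mul, h.mul_mul_mul_self, map_one])
    (fun i ↦ Function.LeftInverse.injective (g := -X i) fun v ↦ by
      simpa [neg_eq_iff_eq_neg] using congr($(h.sq_left i) v))
    (fun i ↦ by rw [← map_mul, h.mul_mul_left, map_neg, map_mul])
    (fun i j hij ↦ (h.commute_mul_mul hij).map _)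
    (fun i j hij ↦ (h.commute_left_mul hij).map _) Finset.univ
  have hdim := (Submodule.equivMapOfInjective
    (lp.lsingle (E := fun _ : ι → ℕ ↦ V) 2 0 : V →ₗ[ℝ] FockSpace ι V)
    (lp.isometry_single (E := fun _ : ι → ℕ ↦ V) 0).injective
      (⨅ i ∈ Finset.univ, End.eigenspace ((Y i * X i : V →L[ℝ] V) : V →ₗ[ℝ] V) 1)).finrank_eq
  rw [gradedIndex, h.gradedKer_dirac_neg_one, h.gradedKer_dirac_one, finrank_bot, ← hdim, ← hpow,
    Nat.cast_zero, sub_zero, Nat.cast_mul, Nat.cast_pow, Nat.cast_two, Finset.card_univ]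
  rfl

end CliffordIndex

/-! ### The index of an elliptic pair of matrices -/

section Intertwining

variable {ι V W : Type*} [Fintype ι] [DecidableEq ι] [NormedAddCommGroup V] [InnerProductSpace ℝ V]
  [CompleteSpace V] [NormedAddCommGroup W] [InnerProductSpace ℝ W] [CompleteSpace W]
  {X Y : ι → V →L[ℝ] V} {X' Y' : ι → W →L[ℝ] W}

lemma star_annihilation_coeffMap_apply (B : V →L[ℝ] W) (i : ι) (u : FockSpace ι V) (α : ι → ℕ) :
    star (annihilation W i) (coeffMap _ B u) α = B (star (annihilation V i) u α) := by
  obtain hα | ⟨β, rfl⟩ := eq_zero_or_exists_eq_add_single i α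
  · rw [star_annihilation_apply_of_eq_zero _ hα, star_annihilation_apply_of_eq_zero _ hα, map_zero]
  · rw [star_annihilation_apply_add, star_annihilation_apply_add, coeffMap_apply, map_smul]

lemma dirac_coeffMap {B : V →L[ℝ] W} (hX : ∀ i, X' i ∘L B = B ∘L X i)
    (hY : ∀ i, Y' i ∘L B = B ∘L Y i) (u : FockSpace ι V) :
    dirac X' Y' (coeffMap _ B u) = coeffMap _ B (dirac X Y u) := by
  have hX' : ∀ i v, X' i (B v) = B (X i v) := fun i v ↦ congr($(hX i) v)
  have hY' : ∀ i v, Y' i (B v) = B (Y i v) := fun i v ↦ congr($(hY i) v)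
  ext α
  rw [dirac, dirac, coeffMap_apply, diracSum_coeffHom_apply, diracSum_coeffHom_apply, map_sum]
  refine Finset.sum_congr rfl fun i _ ↦ ?_
  rw [star_annihilation_coeffMap_apply, annihilation_apply, coeffMap_apply, ← map_smul,
    ← annihilation_apply, ← map_add, ← map_sub, hX', hY', ← map_add]

lemma coeffMap_mem_gradedKer_dirac {B : V →L[ℝ] W} (hX : ∀ i, X' i ∘L B = B ∘L X i)
    (hY : ∀ i, Y' i ∘L B = B ∘L Y i) {u : FockSpace ι V} {e : ℝ}
    (hu : u ∈ gradedKer (dirac X Y) (parity ι V) e) :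
    coeffMap _ B u ∈ gradedKer (dirac X' Y') (parity ι W) e := by
  obtain ⟨hker, hpar⟩ := mem_gradedKer.1 hu
  refine mem_gradedKer.2 ⟨by rw [dirac_coeffMap hX hY, hker, map_zero], ?_⟩
  rw [← map_smul, ← hpar]
  ext α
  simp

/-- If `W` is the direct sum of copies of `V` indexed by `κ`, with projections `B k` and inclusions
`C k` intertwining the symbols, then the kernel over `W` is a sum of copies of that over `V`. -/
noncomputable def gradedKerDiracEquivPi {κ : Type*} [Fintype κ] [DecidableEq κ]
    {B : κ → W →L[ℝ] V} {C : κ → V →L[ℝ] W} (hBC : ∀ k l v, B k (C l v) = if k = l then v else 0)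
    (hCB : ∀ w, ∑ k, C k (B k w) = w)
    (hBX : ∀ k i, X i ∘L B k = B k ∘L X' i) (hBY : ∀ k i, Y i ∘L B k = B k ∘L Y' i)
    (hCX : ∀ k i, X' i ∘L C k = C k ∘L X i) (hCY : ∀ k i, Y' i ∘L C k = C k ∘L Y i) (e : ℝ) :
    gradedKer (dirac X' Y') (parity ι W) e ≃ₗ[ℝ] (κ → gradedKer (dirac X Y) (parity ι V) e) where
  toFun u k := ⟨coeffMap _ (B k) u, coeffMap_mem_gradedKer_dirac (hBX k) (hBY k) u.2⟩
  invFun w := ⟨∑ k, coeffMap _ (C k) (w k : FockSpace ι V),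
    sum_mem fun k _ ↦ coeffMap_mem_gradedKer_dirac (hCX k) (hCY k) (w k).2⟩
  map_add' u v := by ext k : 2; exact map_add _ _ _
  map_smul' c u := by ext k : 2; exact map_smul _ _ _
  left_inv u := by
    ext α : 3
    rw [lp.coeFn_sum, Finset.sum_apply]
    exact hCB _
  right_inv w := by
    ext k α : 4
    change B k ((∑ l, coeffMap _ (C l) (w l).1 : FockSpace ι W) α) = _
    rw [lp.coeFn_sum, Finset.sum_apply, map_sum]
    simp [hBC]

end Intertwining

section Slices

variable {m κ : Type*} [Fintype m] [Fintype κ]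

/-- The component of a vector of `ℝ^m ⊗ ℝ^κ` along the `k`-th basis vector of `ℝ^κ`. -/
noncomputable def tensorSlice (k : κ) : EuclideanSpace ℝ (m × κ) →L[ℝ] EuclideanSpace ℝ m :=
  LinearMap.toContinuousLinearMap
    { toFun v := WithLp.toLp 2 fun i ↦ v (i, k)
      map_add' _ _ := rfl
      map_smul' _ _ := rfl }

lemma tensorSlice_apply (k : κ) (v : EuclideanSpace ℝ (m × κ)) (i : m) :
    tensorSlice k v i = v (i, k) := rfl

variable [DecidableEq κ]

/-- The embedding `v ↦ v ⊗ eₖ` of `ℝ^m` into `ℝ^m ⊗ ℝ^κ`. -/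
noncomputable def tensorSingle (k : κ) : EuclideanSpace ℝ m →L[ℝ] EuclideanSpace ℝ (m × κ) :=
  LinearMap.toContinuousLinearMap
    { toFun v := WithLp.toLp 2 fun p ↦ if p.2 = k then v p.1 else 0
      map_add' _ _ := by ext; simp [ite_add_zero]
      map_smul' _ _ := by ext; simp }

lemma tensorSingle_apply (k : κ) (v : EuclideanSpace ℝ m) (p : m × κ) :
    tensorSingle k v p = if p.2 = k then v p.1 else 0 := rfl

lemma tensorSlice_tensorSingle (k l : κ) (v : EuclideanSpace ℝ m) :
    tensorSlice k (tensorSingle l v) = if k = l then v else 0 := by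
  ext i
  by_cases h : k = l <;> simp [tensorSlice_apply, tensorSingle_apply, h]

lemma sum_tensorSingle_tensorSlice (v : EuclideanSpace ℝ (m × κ)) :
    ∑ k, tensorSingle k (tensorSlice k v) = v := by
  ext ⟨i, k⟩
  simp [tensorSlice_apply, tensorSingle_apply]

variable [DecidableEq m]

lemma toEuclideanCLM_comp_tensorSlice (A : Matrix m m ℝ) (k : κ) :
    toEuclideanCLM (𝕜 := ℝ) A ∘L tensorSlice k =
      tensorSlice k ∘L toEuclideanCLM (𝕜 := ℝ) (A ⊗ₖ (1 : Matrix κ κ ℝ)) := by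
  ext v i
  simp [tensorSlice_apply, mulVec, dotProduct, Fintype.sum_prod_type, one_apply]

lemma toEuclideanCLM_comp_tensorSingle (A : Matrix m m ℝ) (k : κ) :
    toEuclideanCLM (𝕜 := ℝ) (A ⊗ₖ (1 : Matrix κ κ ℝ)) ∘L tensorSingle k =
      tensorSingle k ∘L toEuclideanCLM (𝕜 := ℝ) A := by
  ext v ⟨i, l⟩
  by_cases hl : l = k <;>
  simp [tensorSingle_apply, mulVec, dotProduct, Fintype.sum_prod_type, one_apply, hl]

end Slices

section MatrixIndex

variable {ι m κ : Type*} [Fintype ι] [DecidableEq ι] [Fintype m] [DecidableEq m] [Fintype κ]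
  [DecidableEq κ] {X Y : ι → Matrix m m ℝ}

/-- The Dirac operator on `L²(ℝ^ι; ℝ^m)` with matrix symbols. -/
noncomputable def matrixDirac (X Y : ι → Matrix m m ℝ) :
    FockSpace ι (EuclideanSpace ℝ m) →L[ℝ] FockSpace ι (EuclideanSpace ℝ m) :=
  dirac (fun i ↦ toEuclideanCLM (𝕜 := ℝ) (X i)) fun i ↦ toEuclideanCLM (𝕜 := ℝ) (Y i)

/-- The even (`e = 1`) and the odd (`e = -1`) part of the kernel of `matrixDirac`. -/
noncomputable abbrev matrixDiracKer (X Y : ι → Matrix m m ℝ) (e : ℝ) :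
    Submodule ℝ (FockSpace ι (EuclideanSpace ℝ m)) :=
  gradedKer (matrixDirac X Y) (parity ι _) e

lemma finrank_matrixDiracKer_kronecker_one (X Y : ι → Matrix m m ℝ) (e : ℝ)
    [FiniteDimensional ℝ (matrixDiracKer X Y e)] :
    finrank ℝ (matrixDiracKer (fun i ↦ X i ⊗ₖ (1 : Matrix κ κ ℝ)) (fun i ↦ Y i ⊗ₖ 1) e) =
      Fintype.card κ * finrank ℝ (matrixDiracKer X Y e) := by
  have hpi : finrank ℝ (κ → matrixDiracKer X Y e) = _ := finrank_pi_fintype ℝ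
  rw [Finset.sum_const, Finset.card_univ, smul_eq_mul] at hpi
  rw [← hpi]
  let Φ (A : ι → Matrix m m ℝ) (i : ι) := toEuclideanCLM (𝕜 := ℝ) (A i)
  let Ψ (A : ι → Matrix m m ℝ) (i : ι) := toEuclideanCLM (𝕜 := ℝ) (A i ⊗ₖ (1 : Matrix κ κ ℝ))
  have hslice (A : ι → Matrix m m ℝ) (k : κ) (i : ι) := toEuclideanCLM_comp_tensorSlice (A i) k
  have hsingle (A : ι → Matrix m m ℝ) (k : κ) (i : ι) := toEuclideanCLM_comp_tensorSingle (A i) k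
  exact (gradedKerDiracEquivPi (X := Φ X) (X' := Ψ X) (Y := Φ Y) (Y' := Ψ Y)
    tensorSlice_tensorSingle sum_tensorSingle_tensorSlice
    (hslice X) (hslice Y) (hsingle X) (hsingle Y) e).finrank_eq

lemma matrixDiracKer_mul_left {B : Matrix m m ℝ} (hB : B * B = 1) (e : ℝ) :
    matrixDiracKer (fun i ↦ B * X i) (fun i ↦ B * Y i) e = matrixDiracKer X Y e := by
  have hBB : toEuclideanCLM (𝕜 := ℝ) B * toEuclideanCLM (𝕜 := ℝ) B = 1 := by
    rw [← map_mul, hB, map_one]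
  have hdirac : matrixDirac (fun i ↦ B * X i) (fun i ↦ B * Y i) =
      coeffHom (ι → ℕ) (EuclideanSpace ℝ m) (toEuclideanCLM (𝕜 := ℝ) B) * matrixDirac X Y := by
    simp only [matrixDirac, dirac, diracSum, Finset.mul_sum, Function.comp_apply, map_mul, mul_add,
      mul_assoc]
  have hinj : Function.Injective
      (coeffHom (ι → ℕ) (EuclideanSpace ℝ m) (toEuclideanCLM (𝕜 := ℝ) B)) :=
    Function.Involutive.injective fun u ↦ by ext α : 2; exact congr($hBB (u α))
  ext u
  rw [mem_gradedKer, mem_gradedKer, hdirac, mul_apply_eq_comp, map_eq_zero_iff _ hinj]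

lemma gradedIndex_matrixDirac_kronecker {B : Matrix κ κ ℝ} (hB : B * B = 1)
    [FiniteDimensional ℝ (matrixDirac X Y).ker] :
    gradedIndex (matrixDirac (fun i ↦ X i ⊗ₖ B) (fun i ↦ Y i ⊗ₖ B)) (parity ι _) =
      Fintype.card κ * gradedIndex (matrixDirac X Y) (parity ι _) := by
  have hker : ∀ e, finrank ℝ (matrixDiracKer (fun i ↦ X i ⊗ₖ B) (fun i ↦ Y i ⊗ₖ B) e) =
      Fintype.card κ * finrank ℝ (matrixDiracKer X Y e) := fun e ↦ by
    have h := matrixDiracKer_mul_left (X := fun i ↦ X i ⊗ₖ (1 : Matrix κ κ ℝ))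
      (Y := fun i ↦ Y i ⊗ₖ 1) (B := (1 : Matrix m m ℝ) ⊗ₖ B)
      (by rw [← mul_kronecker_mul, hB, one_mul, one_kronecker_one]) e
    simp only [← mul_kronecker_mul, one_mul, mul_one] at h
    have : FiniteDimensional ℝ (matrixDiracKer X Y e) :=
      Submodule.finiteDimensional_of_le inf_le_left
    rw [h, finrank_matrixDiracKer_kronecker_one]
  rw [gradedIndex, gradedIndex, hker, hker]
  push_cast
  ring

end MatrixIndex

section Deformation

variable {ι m : Type*} [Fintype ι] [Fintype m] [DecidableEq m] {X Y Z : ι → Matrix m m ℝ}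

omit [Fintype ι] in
lemma isUnit_add_of_skew_of_anticomm {A B : Matrix m m ℝ} (hA : star A = -A) (hB : star B = -B)
    (hAB : A * B = -(B * A)) (hunit : IsUnit B) : IsUnit (A + B) := by
  have hgram : (A + B)ᴴ * (A + B) = Aᴴ * A + Bᴴ * B := by
    simp only [← star_eq_conjTranspose, star_add, hA, hB, add_mul, mul_add, neg_mul, hAB]
    abel
  have hpos : ((A + B)ᴴ * (A + B)).PosDef := by
    rw [hgram]
    exact PosDef.posSemidef_add (posSemidef_conjTranspose_mul_self A)
      (.conjTranspose_mul_self B (mulVec_injective_of_isUnit hunit))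
  exact isUnit_of_mul_isUnit_right hpos.isUnit

lemma sum_smul_anticomm {R : Type*} [Ring R] [Algebra ℝ R] {X Z : ι → R}
    (hXZ : ∀ i j, X i * Z j = -(Z j * X i)) (x y : ι → ℝ) :
    (∑ i, x i • X i) * ∑ j, y j • Z j = -((∑ j, y j • Z j) * ∑ i, x i • X i) := by
  rw [Finset.sum_mul_sum, Finset.sum_mul_sum, Finset.sum_comm]
  simp [hXZ, smul_smul, mul_comm]

lemma IsEllipticPair.lineMap (hX : IsEllipticPair X Y) (hZ : IsEllipticPair Z Y)
    (hXZ : ∀ i j, X i * Z j = -(Z j * X i)) (s : ℝ) :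
    IsEllipticPair (fun i ↦ (1 - s) • X i + s • Z i) Y where
  star_left i := by simp [hX.star_left, hZ.star_left, add_comm]
  star_right := hX.star_right
  sq_right := hX.sq_right
  anticomm_right := hX.anticomm_right
  anticomm i j := by simp [add_mul, mul_add, hX.anticomm, hZ.anticomm, add_comm]
  isUnit x hx := by
    have hsum : ∑ i, x i • ((1 - s) • X i + s • Z i) =
        ∑ i, ((1 - s) * x i) • X i + ∑ i, (s * x i) • Z i := by
      rw [← Finset.sum_add_distrib]
      exact Finset.sum_congr rfl fun i _ ↦ by module
    have hstar : ∀ (A : ι → Matrix m m ℝ) (_ : ∀ i, star (A i) = -A i) (y : ι → ℝ),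
        star (∑ i, y i • A i) = -∑ i, y i • A i := fun A hA y ↦ by simp [hA, star_sum]
    obtain rfl | hs := eq_or_ne s 0
    · simpa using hX.isUnit x hx
    · rw [hsum]
      exact isUnit_add_of_skew_of_anticomm (hstar X hX.star_left _) (hstar Z hZ.star_left _)
        (sum_smul_anticomm hXZ _ _) (hZ.isUnit (s • x) (smul_ne_zero hs hx))

variable [DecidableEq ι]

lemma IsEllipticPair.isOddFredholm_matrixDirac (h : IsEllipticPair X Y) :
    IsOddFredholm (parity ι _) (matrixDirac X Y) := by
  let φ : Matrix m m ℝ →⋆ₐ[ℝ] (EuclideanSpace ℝ m →L[ℝ] EuclideanSpace ℝ m) :=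
    toEuclideanCLM (n := m) (𝕜 := ℝ)
  have hφ : IsEllipticPair (φ ∘ X) (φ ∘ Y) := h.map φ
  exact hφ.isOddFredholm_dirac

lemma IsCliffordPair.two_pow_card_mul_gradedIndex_matrixDirac (h : IsCliffordPair X Y) :
    2 ^ Fintype.card ι * gradedIndex (matrixDirac X Y) (parity ι _) = Fintype.card m := by
  let φ : Matrix m m ℝ →⋆ₐ[ℝ] (EuclideanSpace ℝ m →L[ℝ] EuclideanSpace ℝ m) :=
    toEuclideanCLM (n := m) (𝕜 := ℝ)
  have hφ : IsCliffordPair (φ ∘ X) (φ ∘ Y) := h.map φ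
  rw [← finrank_euclideanSpace (𝕜 := ℝ) (ι := m)]
  exact hφ.two_pow_card_mul_gradedIndex_dirac

lemma IsEllipticPair.gradedIndex_eq_of_anticomm (hX : IsEllipticPair X Y)
    (hZ : IsEllipticPair Z Y) (hXZ : ∀ i j, X i * Z j = -(Z j * X i)) :
    gradedIndex (matrixDirac X Y) (parity ι _) = gradedIndex (matrixDirac Z Y) (parity ι _) := by
  have hcont : Continuous fun s : ℝ ↦ matrixDirac (fun i ↦ (1 - s) • X i + s • Z i) Y := by
    simp only [matrixDirac, dirac, diracSum, Function.comp_apply, map_add, map_smul]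
    fun_prop
  simpa using gradedIndex_eq_of_path hcont
    (fun s ↦ (hX.lineMap hZ hXZ s).isOddFredholm_matrixDirac) 0 1

end Deformation

section Kronecker

variable {m κ R : Type*} [CommRing R] (A : Matrix m m R) (B : Matrix κ κ R)

lemma star_kronecker [StarRing R] : star (A ⊗ₖ B) = star A ⊗ₖ star B :=
  conjTranspose_kronecker A B

lemma neg_kronecker : (-A) ⊗ₖ B = -(A ⊗ₖ B) := by
  ext; simp

lemma kronecker_neg : A ⊗ₖ (-B) = -(A ⊗ₖ B) := by
  ext; simp

end Kronecker

section CliffordSystem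

/-- Anticommuting elements `e a` with `e a ^ 2 = s a`, self-adjoint or skew-adjoint according to the
sign `s a = ±1`: a representation of a real Clifford algebra by orthogonal generators. -/
structure IsCliffordSystem {I R : Type*} [Ring R] [StarRing R] (s : I → ℤˣ) (e : I → R) :
    Prop where
  star_apply a : star (e a) = s a • e a
  sq a : e a * e a = s a • (1 : R)
  anticomm a b : a ≠ b → e a * e b = -(e b * e a)

lemma IsCliffordSystem.comp {I I' R : Type*} [Ring R] [StarRing R] {s : I → ℤˣ} {e : I → R}
    (h : IsCliffordSystem s e) {f : I' → I} (hf : f.Injective) :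
    IsCliffordSystem (s ∘ f) (e ∘ f) where
  star_apply a := h.star_apply (f a)
  sq a := h.sq (f a)
  anticomm a b hab := h.anticomm (f a) (f b) (hf.ne hab)

lemma isUnit_sum_smul_of_mul_self_eq_neg_one {ι R : Type*} [Fintype ι] [Ring R] [Algebra ℝ R]
    {Z : ι → R} (hsq : ∀ i, Z i * Z i = -1) (hanti : ∀ i j, i ≠ j → Z i * Z j = -(Z j * Z i))
    {x : ι → ℝ} (hx : x ≠ 0) : IsUnit (∑ i, x i • Z i) := by
  have hnorm : (∑ i, x i • Z i) * ∑ i, x i • Z i = algebraMap ℝ R (-∑ i, x i * x i) := by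
    have h := sum_mul_self_eq_sum_mul_self (b := fun i ↦ algebraMap ℝ R (x i)) hanti
      (fun i j _ ↦ Algebra.commute_algebraMap_left _ _)
      (fun i j ↦ Algebra.commute_algebraMap_right _ _)
    simpa [← Algebra.commutes, ← Algebra.smul_def, hsq] using h
  have hpos : 0 < ∑ i, x i * x i := by
    obtain ⟨i, hi⟩ := Function.ne_iff.1 hx
    exact Finset.sum_pos' (fun i _ ↦ mul_self_nonneg (x i))
      ⟨i, Finset.mem_univ i, mul_self_pos.2 hi⟩
  exact isUnit_mul_self_iff.1
    (hnorm ▸ (IsUnit.mk0 _ (neg_ne_zero.2 hpos.ne')).map (algebraMap ℝ R))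

variable {ι m κ : Type*} [Fintype ι] [Fintype m] [DecidableEq m] [Fintype κ] [DecidableEq κ]
  {X Y : ι → Matrix m m ℝ}

lemma isUnit_sum_smul_kronecker {B : Matrix κ κ ℝ} {x : ι → ℝ} (hX : IsUnit (∑ i, x i • X i))
    (hB : IsUnit B) : IsUnit (∑ i, x i • (X i ⊗ₖ B)) := by
  have hsum : ∑ i, x i • (X i ⊗ₖ B) = (∑ i, x i • X i) ⊗ₖ B := by
    ext
    simp [Matrix.sum_apply, Finset.sum_mul, mul_assoc]
  exact hsum ▸ hX.kronecker hB

lemma IsEllipticPair.kronecker (h : IsEllipticPair X Y) {B : Matrix κ κ ℝ} (hB : star B = B)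
    (hBB : B * B = 1) : IsEllipticPair (fun i ↦ X i ⊗ₖ B) (fun i ↦ Y i ⊗ₖ B) where
  star_left i := by rw [star_kronecker, h.star_left, hB, neg_kronecker]
  star_right i := by rw [star_kronecker, h.star_right, hB]
  sq_right i := by rw [← mul_kronecker_mul, h.sq_right, hBB, one_kronecker_one]
  anticomm_right i j hij := by
    rw [← mul_kronecker_mul, ← mul_kronecker_mul, h.anticomm_right i j hij, neg_kronecker]
  anticomm i j := by rw [← mul_kronecker_mul, ← mul_kronecker_mul, h.anticomm, neg_kronecker]
  isUnit x hx := isUnit_sum_smul_kronecker (h.isUnit x hx) (.of_mul_eq_one B hBB)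

variable {e : Option ι → Matrix κ κ ℝ}

lemma IsEllipticPair.isCliffordPair_kronecker (h : IsEllipticPair X Y)
    (he : IsCliffordSystem (1 : Option ι → ℤˣ) e) :
    IsCliffordPair (fun i ↦ (1 : Matrix m m ℝ) ⊗ₖ (e none * e (some i)))
      (fun i ↦ Y i ⊗ₖ e none) := by
  have hstar : ∀ a, star (e a) = e a := fun a ↦ by simpa using he.star_apply a
  have hsq : ∀ a, e a * e a = 1 := fun a ↦ by simpa using he.sq a
  have hprod : ∀ i j, e none * e (some i) * (e none * e (some j)) = -(e (some i) * e (some j)) :=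
    fun i j ↦ by
      rw [he.anticomm none (some i) nofun, neg_mul, mul_assoc, ← mul_assoc (e none), hsq, one_mul]
  have hsq_left : ∀ i, (1 : Matrix m m ℝ) ⊗ₖ (e none * e (some i)) *
      (1 ⊗ₖ (e none * e (some i))) = -1 := fun i ↦ by
    rw [← mul_kronecker_mul, hprod, hsq, kronecker_neg, mul_one, one_kronecker_one]
  have hanti_left : ∀ i j, i ≠ j → (1 : Matrix m m ℝ) ⊗ₖ (e none * e (some i)) *
      (1 ⊗ₖ (e none * e (some j))) = -(1 ⊗ₖ (e none * e (some j)) *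
      (1 ⊗ₖ (e none * e (some i)))) := fun i j hij ↦ by
    rw [← mul_kronecker_mul, ← mul_kronecker_mul, hprod, hprod,
      he.anticomm (some i) (some j) (by simpa using hij), kronecker_neg, kronecker_neg]
  exact
  { star_left i := by
      rw [star_kronecker, star_one, star_mul, hstar, hstar, he.anticomm (some i) none nofun,
        kronecker_neg]
    star_right := (h.kronecker (hstar none) (hsq none)).star_right
    sq_right := (h.kronecker (hstar none) (hsq none)).sq_right
    anticomm_right := (h.kronecker (hstar none) (hsq none)).anticomm_right
    anticomm i j := by
      rw [← mul_kronecker_mul, ← mul_kronecker_mul, mul_assoc, he.anticomm (some i) none nofun,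
        mul_neg, kronecker_neg, one_mul, mul_one]
    isUnit x hx := isUnit_sum_smul_of_mul_self_eq_neg_one hsq_left hanti_left hx
    sq_left := hsq_left
    anticomm_left := hanti_left }

lemma IsEllipticPair.two_pow_card_mul_gradedIndex_matrixDirac [DecidableEq ι] [Nonempty κ]
    (h : IsEllipticPair X Y) (he : IsCliffordSystem (1 : Option ι → ℤˣ) e) :
    2 ^ Fintype.card ι * gradedIndex (matrixDirac X Y) (parity ι _) = Fintype.card m := by
  have hstar : star (e none) = e none := by simpa using he.star_apply none
  have hsq : e none * e none = 1 := by simpa using he.sq none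
  have hcliff := h.isCliffordPair_kronecker he
  have hXZ : ∀ i j, X i ⊗ₖ e none * (1 ⊗ₖ (e none * e (some j))) =
      -(1 ⊗ₖ (e none * e (some j)) * (X i ⊗ₖ e none)) := fun i j ↦ by
    rw [← mul_kronecker_mul, ← mul_kronecker_mul, mul_assoc, he.anticomm (some j) none nofun,
      mul_neg, kronecker_neg, one_mul, mul_one, neg_neg]
  have hindex := hcliff.two_pow_card_mul_gradedIndex_matrixDirac
  have : FiniteDimensional ℝ (matrixDirac X Y).ker :=
    h.isOddFredholm_matrixDirac.isBoundedBelowModFinite.finiteDimensional_ker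
  rw [← (h.kronecker hstar hsq).gradedIndex_eq_of_anticomm hcliff.toIsEllipticPair hXZ,
    gradedIndex_matrixDirac_kronecker hsq, Fintype.card_prod, mul_left_comm] at hindex
  refine mul_left_cancel₀ (a := (Fintype.card κ : ℤ)) (mod_cast Fintype.card_ne_zero) ?_
  rw [hindex, Nat.cast_mul, mul_comm]

end CliffordSystem

/-! ### Dimensions of Clifford modules -/

section CliffordModule

/-- Anticommuting square roots of `-1` in a ring. In `End ℝ W` they make `W` a module over the
Clifford algebra of a negative definite form. -/
structure IsCliffordModule {Q R : Type*} [Ring R] (J : Q → R) : Prop where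
  sq a : J a * J a = -1
  anticomm a b : a ≠ b → J a * J b = -(J b * J a)

namespace IsCliffordModule

lemma comp {Q Q' R : Type*} [Ring R] {J : Q → R} (h : IsCliffordModule J) {f : Q' → Q}
    (hf : f.Injective) : IsCliffordModule (J ∘ f) where
  sq a := h.sq (f a)
  anticomm a b hab := h.anticomm (f a) (f b) (hf.ne hab)

lemma map {Q R S : Type*} [Ring R] [Ring S] {J : Q → R} (h : IsCliffordModule J) (φ : R →+* S) :
    IsCliffordModule (φ ∘ J) where
  sq a := by simp [← map_mul, h.sq]
  anticomm a b hab := by simp [← map_mul, ← map_neg, h.anticomm a b hab]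

variable {W : Type*} [AddCommGroup W] [Module ℝ W]

lemma restrict {Q : Type*} {J : Q → End ℝ W} (h : IsCliffordModule J) {U : Submodule ℝ W}
    (hU : ∀ a, ∀ w ∈ U, J a w ∈ U) : IsCliffordModule fun a ↦ (J a).restrict (hU a) where
  sq a := by ext w; exact congr($(h.sq a) w)
  anticomm a b hab := by ext w; exact congr($(h.anticomm a b hab) w)

section Products

variable {Q R : Type*} [Ring R] {J : Q → R} {a b c : Q}

lemma mul_mul_mul_self (h : IsCliffordModule J) (hab : a ≠ b) : J a * J b * (J a * J b) = -1 := by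
  rw [mul_assoc, ← mul_assoc (J b), h.anticomm b a hab.symm, neg_mul, mul_neg, mul_assoc (J a),
    h.sq, mul_neg_one, mul_neg, h.sq, neg_neg]

lemma commute_mul (h : IsCliffordModule J) (hab : a ≠ b) (hac : a ≠ c) :
    Commute (J a) (J b * J c) := by
  rw [commute_iff_eq, ← mul_assoc, h.anticomm a b hab, neg_mul, mul_assoc, h.anticomm a c hac,
    mul_neg, neg_neg, mul_assoc]

lemma mul_succ {n : ℕ} {J : Fin (n + 1) → R} (h : IsCliffordModule J) :
    IsCliffordModule fun a : Fin n ↦ J 0 * J a.succ where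
  sq a := h.mul_mul_mul_self (Fin.succ_ne_zero a).symm
  anticomm a b hab := by
    have hmul : ∀ a b : Fin n, J 0 * J a.succ * (J 0 * J b.succ) = J a.succ * J b.succ :=
      fun a b ↦ by
        rw [h.anticomm 0 a.succ (Fin.succ_ne_zero a).symm, neg_mul, mul_assoc, ← mul_assoc (J 0),
          h.sq, neg_one_mul, mul_neg, neg_neg]
    rw [hmul, hmul, h.anticomm a.succ b.succ (by simpa using hab)]

end Products

lemma two_dvd_finrank [FiniteDimensional ℝ W] {J : Fin 1 → End ℝ W} (h : IsCliffordModule J) :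
    2 ∣ finrank ℝ W := by
  have hdet : LinearMap.det (J 0) * LinearMap.det (J 0) = (-1) ^ finrank ℝ W := by
    have hneg : (-1 : End ℝ W) = (-1 : ℝ) • 1 := by simp
    rw [← map_mul, h.sq, hneg, LinearMap.det_smul, map_one, mul_one]
  rw [← even_iff_two_dvd, ← Nat.not_odd_iff_even]
  intro hodd
  rw [hodd.neg_one_pow] at hdet
  linarith [mul_self_nonneg (LinearMap.det (J 0))]

lemma four_dvd_finrank {J : Fin 2 → End ℝ W} (h : IsCliffordModule J) : 4 ∣ finrank ℝ W := by
  let basis : QuaternionAlgebra.Basis (End ℝ W) (-1 : ℝ) 0 (-1) :=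
    { i := J 0, j := J 1, k := J 0 * J 1
      i_mul_i := by simp [h.sq]
      j_mul_j := by simp [h.sq]
      i_mul_j := rfl
      j_mul_i := by simp [h.anticomm 1 0] }
  let φ := QuaternionAlgebra.lift basis
  let _ : Module (Quaternion ℝ) W := Module.compHom W φ.toRingHom
  have : IsScalarTower ℝ (Quaternion ℝ) W := ⟨fun r x v ↦ congr($(map_smul φ r x) v)⟩
  have hdim := finrank_mul_finrank ℝ (Quaternion ℝ) W
  rw [Quaternion.finrank_eq_four] at hdim
  exact ⟨_, hdim.symm⟩

-- The volume element `τ` splits `W` into two halves swapped by `J 0`, and each half is a module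
-- over the quaternions generated by `J 0 * J 1` and `J 0 * J 2`.
lemma eight_dvd_finrank [FiniteDimensional ℝ W] {J : Fin 4 → End ℝ W} (h : IsCliffordModule J) :
    8 ∣ finrank ℝ W := by
  obtain ⟨K, hK, hJK⟩ : ∃ K : Fin 3 → End ℝ W, IsCliffordModule K ∧
      ∀ a, K a * J 0 = -(J 0 * K a) := by
    refine ⟨_, h.mul_succ, fun a ↦ ?_⟩
    rw [mul_assoc, h.anticomm a.succ 0 (Fin.succ_ne_zero a), mul_neg]
  let τ : End ℝ W := K 0 * (K 1 * K 2)
  have hK0 : Commute (K 0) (K 1 * K 2) := hK.commute_mul (by decide) (by decide)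
  have hsq : τ * τ = 1 := by
    rw [hK0.symm.mul_mul_mul_comm, hK.sq, hK.mul_mul_mul_self (by decide), neg_mul_neg, one_mul]
  have hanti : τ * J 0 = -(J 0 * τ) := by
    rw [mul_assoc, mul_assoc, hJK, mul_neg, ← mul_assoc (K 1), hJK, neg_mul, neg_neg, mul_assoc,
      ← mul_assoc, hJK, neg_mul, mul_assoc]
  have hJinj : Function.Injective (J 0) := fun v w hvw ↦ by
    have hneg : ∀ v, J 0 (J 0 v) = -v := fun v ↦ congr($(h.sq 0) v)
    rw [← neg_inj, ← hneg, hvw, hneg]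
  have hcomm : ∀ a : Fin 2, Commute τ (K a.castSucc) := by
    refine Fin.forall_fin_two.2 ⟨((Commute.refl _).mul_right hK0).symm, ?_⟩
    change τ * K 1 = K 1 * τ
    rw [mul_assoc, mul_assoc, hK.anticomm 2 1 (by decide), ← mul_assoc (K 1),
      hK.anticomm 1 0 (by decide), mul_neg, mul_neg, neg_mul, mul_assoc]
  have hhalf := finrank_eq_two_mul_finrank_inf_eigenspace hsq hJinj hanti (W := ⊤)
    (fun _ _ ↦ trivial) (fun _ _ ↦ trivial)
  have hquat : 4 ∣ finrank ℝ ↥(⊤ ⊓ End.eigenspace τ 1) := by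
    rw [top_inf_eq]
    exact ((hK.comp (Fin.castSucc_injective 2)).restrict fun a v hv ↦
      (End.mapsTo_genEigenspace_of_comm (hcomm a) 1 1) hv).four_dvd_finrank
  rw [finrank_top] at hhalf
  omega

lemma two_pow_dvd_finrank [FiniteDimensional ℝ W] {Q : Type*} [Fintype Q] {J : Q → End ℝ W}
    (h : IsCliffordModule J) {r : ℕ} (hr : r ≤ 2) (hQ : Fintype.card Q = 2 ^ r) :
    2 ^ (r + 1) ∣ finrank ℝ W := by
  have hJ : IsCliffordModule (J ∘ (Fintype.equivFinOfCardEq hQ).symm) := h.comp (Equiv.injective _)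
  interval_cases r
  · exact hJ.two_dvd_finrank
  · exact hJ.four_dvd_finrank
  · exact hJ.eight_dvd_finrank

end IsCliffordModule

end CliffordModule

/-! ### Symmetries of the kernel -/

section Symmetry

variable {ι m κ Q : Type*} [Fintype ι] [DecidableEq ι] [Fintype m] [DecidableEq m]
  {X Y : ι → Matrix m m ℝ} {C : Q → Matrix m m ℝ}

lemma IsCliffordModule.exists_matrixDiracKer (hC : IsCliffordModule C)
    (hX : ∀ a i, C a * X i = -(X i * C a)) (hY : ∀ a i, C a * Y i = -(Y i * C a)) (e : ℝ) :
    ∃ J : Q → End ℝ (matrixDiracKer X Y e), IsCliffordModule J := by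
  let Φ : Matrix m m ℝ →⋆ₐ[ℝ]
      (FockSpace ι (EuclideanSpace ℝ m) →L[ℝ] FockSpace ι (EuclideanSpace ℝ m)) :=
    (coeffHom (ι → ℕ) (EuclideanSpace ℝ m)).comp (toEuclideanCLM (n := m) (𝕜 := ℝ))
  have hsymbol (B : Matrix m m ℝ) (A : ι → Matrix m m ℝ) (hBA : ∀ i, B * A i = -(A i * B)) (i : ι) :
      Φ B * Φ (A i) = -(Φ (A i) * Φ B) := by
    rw [← map_mul, hBA, map_neg, map_mul]
  have hanti : ∀ a, Φ (C a) * matrixDirac X Y = -(matrixDirac X Y * Φ (C a)) := fun a ↦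
    mul_diracSum_eq_neg (hsymbol (C a) X (hX a)) (hsymbol (C a) Y (hY a))
      (fun i ↦ commute_coeffHom_lowering _) (fun i ↦ commute_coeffHom_star_lowering _)
  have hmaps : ∀ a, ∀ u ∈ matrixDiracKer X Y e, Φ (C a) u ∈ matrixDiracKer X Y e := by
    intro a u hu
    obtain ⟨hker, hpar⟩ := mem_gradedKer.1 hu
    have hdirac : Φ (C a) (matrixDirac X Y u) = -matrixDirac X Y (Φ (C a) u) := congr($(hanti a) u)
    refine mem_gradedKer.2 ⟨?_, ?_⟩
    · rw [← neg_eq_zero, ← hdirac, hker, map_zero]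
    · rw [← map_smul, ← hpar]
      ext α : 2
      exact (map_smul (toEuclideanCLM (𝕜 := ℝ) (C a)) _ _).symm
  exact ⟨_, ((hC.map Φ.toRingHom).map toLinearMapRingHom).restrict hmaps⟩

lemma IsEllipticPair.two_pow_card_mul_dvd_card [Fintype κ] [DecidableEq κ] [Nonempty κ]
    {ε : Option ι → Matrix κ κ ℝ} (h : IsEllipticPair X Y)
    (hε : IsCliffordSystem (1 : Option ι → ℤˣ) ε) {d : ℕ}
    (hd : ∀ e, d ∣ finrank ℝ (matrixDiracKer X Y e)) :
    2 ^ Fintype.card ι * d ∣ Fintype.card m := by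
  have hindex := h.two_pow_card_mul_gradedIndex_matrixDirac hε
  rw [← Int.natCast_dvd_natCast, ← hindex]
  push_cast
  exact mul_dvd_mul_left _
    (dvd_sub (Int.natCast_dvd_natCast.2 (hd _)) (Int.natCast_dvd_natCast.2 (hd _)))

end Symmetry

section SkewFamily

/-- The sign of a generator of the Clifford algebra of signature `(P, Q)`: the generators indexed by
`P` square to `1`, those indexed by `Q` to `-1`. -/
abbrev cliffordSign (P Q : Type*) : P ⊕ Q → ℤˣ := Sum.elim 1 (-1)

variable {ι m κ Q : Type*} [Fintype ι] [Fintype m] [DecidableEq m] [Fintype κ] [DecidableEq κ]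
  {φ : ι → Matrix m m ℝ} {e : Option ι ⊕ Q → Matrix κ κ ℝ}

lemma IsCliffordSystem.isEllipticPair_kronecker (he : IsCliffordSystem (cliffordSign _ Q) e)
    (hφ : ∀ i, star (φ i) = -φ i) (hunit : ∀ x : ι → ℝ, x ≠ 0 → IsUnit (∑ i, x i • φ i)) :
    IsEllipticPair (fun i ↦ φ i ⊗ₖ e (.inl none))
      (fun i ↦ (1 : Matrix m m ℝ) ⊗ₖ e (.inl (some i))) := by
  have hstar : ∀ a, star (e (.inl a)) = e (.inl a) := fun a ↦ by simpa using he.star_apply (.inl a)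
  have hsq : ∀ a, e (.inl a) * e (.inl a) = 1 := fun a ↦ by simpa using he.sq (.inl a)
  exact
  { star_left i := by rw [star_kronecker, hφ, hstar, neg_kronecker]
    star_right i := by rw [star_kronecker, hstar, star_one]
    sq_right i := by rw [← mul_kronecker_mul, hsq, mul_one, one_kronecker_one]
    anticomm_right i j hij := by
      rw [← mul_kronecker_mul, ← mul_kronecker_mul, he.anticomm _ _ (by simpa using hij),
        kronecker_neg]
    anticomm i j := by
      rw [← mul_kronecker_mul, ← mul_kronecker_mul,
        he.anticomm (.inl none) (.inl (some j)) nofun, kronecker_neg, mul_one, one_mul]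
    isUnit x hx := isUnit_sum_smul_kronecker (hunit x hx) (.of_mul_eq_one _ (hsq none)) }

/-- The symmetries of the Dirac operator of `φ i ⊗ ω`, `1 ⊗ γ i` coming from a complex structure `I`
anticommuting with the `φ i` and from the skew generators of the Clifford system. -/
def kernelSymmetry (I : Matrix m m ℝ) (e : Option ι ⊕ Q → Matrix κ κ ℝ) :
    Option Q → Matrix (m × κ) (m × κ) ℝ
  | none => I ⊗ₖ e (.inl none)
  | some a => 1 ⊗ₖ e (.inr a)

variable {I : Matrix m m ℝ}

omit [Fintype ι] in
lemma IsCliffordSystem.isCliffordModule_kernelSymmetry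
    (he : IsCliffordSystem (cliffordSign _ Q) e) (hI : I * I = -1) :
    IsCliffordModule (kernelSymmetry I e) where
  sq
    | none => by
      have hω : e (.inl none) * e (.inl none) = 1 := by simpa using he.sq (.inl none)
      rw [kernelSymmetry, ← mul_kronecker_mul, hI, hω, neg_kronecker, one_kronecker_one]
    | some a => by
      have hJ : e (.inr a) * e (.inr a) = -1 := by simpa using he.sq (.inr a)
      rw [kernelSymmetry, ← mul_kronecker_mul, hJ, mul_one, kronecker_neg, one_kronecker_one]
  anticomm
    | none, none, h => (h rfl).elim
    | none, some b, _ => by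
      rw [kernelSymmetry, kernelSymmetry, ← mul_kronecker_mul, ← mul_kronecker_mul,
        he.anticomm (.inl none) (.inr b) nofun, kronecker_neg, mul_one, one_mul]
    | some a, none, _ => by
      rw [kernelSymmetry, kernelSymmetry, ← mul_kronecker_mul, ← mul_kronecker_mul,
        he.anticomm (.inr a) (.inl none) nofun, kronecker_neg, mul_one, one_mul]
    | some a, some b, h => by
      rw [kernelSymmetry, kernelSymmetry, ← mul_kronecker_mul, ← mul_kronecker_mul,
        he.anticomm _ _ (by simpa using h), kronecker_neg]

omit [Fintype ι] in
lemma IsCliffordSystem.kernelSymmetry_mul_left (he : IsCliffordSystem (cliffordSign _ Q) e)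
    (hIφ : ∀ i, I * φ i = -(φ i * I)) (a : Option Q) (i : ι) :
    kernelSymmetry I e a * (φ i ⊗ₖ e (.inl none)) =
      -((φ i ⊗ₖ e (.inl none)) * kernelSymmetry I e a) := by
  cases a with
  | none => rw [kernelSymmetry, ← mul_kronecker_mul, ← mul_kronecker_mul, hIφ, neg_kronecker]
  | some a =>
    rw [kernelSymmetry, ← mul_kronecker_mul, ← mul_kronecker_mul,
      he.anticomm (.inr a) (.inl none) nofun, kronecker_neg, mul_one, one_mul]

omit [Fintype ι] in
lemma IsCliffordSystem.kernelSymmetry_mul_right (he : IsCliffordSystem (cliffordSign _ Q) e)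
    (a : Option Q) (i : ι) :
    kernelSymmetry I e a * (1 ⊗ₖ e (.inl (some i))) =
      -((1 ⊗ₖ e (.inl (some i))) * kernelSymmetry I e a) := by
  cases a with
  | none =>
    rw [kernelSymmetry, ← mul_kronecker_mul, ← mul_kronecker_mul,
      he.anticomm (.inl none) (.inl (some i)) nofun, kronecker_neg, mul_one, one_mul]
  | some a =>
    rw [kernelSymmetry, ← mul_kronecker_mul, ← mul_kronecker_mul,
      he.anticomm (.inr a) (.inl (some i)) nofun, kronecker_neg]

lemma IsCliffordSystem.two_pow_dvd_card_mul_card [Fintype Q] [Nonempty κ]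
    (he : IsCliffordSystem (cliffordSign _ Q) e) (hφ : ∀ i, star (φ i) = -φ i)
    (hunit : ∀ x : ι → ℝ, x ≠ 0 → IsUnit (∑ i, x i • φ i)) (hI : I * I = -1)
    (hIφ : ∀ i, I * φ i = -(φ i * I)) {r : ℕ} (hr : r ≤ 2)
    (hQ : Fintype.card (Option Q) = 2 ^ r) :
    2 ^ (Fintype.card ι + (r + 1)) ∣ Fintype.card m * Fintype.card κ := by
  classical
  have hpair := he.isEllipticPair_kronecker hφ hunit
  rw [pow_add, ← Fintype.card_prod]
  refine hpair.two_pow_card_mul_dvd_card (he.comp Sum.inl_injective) fun s ↦ ?_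
  have hker := hpair.isOddFredholm_matrixDirac.isBoundedBelowModFinite.finiteDimensional_ker
  have : FiniteDimensional ℝ (matrixDiracKer (fun i ↦ φ i ⊗ₖ e (.inl none))
      (fun i ↦ (1 : Matrix m m ℝ) ⊗ₖ e (.inl (some i))) s) :=
    Submodule.finiteDimensional_of_le inf_le_left
  obtain ⟨J, hJ⟩ := (he.isCliffordModule_kernelSymmetry hI).exists_matrixDiracKer
    (he.kernelSymmetry_mul_left hIφ) he.kernelSymmetry_mul_right s
  exact hJ.two_pow_dvd_finrank hr hQ

end SkewFamily

/-! ### Construction of Clifford systems -/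

section PauliString

variable {σ : Type*} [Fintype σ]

/-- The tensor product of the `2 × 2` matrices `Z ^ a i * X ^ b i`, where `p = (a, b)`, `Z` is
diagonal with entries `1, -1` and `X` swaps the basis vectors. The basis vectors of the tensor
product are indexed by the functions `σ → ZMod 2`. -/
def pauliString (p : (σ → ZMod 2) × (σ → ZMod 2)) : Matrix (σ → ZMod 2) (σ → ZMod 2) ℝ :=
  of fun r c ↦ if c = r + p.2 then ((-1 : ℤˣ) ^ (p.1 ⬝ᵥ r)) • 1 else 0

/-- The exponent of the sign by which two Pauli strings commute. -/
def pauliSymplectic (p q : (σ → ZMod 2) × (σ → ZMod 2)) : ZMod 2 := p.1 ⬝ᵥ q.2 + q.1 ⬝ᵥ p.2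

variable (p q : (σ → ZMod 2) × (σ → ZMod 2))

lemma transpose_pauliString :
    (pauliString p)ᵀ = ((-1 : ℤˣ) ^ (p.1 ⬝ᵥ p.2)) • pauliString p := by
  ext r c
  have hswap : r = c + p.2 ↔ c = r + p.2 := by
    rw [← sub_eq_iff_eq_add, ZModModule.sub_eq_add, eq_comm]
  simp only [pauliString, transpose_apply, of_apply, Matrix.smul_apply, hswap]
  split_ifs with h
  · rw [h, dotProduct_add, uzpow_add, smul_smul, mul_comm]
  · simp

lemma pauliString_zero : pauliString (0 : (σ → ZMod 2) × (σ → ZMod 2)) = 1 := by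
  ext r c
  simp [pauliString, one_apply, eq_comm]

variable [DecidableEq σ]

lemma pauliString_mul :
    pauliString p * pauliString q = ((-1 : ℤˣ) ^ (q.1 ⬝ᵥ p.2)) • pauliString (p + q) := by
  ext r c
  rw [Matrix.mul_apply, Finset.sum_eq_single (r + p.2)]
  · simp only [pauliString, of_apply, Matrix.smul_apply, if_true, Prod.snd_add, Prod.fst_add,
      add_assoc]
    split_ifs
    · rw [dotProduct_add, add_dotProduct, uzpow_add, uzpow_add, smul_mul_smul, smul_smul, mul_one]
      rw [← mul_assoc, mul_comm]
    · simp
  · intro s _ hs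
    simp [pauliString, hs]
  · simp

lemma pauliString_mul_self :
    pauliString p * pauliString p = ((-1 : ℤˣ) ^ (p.1 ⬝ᵥ p.2)) • 1 := by
  rw [pauliString_mul, ZModModule.add_self, pauliString_zero]

lemma pauliString_mul_comm :
    pauliString p * pauliString q =
      ((-1 : ℤˣ) ^ pauliSymplectic p q) • (pauliString q * pauliString p) := by
  rw [pauliString_mul, pauliString_mul, smul_smul, pauliSymplectic, ← uzpow_add, add_comm q p,
    add_right_comm, CharTwo.add_self_eq_zero, zero_add]

lemma isCliffordSystem_pauliString {I : Type*} {P : I → (σ → ZMod 2) × (σ → ZMod 2)}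
    (hP : ∀ a b, a ≠ b → pauliSymplectic (P a) (P b) = 1) :
    IsCliffordSystem (fun a ↦ (-1 : ℤˣ) ^ ((P a).1 ⬝ᵥ (P a).2)) (fun a ↦ pauliString (P a)) where
  star_apply a := by rw [star_eq_conjTranspose, conjTranspose_eq_transpose_of_trivial,
    transpose_pauliString]
  sq a := pauliString_mul_self (P a)
  anticomm a b hab := by rw [pauliString_mul_comm, hP a b hab, uzpow_one, Units.neg_smul, one_smul]

end PauliString

/-- Existence of `p` symmetric and `q` skew, pairwise anticommuting orthogonal matrices of size
`G`. -/
def HasCliffordSystem (p q G : ℕ) : Prop :=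
  ∃ (κ : Type) (_ : Fintype κ) (_ : DecidableEq κ) (e : Fin p ⊕ Fin q → Matrix κ κ ℝ),
    Fintype.card κ = G ∧ IsCliffordSystem (cliffordSign _ _) e

lemma hasCliffordSystem_one_zero (G : ℕ) : HasCliffordSystem 1 0 G := by
  refine ⟨Fin G, inferInstance, inferInstance, 1, Fintype.card_fin G, ?_⟩
  constructor <;> simp +contextual [eq_iff_true_of_subsingleton]

lemma hasCliffordSystem_two_one : HasCliffordSystem 2 1 (2 ^ 1) := by
  let P : Fin 2 ⊕ Fin 1 → (Fin 1 → ZMod 2) × (Fin 1 → ZMod 2) :=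
    Sum.elim ![(![0], ![1]), (![1], ![0])] ![(![1], ![1])]
  have hsign : (fun a ↦ (-1 : ℤˣ) ^ ((P a).1 ⬝ᵥ (P a).2)) = cliffordSign _ _ := by decide
  exact ⟨_, inferInstance, inferInstance, _, by simp,
    hsign ▸ isCliffordSystem_pauliString (P := P) (by decide)⟩

lemma hasCliffordSystem_four_three : HasCliffordSystem 4 3 (2 ^ 3) := by
  let P : Fin 4 ⊕ Fin 3 → (Fin 3 → ZMod 2) × (Fin 3 → ZMod 2) :=
    Sum.elim
      ![(![0, 0, 0], ![0, 0, 1]), (![0, 0, 1], ![0, 0, 0]), (![0, 1, 1], ![0, 1, 1]),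
        (![1, 0, 1], ![1, 1, 1])]
      ![(![0, 0, 1], ![1, 1, 1]), (![0, 1, 1], ![0, 0, 1]), (![1, 0, 1], ![0, 1, 1])]
  have hsign : (fun a ↦ (-1 : ℤˣ) ^ ((P a).1 ⬝ᵥ (P a).2)) = cliffordSign _ _ := by decide
  exact ⟨_, inferInstance, inferInstance, _, by simp,
    hsign ▸ isCliffordSystem_pauliString (P := P) (by decide)⟩

lemma exists_isCliffordSystem_nine :
    ∃ e : Option (Fin 8) → Matrix (Fin 4 → ZMod 2) (Fin 4 → ZMod 2) ℝ, IsCliffordSystem 1 e := by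
  let P : Option (Fin 8) → (Fin 4 → ZMod 2) × (Fin 4 → ZMod 2) := fun a ↦
    a.elim (![1, 1, 1, 1], ![0, 1, 0, 1])
      ![(![0, 0, 0, 0], ![0, 0, 0, 1]), (![0, 0, 0, 1], ![0, 0, 0, 0]),
        (![0, 0, 1, 1], ![0, 0, 1, 1]), (![0, 1, 0, 1], ![0, 1, 1, 1]),
        (![0, 1, 1, 1], ![1, 1, 0, 1]), (![1, 0, 0, 1], ![1, 1, 1, 1]),
        (![1, 0, 1, 1], ![1, 0, 0, 1]), (![1, 1, 0, 1], ![1, 0, 1, 1])]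
  have hsign : (fun a ↦ (-1 : ℤˣ) ^ ((P a).1 ⬝ᵥ (P a).2)) = 1 := by decide
  exact ⟨_, hsign ▸ isCliffordSystem_pauliString (P := P) (by decide)⟩

lemma IsCliffordSystem.kronecker {I ι m κ : Type*} [Fintype m] [DecidableEq m] [Fintype κ]
    [DecidableEq κ] {s : I → ℤˣ} {e : I → Matrix m m ℝ} {ε : Option ι → Matrix κ κ ℝ}
    (he : IsCliffordSystem s e) (hε : IsCliffordSystem 1 ε) :
    IsCliffordSystem (Sum.elim s 1)
      (Sum.elim (fun a ↦ e a ⊗ₖ ε none) (fun i ↦ (1 : Matrix m m ℝ) ⊗ₖ ε (some i))) := by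
  have hstar : ∀ a, star (ε a) = ε a := fun a ↦ by simpa using hε.star_apply a
  have hsq : ∀ a, ε a * ε a = 1 := fun a ↦ by simpa using hε.sq a
  refine ⟨?_, ?_, ?_⟩
  · rintro (a | i)
    · simp only [Sum.elim_inl, star_kronecker, he.star_apply, hstar, smul_kronecker]
    · simp only [Sum.elim_inr, star_kronecker, star_one, hstar, Pi.one_apply, one_smul]
  · rintro (a | i)
    · simp only [Sum.elim_inl, ← mul_kronecker_mul, he.sq, hsq, smul_kronecker, one_kronecker_one]
    · simp only [Sum.elim_inr, ← mul_kronecker_mul, mul_one, hsq, one_kronecker_one, Pi.one_apply,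
        one_smul]
  · rintro (a | i) (b | j) hij
    · simp only [Sum.elim_inl, ← mul_kronecker_mul, he.anticomm a b (by simpa using hij),
        neg_kronecker]
    · simp only [Sum.elim_inl, Sum.elim_inr, ← mul_kronecker_mul, hε.anticomm none (some j) nofun,
        kronecker_neg, mul_one, one_mul]
    · simp only [Sum.elim_inl, Sum.elim_inr, ← mul_kronecker_mul, hε.anticomm (some i) none nofun,
        kronecker_neg, mul_one, one_mul]
    · simp only [Sum.elim_inr, ← mul_kronecker_mul,
        hε.anticomm (some i) (some j) (by simpa using hij), kronecker_neg]

namespace HasCliffordSystem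

variable {p q G : ℕ}

lemma add_eight (h : HasCliffordSystem p q G) : HasCliffordSystem (p + 8) q (G * 16) := by
  obtain ⟨κ, _, _, e, hG, he⟩ := h
  obtain ⟨ε, hε⟩ := exists_isCliffordSystem_nine
  let f : Fin (p + 8) ⊕ Fin q ≃ (Fin p ⊕ Fin q) ⊕ Fin 8 :=
    (finSumFinEquiv.symm.sumCongr (.refl _)).trans <| (Equiv.sumAssoc _ _ _).trans <|
      ((Equiv.refl _).sumCongr (.sumComm _ _)).trans (Equiv.sumAssoc _ _ _).symm
  have hsign : Sum.elim (cliffordSign (Fin p) (Fin q)) 1 ∘ f = cliffordSign _ _ := by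
    ext (a | b)
    · obtain ⟨a | a, rfl⟩ := finSumFinEquiv.surjective a <;> simp [f]
    · simp [f]
  refine ⟨_, inferInstance, inferInstance, _, ?_, hsign ▸ (he.kronecker hε).comp f.injective⟩
  simp [hG]

lemma add_eight_mul {g : ℕ} (h : HasCliffordSystem p q (2 ^ g)) (j : ℕ) :
    HasCliffordSystem (8 * j + p) q (2 ^ (4 * j + g)) := by
  induction j with
  | zero => simpa using h
  | succ j ih => convert ih.add_eight using 1 <;> ring

end HasCliffordSystem

/-! ### The upper bound -/

section UpperBound

variable {m : Type*}

/-- The real matrix, in the coordinates `(re, im)`, of the conjugate-linear map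
`v ↦ A *ᵥ star v`. -/
def conjLinearMatrix : Matrix m m ℂ →ₗ[ℝ] Matrix (m ⊕ m) (m ⊕ m) ℝ where
  toFun A := fromBlocks (A.map Complex.re) (A.map Complex.im) (A.map Complex.im)
    (-A.map Complex.re)
  map_add' A B := by ext (i | i) (j | j) <;> simp [add_comm]
  map_smul' c A := by ext (i | i) (j | j) <;> simp

lemma transpose_conjLinearMatrix (A : Matrix m m ℂ) :
    (conjLinearMatrix A)ᵀ = conjLinearMatrix Aᵀ := by
  ext (i | i) (j | j) <;> simp [conjLinearMatrix]

lemma conjLinearMatrix_mul_conjLinearMatrix [Fintype m] (A B : Matrix m m ℂ) :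
    conjLinearMatrix A * conjLinearMatrix B =
      fromBlocks ((A * B.map star).map Complex.re) (-(A * B.map star).map Complex.im)
        ((A * B.map star).map Complex.im) ((A * B.map star).map Complex.re) := by
  ext (i | i) (j | j) <;>
    simp [conjLinearMatrix, Matrix.mul_apply, Finset.sum_add_distrib, sub_eq_add_neg, add_comm]

variable [Fintype m] [DecidableEq m]

lemma isUnit_conjLinearMatrix {A : Matrix m m ℂ} (hA : IsUnit A) : IsUnit (conjLinearMatrix A) := by
  obtain ⟨B, hB⟩ := hA.exists_right_inv
  refine .of_mul_eq_one (conjLinearMatrix (B.map star)) ?_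
  have hstar : (B.map star).map star = B := by ext; simp
  rw [conjLinearMatrix_mul_conjLinearMatrix, hstar, hB, ← fromBlocks_one]
  congr 1 <;> ext i j <;> by_cases hij : i = j <;> simp [one_apply, hij]

/-- Multiplication by `i` on `ℂ^m`, in the coordinates `(re, im)`. -/
def complexStructureMatrix (m : Type*) [DecidableEq m] : Matrix (m ⊕ m) (m ⊕ m) ℝ :=
  fromBlocks 0 (-1) 1 0

lemma complexStructureMatrix_mul_self :
    complexStructureMatrix m * complexStructureMatrix m = -1 := by
  simp [complexStructureMatrix, fromBlocks_multiply, ← fromBlocks_one, fromBlocks_neg]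

lemma complexStructureMatrix_mul_conjLinearMatrix (A : Matrix m m ℂ) :
    complexStructureMatrix m * conjLinearMatrix A =
      -(conjLinearMatrix A * complexStructureMatrix m) := by
  simp [complexStructureMatrix, conjLinearMatrix, fromBlocks_multiply, fromBlocks_neg]

/-- A real-linear map to skew-symmetric complex matrices that is invertible off zero. -/
structure IsNonsingularSkew {V : Type*} [AddCommGroup V] [Module ℝ V]
    (f : V →ₗ[ℝ] Matrix m m ℂ) : Prop where
  transpose_apply v : (f v)ᵀ = -f v
  isUnit v : v ≠ 0 → IsUnit (f v)

variable {V : Type*} [AddCommGroup V] [Module ℝ V] {f : V →ₗ[ℝ] Matrix m m ℂ}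

lemma IsNonsingularSkew.two_pow_dvd_card {n p q g r d : ℕ} (h : IsNonsingularSkew f)
    (hn : n ≤ finrank ℝ V)
    (hC : HasCliffordSystem p q (2 ^ g)) (hp : n < p) (hr : r ≤ 2) (hq : q + 1 = 2 ^ r)
    (hd : n + r = d + g) : 2 ^ d ∣ Fintype.card m := by
  obtain ⟨κ, _, _, e, hκ, he⟩ := hC
  have : Nonempty κ := Fintype.card_pos_iff.1 (hκ ▸ Nat.two_pow_pos g)
  obtain ⟨b, hb⟩ := exists_linearIndependent_of_le_finrank hn
  let ι : Option (Fin n) ⊕ Fin q → Fin p ⊕ Fin q :=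
    Sum.map (fun a ↦ Fin.castLE hp ((finSuccEquiv n).symm a)) id
  have hι : ι.Injective :=
    ((Fin.castLE_injective hp).comp (Equiv.injective _)).sumMap Function.injective_id
  have hsign : cliffordSign (Fin p) (Fin q) ∘ ι = cliffordSign _ _ := by ext (a | a) <;> rfl
  have hunit (x : Fin n → ℝ) (hx : x ≠ 0) : IsUnit (∑ i, x i • conjLinearMatrix (f (b i))) := by
    have hne : ∑ i, x i • b i ≠ 0 := fun h0 ↦
      hx (funext (Fintype.linearIndependent_iff.1 hb x h0))
    simpa using isUnit_conjLinearMatrix (h.isUnit _ hne)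
  have hskew (i : Fin n) : star (conjLinearMatrix (f (b i))) = -conjLinearMatrix (f (b i)) := by
    rw [star_eq_conjTranspose, conjTranspose_eq_transpose_of_trivial, transpose_conjLinearMatrix,
      h.transpose_apply, map_neg]
  have hdvd := (hsign ▸ he.comp hι).two_pow_dvd_card_mul_card hskew hunit
    complexStructureMatrix_mul_self (fun i ↦ complexStructureMatrix_mul_conjLinearMatrix _) hr
    (by simpa using hq)
  rw [Fintype.card_fin, Fintype.card_sum, hκ, ← two_mul, ← add_assoc, hd, pow_succ', pow_add,
    mul_assoc] at hdvd
  exact Nat.dvd_of_mul_dvd_mul_right (Nat.two_pow_pos g) (Nat.dvd_of_mul_dvd_mul_left two_pos hdvd)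

/-- The value of `ρ (N / 8) + 6` when `N` has `2`-adic valuation `k`. -/
def auYeungNumber (k : ℕ) : ℕ :=
  8 * (k / 4) + if k % 4 = 0 then 0 else if k % 4 = 1 then 2 else if k % 4 = 2 then 6 else 7

lemma IsNonsingularSkew.finrank_le_auYeungNumber (h : IsNonsingularSkew f)
    (hm : Fintype.card m ≠ 0) : finrank ℝ V ≤ auYeungNumber (padicValNat 2 (Fintype.card m)) := by
  set k := padicValNat 2 (Fintype.card m)
  refine le_of_not_gt fun hlt ↦ pow_succ_padicValNat_not_dvd (p := 2) hm ?_
  rw [auYeungNumber] at hlt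
  split_ifs at hlt
  · exact h.two_pow_dvd_card (n := 8 * (k / 4) + 1) (r := 1) (by lia)
      (hasCliffordSystem_two_one.add_eight_mul (k / 4)) (by lia) (by lia) rfl (by lia)
  · exact h.two_pow_dvd_card (n := 8 * (k / 4) + 3) (r := 2) (by lia)
      (hasCliffordSystem_four_three.add_eight_mul (k / 4)) (by lia) (by lia) rfl (by lia)
  · exact h.two_pow_dvd_card (n := 8 * (k / 4) + 7) (r := 0) (by lia)
      ((hasCliffordSystem_one_zero (2 ^ 0)).add_eight_mul (k / 4 + 1)) (by lia) (by lia) rfl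
      (by lia)
  · exact h.two_pow_dvd_card (n := 8 * (k / 4) + 8) (r := 0) (by lia)
      ((hasCliffordSystem_one_zero (2 ^ 0)).add_eight_mul (k / 4 + 1)) (by lia) (by lia) rfl
      (by lia)

end UpperBound

/-! ### The lower bound -/

section LowerBound

variable {ι κ κ' : Type*} [Fintype κ] [DecidableEq κ] [Fintype κ'] [DecidableEq κ']

/-- Skew-symmetric unitary matrices whose real combinations `∑ i, x i • F i` are multiples of
unitary matrices. -/
structure IsHurwitzFamily (F : ι → Matrix κ κ ℂ) : Prop where
  transpose_apply i : (F i)ᵀ = -F i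
  mul_conjTranspose_self i : F i * (F i)ᴴ = 1
  mul_conjTranspose i j : i ≠ j → F i * (F j)ᴴ = -(F j * (F i)ᴴ)

lemma IsHurwitzFamily.comp {ι' : Type*} {F : ι → Matrix κ κ ℂ} (h : IsHurwitzFamily F)
    {g : ι' → ι} (hg : g.Injective) : IsHurwitzFamily (F ∘ g) where
  transpose_apply i := h.transpose_apply (g i)
  mul_conjTranspose_self i := h.mul_conjTranspose_self (g i)
  mul_conjTranspose i j hij := h.mul_conjTranspose (g i) (g j) (hg.ne hij)

lemma conjTranspose_mapMatrix_ofRealHom (A : Matrix κ κ ℝ) :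
    (Complex.ofRealHom.mapMatrix A)ᴴ = Complex.ofRealHom.mapMatrix (star A) := by
  ext i j
  simp

lemma transpose_mapMatrix_ofRealHom (A : Matrix κ κ ℝ) :
    (Complex.ofRealHom.mapMatrix A)ᵀ = Complex.ofRealHom.mapMatrix (star A) := by
  ext i j
  simp

/-- A Hurwitz family together with a Clifford system gives a larger one: one member `F none` is
replaced by the matrices `F none ⊗ e a`. -/
def cliffordExtension {P : Type*} (F : Option ι → Matrix κ κ ℂ) (e : P → Matrix κ' κ' ℝ) :
    ι ⊕ P → Matrix (κ × κ') (κ × κ') ℂ :=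
  Sum.elim (fun i ↦ F (some i) ⊗ₖ 1) (fun a ↦ F none ⊗ₖ Complex.ofRealHom.mapMatrix (e a))

lemma IsHurwitzFamily.isHurwitzFamily_cliffordExtension {P : Type*} {F : Option ι → Matrix κ κ ℂ}
    {e : P → Matrix κ' κ' ℝ} (hF : IsHurwitzFamily F) (he : IsCliffordSystem 1 e) :
    IsHurwitzFamily (cliffordExtension F e) := by
  have hstar : ∀ a, star (e a) = e a := fun a ↦ by simpa using he.star_apply a
  have hsq : ∀ a, e a * e a = 1 := fun a ↦ by simpa using he.sq a
  refine ⟨?_, ?_, ?_⟩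
  · rintro (i | a)
    · simp only [cliffordExtension, Sum.elim_inl, ← kroneckerMap_transpose, transpose_one,
        hF.transpose_apply, neg_kronecker]
    · simp only [cliffordExtension, Sum.elim_inr, ← kroneckerMap_transpose,
        transpose_mapMatrix_ofRealHom, hstar, hF.transpose_apply, neg_kronecker]
  · rintro (i | a)
    · simp only [cliffordExtension, Sum.elim_inl, conjTranspose_kronecker,
        ← mul_kronecker_mul, hF.mul_conjTranspose_self, conjTranspose_one, one_mul,
        one_kronecker_one]
    · simp only [cliffordExtension, Sum.elim_inr, conjTranspose_kronecker,
        ← mul_kronecker_mul, hF.mul_conjTranspose_self, conjTranspose_mapMatrix_ofRealHom, hstar,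
        ← map_mul, hsq, map_one, one_kronecker_one]
  · rintro (i | a) (j | b) hij <;>
      simp only [cliffordExtension, Sum.elim_inl, Sum.elim_inr, conjTranspose_kronecker,
        ← mul_kronecker_mul, conjTranspose_mapMatrix_ofRealHom, conjTranspose_one, hstar, one_mul,
        mul_one]
    · rw [hF.mul_conjTranspose (some i) (some j) (by simpa using hij), neg_kronecker]
    · rw [hF.mul_conjTranspose (some i) none nofun, neg_kronecker]
    · rw [hF.mul_conjTranspose none (some j) nofun, neg_kronecker]
    · rw [← map_mul, he.anticomm a b (by simpa using hij), map_neg, map_mul, kronecker_neg]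

lemma IsCliffordSystem.isHurwitzFamily {P Q : Type*} {L : P → Matrix κ κ ℝ} {R : Q → Matrix κ κ ℝ}
    (hL : IsCliffordSystem (-1) L) (hR : IsCliffordSystem (-1) R)
    (hLR : ∀ a b, Commute (L a) (R b)) :
    IsHurwitzFamily (Sum.elim (fun a ↦ Complex.ofRealHom.mapMatrix (L a))
      (fun b ↦ Complex.I • Complex.ofRealHom.mapMatrix (R b))) := by
  have hL_star : ∀ a, star (L a) = -L a := fun a ↦ by simpa using hL.star_apply a
  have hR_star : ∀ b, star (R b) = -R b := fun b ↦ by simpa using hR.star_apply b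
  have hL_sq : ∀ a, L a * L a = -1 := fun a ↦ by simpa using hL.sq a
  have hR_sq : ∀ b, R b * R b = -1 := fun b ↦ by simpa using hR.sq b
  refine ⟨?_, ?_, ?_⟩
  · rintro (a | b) <;>
      simp only [Sum.elim_inl, Sum.elim_inr, transpose_smul, transpose_mapMatrix_ofRealHom, hL_star,
        hR_star, map_neg, smul_neg]
  · rintro (a | b) <;>
      simp only [Sum.elim_inl, Sum.elim_inr, conjTranspose_smul, conjTranspose_mapMatrix_ofRealHom,
        hL_star, hR_star, smul_mul_smul, ← map_mul, mul_neg, hL_sq, hR_sq, neg_neg, map_one]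
    simp
  · rintro (a | a) (b | b) hab <;>
      simp only [Sum.elim_inl, Sum.elim_inr, conjTranspose_smul, conjTranspose_mapMatrix_ofRealHom,
        hL_star, hR_star, smul_mul_assoc, mul_smul_comm, ← map_mul, mul_neg]
    · rw [hL.anticomm a b (by simpa using hab), map_neg]
    · rw [hLR a b]
      simp
    · rw [hLR b a]
      simp
    · rw [hR.anticomm a b (by simpa using hab), map_neg]
      simp

/-- Existence of a Hurwitz family of `n` matrices of size `N`. -/
def HasHurwitzFamily (N n : ℕ) : Prop :=
  ∃ F : Fin n → Matrix (Fin N) (Fin N) ℂ, IsHurwitzFamily F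

lemma IsHurwitzFamily.hasHurwitzFamily [Fintype ι] {F : ι → Matrix κ κ ℂ} (h : IsHurwitzFamily F)
    {N n : ℕ} (hN : Fintype.card κ = N) (hn : n ≤ Fintype.card ι) : HasHurwitzFamily N n := by
  let φ : Matrix κ κ ℂ ≃ₐ[ℂ] Matrix (Fin N) (Fin N) ℂ :=
    reindexAlgEquiv ℂ ℂ (Fintype.equivFinOfCardEq hN)
  have hφ (A : Matrix κ κ ℂ) : (φ A)ᴴ = φ Aᴴ := conjTranspose_reindex _ _ A
  let g : Fin n ↪ ι := (Fin.castLEEmb hn).trans (Fintype.equivFin ι).symm.toEmbedding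
  have hg := h.comp g.injective
  refine ⟨fun i ↦ φ (F (g i)), fun i ↦ ?_, fun i ↦ ?_, fun i j hij ↦ ?_⟩
  · rw [← map_neg]
    exact congrArg φ (hg.transpose_apply i)
  · rw [hφ, ← map_mul, ← map_one φ]
    exact congrArg φ (hg.mul_conjTranspose_self i)
  · rw [hφ, hφ, ← map_mul, ← map_mul, ← map_neg]
    exact congrArg φ (hg.mul_conjTranspose i j hij)

lemma hasHurwitzFamily_zero (N : ℕ) : HasHurwitzFamily N 0 :=
  ⟨nofun, nofun, nofun, nofun⟩

lemma hasHurwitzFamily_pauliString {k a b : ℕ} (L : Fin a → (Fin k → ZMod 2) × (Fin k → ZMod 2))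
    (R : Fin b → (Fin k → ZMod 2) × (Fin k → ZMod 2))
    (hL : ∀ i, (L i).1 ⬝ᵥ (L i).2 = 1) (hR : ∀ i, (R i).1 ⬝ᵥ (R i).2 = 1)
    (hLL : ∀ i j, i ≠ j → pauliSymplectic (L i) (L j) = 1)
    (hRR : ∀ i j, i ≠ j → pauliSymplectic (R i) (R j) = 1)
    (hLR : ∀ i j, pauliSymplectic (L i) (R j) = 0) : HasHurwitzFamily (2 ^ k) (a + b) := by
  have hL_sign : (fun i ↦ (-1 : ℤˣ) ^ ((L i).1 ⬝ᵥ (L i).2)) = -1 := by ext; simp [hL]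
  have hR_sign : (fun i ↦ (-1 : ℤˣ) ^ ((R i).1 ⬝ᵥ (R i).2)) = -1 := by ext; simp [hR]
  refine ((hL_sign ▸ isCliffordSystem_pauliString hLL).isHurwitzFamily
    (hR_sign ▸ isCliffordSystem_pauliString hRR) fun i j ↦ ?_).hasHurwitzFamily ?_ ?_
  · rw [Commute, SemiconjBy, pauliString_mul_comm, hLR, uzpow_zero, one_smul]
  · simp
  · simp

lemma hasHurwitzFamily_two_two : HasHurwitzFamily (2 ^ 1) 2 :=
  hasHurwitzFamily_pauliString (a := 1) (b := 1) ![(![1], ![1])] ![(![1], ![1])]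
    (by decide) (by decide) (by decide) (by decide) (by decide)

lemma hasHurwitzFamily_four_six : HasHurwitzFamily (2 ^ 2) 6 :=
  hasHurwitzFamily_pauliString (a := 3) (b := 3)
    ![(![0, 1], ![0, 1]), (![1, 0], ![1, 1]), (![1, 1], ![1, 0])]
    ![(![0, 1], ![1, 1]), (![1, 0], ![1, 0]), (![1, 1], ![0, 1])]
    (by decide) (by decide) (by decide) (by decide) (by decide)

lemma HasHurwitzFamily.mul_of_hasCliffordSystem {N n p q G : ℕ} (h : HasHurwitzFamily N (n + 1))
    (hC : HasCliffordSystem p q G) : HasHurwitzFamily (N * G) (n + p) := by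
  obtain ⟨F, hF⟩ := h
  obtain ⟨κ, _, _, e, hG, he⟩ := hC
  refine ((hF.comp (finSuccEquiv n).symm.injective).isHurwitzFamily_cliffordExtension
    (he.comp Sum.inl_injective)).hasHurwitzFamily ?_ ?_ <;> simp [hG]

lemma hasHurwitzFamily_eight_seven : HasHurwitzFamily (2 ^ 3) 7 :=
  hasHurwitzFamily_four_six.mul_of_hasCliffordSystem hasCliffordSystem_two_one

lemma hasHurwitzFamily_sixteen_eight : HasHurwitzFamily (2 ^ 4) 8 :=
  hasHurwitzFamily_eight_seven.mul_of_hasCliffordSystem hasCliffordSystem_two_one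

lemma HasHurwitzFamily.of_two_pow_dvd {b n N : ℕ} (h : HasHurwitzFamily (2 ^ b) (n + 1)) (j : ℕ)
    (hN : 2 ^ (4 * j + b) ∣ N) : HasHurwitzFamily N (8 * j + (n + 1)) := by
  obtain ⟨t, rfl⟩ := hN
  have hperiodic : HasHurwitzFamily (2 ^ b * 2 ^ (4 * j + 0)) (n + (8 * j + 1)) :=
    h.mul_of_hasCliffordSystem ((hasCliffordSystem_one_zero (2 ^ 0)).add_eight_mul j)
  convert hperiodic.mul_of_hasCliffordSystem (n := n + 8 * j) (hasCliffordSystem_one_zero t)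
    using 1 <;> ring

lemma hasHurwitzFamily_auYeungNumber (N : ℕ) :
    HasHurwitzFamily N (auYeungNumber (padicValNat 2 N)) := by
  have hdvd : 2 ^ padicValNat 2 N ∣ N := pow_padicValNat_dvd
  set k := padicValNat 2 N
  have hk := Nat.div_add_mod k 4
  rw [auYeungNumber]
  split_ifs with h0 h1 h2
  · rcases Nat.eq_zero_or_pos (k / 4) with hzero | hpos
    · simpa [hzero] using hasHurwitzFamily_zero N
    · obtain ⟨j, hj⟩ := Nat.exists_eq_add_one.2 hpos
      rw [← hk, h0, hj] at hdvd
      simpa [hj, mul_add] using hasHurwitzFamily_sixteen_eight.of_two_pow_dvd j hdvd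
  · rw [← hk, h1] at hdvd
    exact hasHurwitzFamily_two_two.of_two_pow_dvd _ hdvd
  · rw [← hk, h2] at hdvd
    exact hasHurwitzFamily_four_six.of_two_pow_dvd _ hdvd
  · rw [← hk, show k % 4 = 3 by lia] at hdvd
    exact hasHurwitzFamily_eight_seven.of_two_pow_dvd _ hdvd

end LowerBound

/-! ### The value of the Hurwitz–Radon number -/

lemma HasHurwitzFamily.mono {N n n' : ℕ} (h : HasHurwitzFamily N n') (hn : n ≤ n') :
    HasHurwitzFamily N n :=
  let ⟨F, hF⟩ := h
  ⟨F ∘ Fin.castLE hn, hF.comp (Fin.castLE_injective hn)⟩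

lemma IsHurwitzFamily.sum_smul_mul_conjTranspose {ι κ : Type*} [Fintype ι] [Fintype κ]
    [DecidableEq κ] {F : ι → Matrix κ κ ℂ} (h : IsHurwitzFamily F) (x : ι → ℝ) :
    (∑ i, x i • F i) * (∑ i, x i • F i)ᴴ = (∑ i, x i ^ 2) • 1 := by
  have hterm : ∀ i j, x i • F i * (x j • F j)ᴴ = (x i * x j) • (F i * (F j)ᴴ) := fun i j ↦ by
    rw [conjTranspose_smul, star_trivial, smul_mul_smul_comm]
  have hcross : ∀ i j, i ≠ j →
      (x i * x j) • (F i * (F j)ᴴ) + (x j * x i) • (F j * (F i)ᴴ) = 0 := fun i j hij ↦ by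
    rw [h.mul_conjTranspose i j hij, mul_comm (x j), smul_neg, neg_add_cancel]
  simp only [conjTranspose_sum, Finset.sum_mul_sum, hterm, sum_sum_eq_sum_diag hcross,
    h.mul_conjTranspose_self, ← sq, Finset.sum_smul]

lemma HasHurwitzFamily.exists_linearMap {N n : ℕ} (h : HasHurwitzFamily N n) :
    ∃ f : EuclideanSpace ℝ (Fin n) →ₗ[ℝ] Matrix (Fin N) (Fin N) ℂ,
      ∀ v, (f v)ᵀ = -f v ∧ f v * (f v)ᴴ = (‖v‖ ^ 2 : ℝ) • 1 := by
  obtain ⟨F, hF⟩ := h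
  refine ⟨Fintype.linearCombination ℝ F ∘ₗ (WithLp.linearEquiv 2 ℝ (Fin n → ℝ)).toLinearMap,
    fun v ↦ ⟨?_, ?_⟩⟩
  · simp [Fintype.linearCombination_apply, transpose_sum, transpose_smul, hF.transpose_apply]
  · simpa [Fintype.linearCombination_apply, EuclideanSpace.norm_sq_eq] using
      hF.sum_smul_mul_conjTranspose v.ofLp

lemma isUnit_of_mul_conjTranspose_eq_smul_one {κ : Type*} [Fintype κ] [DecidableEq κ]
    {A : Matrix κ κ ℂ} {c : ℝ} (hc : c ≠ 0) (hA : A * Aᴴ = c • 1) : IsUnit A :=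
  IsUnit.of_mul_eq_one (c⁻¹ • Aᴴ) <| by
    rw [Matrix.mul_smul, hA, smul_smul, inv_mul_cancel₀ hc, one_smul]

lemma padicValRat_two_natCast_div_eight {N : ℕ} (hN : N ≠ 0) :
    padicValRat 2 ((N : ℚ) / 8) = padicValNat 2 N - 3 := by
  have h8 : padicValRat 2 (8 : ℚ) = 3 := by
    rw [show (8 : ℚ) = ((2 ^ 3 : ℕ) : ℚ) by norm_num, padicValRat.of_nat, padicValNat.prime_pow]
    rfl
  rw [padicValRat.div (Nat.cast_ne_zero.2 hN) (by norm_num), h8, padicValRat.of_nat]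

lemma hrRho_natCast_div_eight_add_six {N : ℕ} (hN : N ≠ 0) :
    hrRho ((N : ℚ) / 8) + 6 = auYeungNumber (padicValNat 2 N) := by
  rw [hrRho, padicValRat_two_natCast_div_eight hN, auYeungNumber]
  generalize padicValNat 2 N = k
  split_ifs with h0 h1 h2
  · rw [show ((k : ℤ) - 3) % 4 = (1 : ℕ) by lia, Int.toNat_natCast]
    lia
  · rw [show ((k : ℤ) - 3) % 4 = (2 : ℕ) by lia, Int.toNat_natCast]
    lia
  · rw [show ((k : ℤ) - 3) % 4 = (3 : ℕ) by lia, Int.toNat_natCast]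
    lia
  · rw [show ((k : ℤ) - 3) % 4 = (0 : ℕ) by lia, Int.toNat_natCast]
    lia

/-- Entry `𝔤 = 𝔰𝔬*(2N)` of the Hurwitz–Radon value theorem:
`ρ⁽¹⁾ = ρ⁽²⁾ = ρ(N/8) + 6`, Au-Yeung's number `ℂ_{sk-s}(N)`. -/
theorem hurwitzRadon_so_star_2N (N : ℕ) (hN : 1 ≤ N) (n : ℕ) :
    ((∃ f : EuclideanSpace ℝ (Fin n) →ₗ[ℝ] Matrix (Fin N) (Fin N) ℂ,
        ∀ v, (f v)ᵀ = -(f v) ∧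
          f v * (f v)ᴴ = (‖v‖ ^ 2 : ℝ) • (1 : Matrix (Fin N) (Fin N) ℂ)) ↔
      (∃ f : EuclideanSpace ℝ (Fin n) →ₗ[ℝ] Matrix (Fin N) (Fin N) ℂ,
        (∀ v, (f v)ᵀ = -(f v)) ∧ ∀ v, v ≠ 0 → IsUnit (f v))) ∧
    ((∃ f : EuclideanSpace ℝ (Fin n) →ₗ[ℝ] Matrix (Fin N) (Fin N) ℂ,
        (∀ v, (f v)ᵀ = -(f v)) ∧ ∀ v, v ≠ 0 → IsUnit (f v)) ↔
      (n : ℤ) ≤ hrRho ((N : ℚ) / 8) + 6) := by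
  have hN0 : N ≠ 0 := by lia
  rw [hrRho_natCast_div_eight_add_six hN0, Nat.cast_le]
  have iff_and_iff_of_cycle {a b c : Prop} (hab : a → b) (hbc : b → c) (hca : c → a) :
      (a ↔ b) ∧ (b ↔ c) := ⟨⟨hab, hca ∘ hbc⟩, hbc, hab ∘ hca⟩
  refine iff_and_iff_of_cycle ?_ ?_ fun hn ↦
    ((hasHurwitzFamily_auYeungNumber N).mono hn).exists_linearMap
  · rintro ⟨f, hf⟩
    exact ⟨f, fun v ↦ (hf v).1, fun v hv ↦ isUnit_of_mul_conjTranspose_eq_smul_one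
      (pow_ne_zero 2 (norm_ne_zero_iff.2 hv)) (hf v).2⟩
  · rintro ⟨f, htranspose, hunit⟩
    simpa using IsNonsingularSkew.finrank_le_auYeungNumber ⟨htranspose, hunit⟩ (by simpa)
end

section
/- Fix 𝔻 ∈ {ℝ, ℂ, ℍ} and N ≥ 1, and let 𝔭 denote the set of Hermitian matrices X ∈ M(2N+1,𝔻) (Xᴴ = X) whose trace has vanishing real part. Then: (i) for every n ≥ 1 there is no ℝ-linear map f : ℝⁿ → 𝔭 with f(v)² = ‖v‖² I_{2N+1} for all v ∈ ℝⁿ (so ρ⁽¹⁾(𝔰𝔩(2N+1,𝔻)) = 0); and (ii) there exists an invertible element of 𝔭 (for example the diagonal matrix diag(2N,−1,…,−1)), but every ℝ-linear map f : ℝ² → 𝔭 has some nonzero v ∈ ℝ² with f(v) not invertible (so ρ⁽²⁾(𝔰𝔩(2N+1,𝔻)) = 1). -/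
open Matrix

/-- The `𝔭`-part of `𝔰𝔩(2N+1,ℝ)`: symmetric real matrices with vanishing trace. -/
def pPartR (M : ℕ) (X : Matrix (Fin M) (Fin M) ℝ) : Prop :=
  Xᴴ = X ∧ Matrix.trace X = 0

/-- The `𝔭`-part of `𝔰𝔩(2N+1,ℂ)`: Hermitian complex matrices whose trace has
vanishing real part. -/
def pPartC (M : ℕ) (X : Matrix (Fin M) (Fin M) ℂ) : Prop :=
  Xᴴ = X ∧ (Matrix.trace X).re = 0

/-- The `𝔭`-part of `𝔰𝔩(2N+1,ℍ)`: quaternionic Hermitian matrices whose trace has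
vanishing real part. -/
def pPartH (M : ℕ) (X : Matrix (Fin M) (Fin M) (Quaternion ℝ)) : Prop :=
  Xᴴ = X ∧ (Matrix.trace X).re = 0

/-!
A matrix `S` of size `n` over a division ring with `S² = 1` is `2E - 1` for an idempotent `E`. A
rank factorization `E = AB` with `BA = 1` shows that any trace functional `τ` (one with
`τ (x y) = τ (y x)`) satisfies `τ (tr S) = (2 rank E - n) τ 1`, so an involution with vanishing
trace exists only in even size. This excludes `f v ^ 2 = ‖v‖²`, by taking `‖v‖ = 1`.

If instead all `f v` with `v ≠ 0` are Hermitian and invertible, then `v ↦ sign (f v)`, defined by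
the continuous functional calculus, is a continuous odd family of involutions on the complement
of the origin. In dimension at least two that complement is connected, so the trace vanishes at
one of these involutions, and the size is again even.
-/

section RankFactorization

variable {D : Type*} [DivisionRing D] {n : Type*} [Fintype n]

theorem exists_mul_eq_and_mul_eq_one_of_isIdempotentElem {E : Matrix n n D}
    (hE : IsIdempotentElem E) :
    ∃ (k : ℕ) (A : Matrix n (Fin k) D) (B : Matrix (Fin k) n D), A * B = E ∧ B * A = 1 := by
  classical
  let p := toLinearMapRight' E
  have hp (w : p.range) : p.rangeRestrict w = w := by
    obtain ⟨_, v, rfl⟩ := w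
    ext1
    simp only [p, LinearMap.codRestrict_apply, toLinearMapRight'_apply, vecMul_vecMul, hE.eq]
  let e := (Module.finBasis D p.range).equivFun
  refine ⟨_, LinearMap.toMatrixRight' (e.toLinearMap ∘ₗ p.rangeRestrict),
    LinearMap.toMatrixRight' (p.range.subtype ∘ₗ e.symm.toLinearMap), ?_, ?_⟩
  · rw [← LinearMap.toMatrixRight'_comp, ← LinearEquiv.eq_symm_apply]
    refine LinearMap.ext fun w ↦ ?_
    simp [p]
  · rw [← LinearMap.toMatrixRight'_comp, ← LinearMap.toMatrixRight'_id]
    congr 1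
    refine LinearMap.ext fun w ↦ ?_
    simp [hp]

theorem map_trace_mul_comm {R G : Type*} [Semiring R] [AddCommMonoid G] (τ : R →+ G)
    (hτ : ∀ x y, τ (x * y) = τ (y * x)) {m : Type*} [Fintype m]
    (A : Matrix n m R) (B : Matrix m n R) : τ (A * B).trace = τ (B * A).trace := by
  simp only [trace, diag_apply, mul_apply, map_sum, hτ (A _ _)]
  exact Finset.sum_comm

theorem exists_map_trace_eq_nsmul_of_isIdempotentElem {G : Type*} [AddCommMonoid G] (τ : D →+ G)
    (hτ : ∀ x y, τ (x * y) = τ (y * x)) {E : Matrix n n D} (hE : IsIdempotentElem E) :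
    ∃ k : ℕ, τ E.trace = k • τ 1 := by
  obtain ⟨k, A, B, hAB, hBA⟩ := exists_mul_eq_and_mul_eq_one_of_isIdempotentElem hE
  refine ⟨k, ?_⟩
  rw [← hAB, map_trace_mul_comm τ hτ, hBA, trace_one, Fintype.card_fin, ← nsmul_one, map_nsmul]

theorem even_card_of_mul_self_eq_one [DecidableEq n] {K : Type*} [Field K] [CharZero K]
    [Algebra K D] (τ : D →ₗ[K] K) (hτ : ∀ x y, τ (x * y) = τ (y * x)) (hτ1 : τ 1 ≠ 0)
    {S : Matrix n n D} (hS : S * S = 1) (htr : τ S.trace = 0) : Even (Fintype.card n) := by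
  have hE : IsIdempotentElem ((2⁻¹ : K) • (1 + S)) := by
    have hsq : (1 + S) * (1 + S) = (2 : K) • (1 + S) := by
      rw [mul_add, add_mul, add_mul, hS, two_smul]
      noncomm_ring
    rw [IsIdempotentElem, smul_mul_smul_comm, hsq, smul_smul, inv_mul_cancel_right₀ two_ne_zero]
  obtain ⟨k, hk⟩ := exists_map_trace_eq_nsmul_of_isIdempotentElem (τ : D →+ K) hτ hE
  have hcard : τ (Fintype.card n : D) = Fintype.card n * τ 1 := by
    rw [← nsmul_one, map_nsmul, nsmul_eq_mul]
  have hrank : (Fintype.card n : K) * τ 1 = (k + k : ℕ) * τ 1 := by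
    simp only [AddMonoidHom.coe_coe, trace_smul, trace_add, trace_one, map_smul, map_add, htr,
      hcard, add_zero, smul_eq_mul, nsmul_eq_mul] at hk
    push_cast
    linear_combination 2 * hk
  exact ⟨k, by exact_mod_cast mul_right_cancel₀ hτ1 hrank⟩

end RankFactorization

section Sign

theorem continuousOn_sign : ContinuousOn Real.sign {0}ᶜ := by
  have h : Set.EqOn Real.sign (fun x ↦ x / |x|) {0}ᶜ := fun x (hx : x ≠ 0) ↦ by
    rw [eq_div_iff (abs_ne_zero.2 hx)]
    obtain hx | hx := hx.lt_or_gt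
    · simp [Real.sign_of_neg hx, abs_of_neg hx]
    · simp [Real.sign_of_pos hx, abs_of_pos hx]
  exact (continuousOn_id.div continuous_abs.continuousOn fun x hx ↦ abs_ne_zero.2 hx).congr h

theorem spectrum_subset_compl_zero {R A : Type*} [CommSemiring R] [Ring A] [Algebra R A] {a : A}
    (ha : IsUnit a) : spectrum R a ⊆ {0}ᶜ :=
  Set.subset_compl_singleton_iff.2 (spectrum.zero_notMem R ha)

variable {A : Type*} [CStarAlgebra A]

theorem cfc_sign_mul_self {a : A} (ha : IsSelfAdjoint a) (hu : IsUnit a) :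
    cfc Real.sign a * cfc Real.sign a = 1 := by
  have hcont := continuousOn_sign.mono (spectrum_subset_compl_zero hu)
  rw [← cfc_mul Real.sign Real.sign a, ← cfc_one ℝ a]
  refine cfc_congr fun x hx ↦ ?_
  obtain h | h := Real.sign_apply_eq_of_ne_zero x (spectrum_subset_compl_zero hu hx) <;> simp [h]

theorem cfc_sign_neg {a : A} (ha : IsSelfAdjoint a) (hu : IsUnit a) :
    cfc Real.sign (-a) = -cfc Real.sign a := by
  rw [← cfc_comp_neg Real.sign a (continuousOn_sign.mono ?_), ← cfc_neg]
  · simp only [Real.sign_neg]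
  · rintro _ ⟨x, hx, rfl⟩
    exact neg_ne_zero.2 (spectrum_subset_compl_zero hu hx)

theorem continuousOn_cfc_sign :
    ContinuousOn (cfc Real.sign) {a : A | IsSelfAdjoint a ∧ IsUnit a} :=
  continuousOn_id.cfc_of_mem_nhdsSet Real.sign
    (isOpen_compl_singleton.mem_nhdsSet.2 <| Set.iUnion₂_subset fun _ ha ↦
      spectrum_subset_compl_zero ha.2)
    (fun _ ha ↦ ha.1) continuousOn_sign

variable {V : Type*} [AddCommGroup V] [Module ℝ V] [TopologicalSpace V]
  [IsTopologicalAddGroup V] [ContinuousSMul ℝ V]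

theorem exists_ne_zero_apply_eq_zero_of_odd (hV : 1 < Module.rank ℝ V) {g : V → ℝ}
    (hg : ContinuousOn g {0}ᶜ) (hodd : ∀ v ≠ 0, g (-v) = -g v) : ∃ v ≠ 0, g v = 0 := by
  have hconn := isConnected_compl_singleton_of_one_lt_rank hV 0
  obtain ⟨v, hv⟩ := hconn.nonempty
  have himage : (g '' {0}ᶜ).OrdConnected := (hconn.isPreconnected.image g hg).ordConnected
  suffices 0 ∈ g '' {0}ᶜ from this
  refine himage.uIcc_subset ⟨v, hv, rfl⟩ ⟨-v, neg_ne_zero.2 hv, hodd v hv⟩ ?_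
  rw [Set.mem_uIcc]
  grind

theorem exists_mul_self_eq_one_and_map_eq_zero (hV : 1 < Module.rank ℝ V)
    (S : StarSubalgebra ℝ A) [FiniteDimensional ℝ S]
    (f : V →L[ℝ] S) (hsa : ∀ v, IsSelfAdjoint (f v)) (hu : ∀ v ≠ 0, IsUnit (f v))
    (τ : S →ₗ[ℝ] ℝ) : ∃ s : S, s * s = 1 ∧ τ s = 0 := by
  have : IsClosed (S : Set A) := S.toSubmodule.closed_of_finiteDimensional
  let sgn (v : V) : S := ⟨cfc Real.sign (f v : A), cfc_mem (𝕜' := ℝ) _ (f v).2⟩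
  have hsaA (v : V) : IsSelfAdjoint (f v : A) := (hsa v).map S.subtype
  have huA (v : V) (hv : v ≠ 0) : IsUnit (f v : A) := (hu v hv).map S.subtype
  have hcont : ContinuousOn sgn {0}ᶜ := by
    refine Topology.IsInducing.subtypeVal.continuousOn_iff.2 ?_
    exact continuousOn_cfc_sign.comp (by fun_prop) fun v hv ↦ ⟨hsaA v, huA v hv⟩
  obtain ⟨v, hv, hτv⟩ := exists_ne_zero_apply_eq_zero_of_odd hV (g := fun v ↦ τ (sgn v))
    (τ.continuous_of_finiteDimensional.comp_continuousOn hcont) fun v hv ↦ by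
      rw [← map_neg]
      congr 1
      ext
      simpa [sgn] using cfc_sign_neg (hsaA v) (huA v hv)
  exact ⟨sgn v, Subtype.ext (cfc_sign_mul_self (hsaA v) (huA v hv)), hτv⟩

theorem exists_mul_self_eq_one_and_map_eq_zero_of_injective [T2Space V]
    [FiniteDimensional ℝ V] (hV : 1 < Module.finrank ℝ V)
    {R : Type*} [Ring R] [StarRing R] [Algebra ℝ R] [FiniteDimensional ℝ R]
    (φ : R →⋆ₐ[ℝ] A) (hφ : Function.Injective φ)
    (f : V →ₗ[ℝ] R) (hsa : ∀ v, IsSelfAdjoint (f v)) (hu : ∀ v ≠ 0, IsUnit (f v))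
    (τ : R →ₗ[ℝ] ℝ) : ∃ s : R, s * s = 1 ∧ τ s = 0 := by
  let e : R ≃⋆ₐ[ℝ] φ.range := StarAlgEquiv.ofInjective φ hφ
  have := e.toAlgEquiv.toLinearEquiv.finiteDimensional
  have hV' : 1 < Module.rank ℝ V := Module.one_lt_rank_of_one_lt_finrank hV
  obtain ⟨s, hs, hτs⟩ := exists_mul_self_eq_one_and_map_eq_zero hV' φ.range
    (e.toAlgEquiv.toLinearMap ∘ₗ f).toContinuousLinearMap (fun v ↦ (hsa v).map e)
    (fun v hv ↦ (hu v hv).map e) (τ ∘ₗ e.symm.toAlgEquiv.toLinearMap)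
  exact ⟨e.symm s, by rw [← map_mul, hs, map_one], hτs⟩

end Sign

section MatrixRepresentation

variable {R C D : Type*} [CommSemiring R] [Semiring C] [StarRing C] [Algebra R C]
  [Semiring D] [StarRing D] [Algebra R D]
  {m n : Type*} [Fintype m] [DecidableEq m] [Fintype n] [DecidableEq n]

/-- The block extension of a matrix `⋆`-representation `ψ` of `D`: it applies `ψ` to each entry of
a matrix over `D` and flattens the resulting matrix of blocks. -/
def blockStarAlgHom (n : Type*) [Fintype n] [DecidableEq n] (ψ : D →⋆ₐ[R] Matrix m m C) :
    Matrix n n D →⋆ₐ[R] Matrix (n × m) (n × m) C :=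
  { (compAlgEquiv n m C R).toAlgHom.comp ψ.toAlgHom.mapMatrix with
    map_star' X := by
      ext ⟨i, k⟩ ⟨j, l⟩
      simp [star_eq_conjTranspose, map_star] }

theorem blockStarAlgHom_injective {ψ : D →⋆ₐ[R] Matrix m m C} (hψ : Function.Injective ψ) :
    Function.Injective (blockStarAlgHom n ψ) :=
  (compAlgEquiv n m C R).injective.comp (Matrix.map_injective hψ)

end MatrixRepresentation

section OddSize

variable {D : Type*} [DivisionRing D] [Algebra ℝ D]
  {n : Type*} [Fintype n] [DecidableEq n]
  {V : Type*} [NormedAddCommGroup V] [NormedSpace ℝ V]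

theorem even_card_of_sq_eq_norm_sq_smul_one [Nontrivial V] (τ : D →ₗ[ℝ] ℝ)
    (hτ : ∀ x y, τ (x * y) = τ (y * x)) (hτ1 : τ 1 ≠ 0)
    (f : V → Matrix n n D) (htr : ∀ v, τ (f v).trace = 0)
    (hsq : ∀ v, f v ^ 2 = (‖v‖ ^ 2 : ℝ) • (1 : Matrix n n D)) : Even (Fintype.card n) := by
  obtain ⟨v, hv⟩ := exists_norm_eq V zero_le_one
  refine even_card_of_mul_self_eq_one τ hτ hτ1 (S := f v) ?_ (htr v)
  rw [← sq, hsq, hv, one_pow, one_smul]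

open scoped Matrix.Norms.L2Operator in
theorem exists_ne_zero_not_isUnit_of_odd_card [StarRing D] {m : Type*} [Fintype m] [DecidableEq m]
    [Nonempty m] (ψ : D →⋆ₐ[ℝ] Matrix m m ℂ) (τ : D →ₗ[ℝ] ℝ)
    (hτ : ∀ x y, τ (x * y) = τ (y * x)) (hτ1 : τ 1 ≠ 0) (hn : Odd (Fintype.card n))
    [FiniteDimensional ℝ V] (hV : 1 < Module.finrank ℝ V)
    (f : V →ₗ[ℝ] Matrix n n D) (hf : ∀ v, (f v)ᴴ = f v) : ∃ v, v ≠ 0 ∧ ¬ IsUnit (f v) := by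
  by_contra! hu
  have hinj : Function.Injective (blockStarAlgHom n ψ) :=
    blockStarAlgHom_injective (ψ.toAlgHom : D →+* Matrix m m ℂ).injective
  have : FiniteDimensional ℝ (Matrix n n D) :=
    FiniteDimensional.of_injective (blockStarAlgHom n ψ).toAlgHom.toLinearMap hinj
  obtain ⟨S, hS, hτS⟩ := exists_mul_self_eq_one_and_map_eq_zero_of_injective hV
    (blockStarAlgHom n ψ) hinj f hf hu (τ ∘ₗ traceLinearMap n ℝ D)
  exact Nat.not_even_iff_odd.2 hn (even_card_of_mul_self_eq_one τ hτ hτ1 hS hτS)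

theorem exists_conjTranspose_eq_trace_eq_zero_isUnit (D : Type*) [DivisionRing D] [CharZero D]
    [StarRing D] {M : ℕ} (hM : M ≠ 0) :
    ∃ X : Matrix (Fin (M + 1)) (Fin (M + 1)) D, Xᴴ = X ∧ X.trace = 0 ∧ IsUnit X := by
  let d : Fin (M + 1) → D := Fin.cons (M : D) fun _ ↦ -1
  have hd : IsUnit d := Pi.isUnit_iff.2 <| Fin.cases (by simpa [d]) fun i ↦ by simp [d]
  refine ⟨diagonal d, ?_, ?_, hd.map (diagonalRingHom (Fin (M + 1)) D)⟩
  · rw [diagonal_conjTranspose]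
    congr 1
    ext1 i
    cases i using Fin.cases <;> simp [d]
  · simp [trace_diagonal, Fin.sum_univ_succ, d]

theorem hurwitzRadon_odd_of_matrixRep [StarRing D] {m : Type*} [Fintype m] [DecidableEq m]
    [Nonempty m] (ψ : D →⋆ₐ[ℝ] Matrix m m ℂ) (τ : D →ₗ[ℝ] ℝ)
    (hτ : ∀ x y, τ (x * y) = τ (y * x)) (hτ1 : τ 1 ≠ 0) {N : ℕ} (hN : 1 ≤ N) :
    (∀ n, 1 ≤ n →
        ¬ ∃ f : EuclideanSpace ℝ (Fin n) →ₗ[ℝ] Matrix (Fin (2 * N + 1)) (Fin (2 * N + 1)) D,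
          (∀ v, (f v)ᴴ = f v ∧ τ (f v).trace = 0) ∧
          ∀ v, (f v) ^ 2 = (‖v‖ ^ 2 : ℝ) • (1 : Matrix (Fin (2 * N + 1)) (Fin (2 * N + 1)) D)) ∧
      (∃ X : Matrix (Fin (2 * N + 1)) (Fin (2 * N + 1)) D,
        (Xᴴ = X ∧ τ X.trace = 0) ∧ IsUnit X) ∧
      (∀ f : EuclideanSpace ℝ (Fin 2) →ₗ[ℝ] Matrix (Fin (2 * N + 1)) (Fin (2 * N + 1)) D,
        (∀ v, (f v)ᴴ = f v ∧ τ (f v).trace = 0) → ∃ v, v ≠ 0 ∧ ¬ IsUnit (f v)) := by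
  have hodd : Odd (Fintype.card (Fin (2 * N + 1))) := by simp
  have : CharZero D := charZero_of_injective_algebraMap (algebraMap ℝ D).injective
  refine ⟨fun n hn ⟨f, hf, hsq⟩ ↦ ?_, ?_, fun f hf ↦ ?_⟩
  · have : NeZero n := ⟨by lia⟩
    exact Nat.not_even_iff_odd.2 hodd
      (even_card_of_sq_eq_norm_sq_smul_one τ hτ hτ1 f (fun v ↦ (hf v).2) hsq)
  · obtain ⟨X, hX, htr, hu⟩ :=
      exists_conjTranspose_eq_trace_eq_zero_isUnit D (M := 2 * N) (by lia)
    exact ⟨X, ⟨hX, by rw [htr, map_zero]⟩, hu⟩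
  · exact exists_ne_zero_not_isUnit_of_odd_card ψ τ hτ hτ1 hodd (by simp) f fun v ↦ (hf v).1

end OddSize

section Quaternion

open Quaternion

/-- The realization `i, j, k ↦ √-1 σ₃, √-1 σ₂, √-1 σ₁` of the quaternion units by Pauli matrices,
for use with the universal property of the quaternions. -/
noncomputable def quaternionMatrixBasis :
    QuaternionAlgebra.Basis (Matrix (Fin 2) (Fin 2) ℂ) (-1 : ℝ) 0 (-1) where
  i := !![Complex.I, 0; 0, -Complex.I]
  j := !![0, 1; -1, 0]
  k := !![0, Complex.I; Complex.I, 0]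
  i_mul_i := by ext i j; fin_cases i <;> fin_cases j <;> simp
  j_mul_j := by ext i j; fin_cases i <;> fin_cases j <;> simp
  i_mul_j := by ext i j; fin_cases i <;> fin_cases j <;> simp
  j_mul_i := by ext i j; fin_cases i <;> fin_cases j <;> simp

theorem quaternionMatrixBasis_lift_star (x : ℍ[ℝ,-1,0,-1]) :
    quaternionMatrixBasis.lift (star x) = (quaternionMatrixBasis.lift x)ᴴ := by
  ext i j
  fin_cases i <;> fin_cases j <;>
    simp [QuaternionAlgebra.Basis.lift, quaternionMatrixBasis, algebraMap_matrix_apply]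

/-- The representation of the quaternions by complex `2 × 2` matrices, under which quaternionic
conjugation becomes the conjugate transpose. -/
noncomputable def quaternionMatrixRep : ℍ[ℝ] →⋆ₐ[ℝ] Matrix (Fin 2) (Fin 2) ℂ :=
  { quaternionMatrixBasis.liftHom with
    map_star' := quaternionMatrixBasis_lift_star }

theorem quaternion_re_mul_comm (x y : ℍ[ℝ]) : (x * y).re = (y * x).re := by
  simp only [Quaternion.re_mul]
  ring

end Quaternion

/-- For `𝔻 ∈ {ℝ,ℂ,ℍ}`: (i) `ρ⁽¹⁾(𝔰𝔩(2N+1,𝔻)) = 0`, i.e. for no `n ≥ 1` is there an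
ℝ-linear `f : ℝⁿ → 𝔭` with `f(v)² = ‖v‖² I`; (ii) `ρ⁽²⁾(𝔰𝔩(2N+1,𝔻)) = 1`, i.e. `𝔭`
contains an invertible element, but every ℝ-linear `f : ℝ² → 𝔭` takes a
non-invertible value at some nonzero `v`. -/
theorem hurwitzRadon_sl_odd (N : ℕ) (hN : 1 ≤ N) :
    -- 𝔻 = ℝ
    ((∀ n, 1 ≤ n →
        ¬ ∃ f : EuclideanSpace ℝ (Fin n) →ₗ[ℝ] Matrix (Fin (2 * N + 1)) (Fin (2 * N + 1)) ℝ,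
          (∀ v, pPartR (2 * N + 1) (f v)) ∧
          ∀ v, (f v) ^ 2 = (‖v‖ ^ 2 : ℝ) • (1 : Matrix (Fin (2 * N + 1)) (Fin (2 * N + 1)) ℝ)) ∧
      (∃ X : Matrix (Fin (2 * N + 1)) (Fin (2 * N + 1)) ℝ, pPartR (2 * N + 1) X ∧ IsUnit X) ∧
      (∀ f : EuclideanSpace ℝ (Fin 2) →ₗ[ℝ] Matrix (Fin (2 * N + 1)) (Fin (2 * N + 1)) ℝ,
        (∀ v, pPartR (2 * N + 1) (f v)) → ∃ v, v ≠ 0 ∧ ¬ IsUnit (f v))) ∧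
    -- 𝔻 = ℂ
    ((∀ n, 1 ≤ n →
        ¬ ∃ f : EuclideanSpace ℝ (Fin n) →ₗ[ℝ] Matrix (Fin (2 * N + 1)) (Fin (2 * N + 1)) ℂ,
          (∀ v, pPartC (2 * N + 1) (f v)) ∧
          ∀ v, (f v) ^ 2 = (‖v‖ ^ 2 : ℝ) • (1 : Matrix (Fin (2 * N + 1)) (Fin (2 * N + 1)) ℂ)) ∧
      (∃ X : Matrix (Fin (2 * N + 1)) (Fin (2 * N + 1)) ℂ, pPartC (2 * N + 1) X ∧ IsUnit X) ∧
      (∀ f : EuclideanSpace ℝ (Fin 2) →ₗ[ℝ] Matrix (Fin (2 * N + 1)) (Fin (2 * N + 1)) ℂ,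
        (∀ v, pPartC (2 * N + 1) (f v)) → ∃ v, v ≠ 0 ∧ ¬ IsUnit (f v))) ∧
    -- 𝔻 = ℍ
    ((∀ n, 1 ≤ n →
        ¬ ∃ f : EuclideanSpace ℝ (Fin n) →ₗ[ℝ]
            Matrix (Fin (2 * N + 1)) (Fin (2 * N + 1)) (Quaternion ℝ),
          (∀ v, pPartH (2 * N + 1) (f v)) ∧
          ∀ v, (f v) ^ 2 =
            (‖v‖ ^ 2 : ℝ) • (1 : Matrix (Fin (2 * N + 1)) (Fin (2 * N + 1)) (Quaternion ℝ))) ∧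
      (∃ X : Matrix (Fin (2 * N + 1)) (Fin (2 * N + 1)) (Quaternion ℝ),
        pPartH (2 * N + 1) X ∧ IsUnit X) ∧
      (∀ f : EuclideanSpace ℝ (Fin 2) →ₗ[ℝ]
          Matrix (Fin (2 * N + 1)) (Fin (2 * N + 1)) (Quaternion ℝ),
        (∀ v, pPartH (2 * N + 1) (f v)) → ∃ v, v ≠ 0 ∧ ¬ IsUnit (f v))) := by
  refine ⟨?real, ?complex, ?quaternion⟩
  case real =>
    exact hurwitzRadon_odd_of_matrixRep (StarAlgHom.ofId ℝ (Matrix Unit Unit ℂ)) LinearMap.id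
      mul_comm one_ne_zero hN
  case complex =>
    exact hurwitzRadon_odd_of_matrixRep
      ((StarAlgHom.ofId ℂ (Matrix Unit Unit ℂ)).restrictScalars ℝ) Complex.reLm
      (fun x y ↦ congrArg Complex.re (mul_comm x y)) one_ne_zero hN
  case quaternion =>
    exact hurwitzRadon_odd_of_matrixRep quaternionMatrixRep
      (QuaternionAlgebra.reₗ (R := ℝ) (-1) 0 (-1)) quaternion_re_mul_comm one_ne_zero hN
end

section
/- Let A be a finite-dimensional associative unital ℝ-algebra and let a, b ∈ A. If the element 1 ⊗ a + i ⊗ b is invertible in the complexification ℂ ⊗_ℝ A, then there exists a real number r such that a + r·b is invertible in A. -/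
open TensorProduct

/-!
The norm `N` of an algebra with a finite basis, i.e. the determinant of left multiplication,
detects units and commutes with extension of scalars. Hence
`p = N (1 ⊗ a + X ⊗ b) ∈ K[X]` takes the value `N (1 ⊗ a + z ⊗ b)` at every point `z` of every
commutative `K`-algebra. If this value is a unit for one such `z` in a nontrivial algebra, then
`p ≠ 0`, and over an infinite field `K` a nonzero polynomial has a nonzero value at some `r : K`.
-/

open Polynomial

theorem isUnit_norm_iff {R B : Type*} [CommRing R] [Ring B] [Algebra R B] [Module.Free R B]
    [Module.Finite R B] {x : B} : IsUnit (Algebra.norm R x) ↔ IsUnit x := by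
  rw [Algebra.norm_apply, ← LinearMap.isUnit_iff_isUnit_det, Algebra.lmul_isUnit_iff]

section BaseChange

variable {K R S A ι : Type*} [CommRing K] [CommRing R] [Algebra K R] [CommRing S] [Algebra K S]

theorem baseChange_repr_rTensor {M : Type*} [AddCommGroup M] [Module K M]
    (v : Module.Basis ι K M) (φ : R →ₐ[K] S) (x : R ⊗[K] M) (i : ι) :
    (v.baseChange S).repr (φ.toLinearMap.rTensor M x) i = φ ((v.baseChange R).repr x i) := by
  induction x with
  | zero => simp
  | tmul r m => simp
  | add x y hx hy => simp [hx, hy]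

variable [Ring A] [Algebra K A]

theorem leftMulMatrix_baseChange_map [Fintype ι] [DecidableEq ι] (v : Module.Basis ι K A)
    (φ : R →ₐ[K] S) (x : R ⊗[K] A) :
    Algebra.leftMulMatrix (v.baseChange S) (Algebra.TensorProduct.map φ (AlgHom.id K A) x) =
      φ.mapMatrix (Algebra.leftMulMatrix (v.baseChange R) x) := by
  ext i j
  have map_basis : v.baseChange S j =
      Algebra.TensorProduct.map φ (AlgHom.id K A) (v.baseChange R j) := by simp
  rw [Algebra.leftMulMatrix_eq_repr_mul, map_basis, ← map_mul, AlgHom.mapMatrix_apply,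
    Matrix.map_apply, Algebra.leftMulMatrix_eq_repr_mul]
  exact baseChange_repr_rTensor v φ _ i

theorem norm_baseChange_map [Module.Free K A] [Module.Finite K A] (φ : R →ₐ[K] S)
    (x : R ⊗[K] A) :
    Algebra.norm S (Algebra.TensorProduct.map φ (AlgHom.id K A) x) = φ (Algebra.norm R x) := by
  classical
  let v := Module.Free.chooseBasis K A
  rw [Algebra.norm_eq_matrix_det (v.baseChange S), leftMulMatrix_baseChange_map,
    ← AlgHom.map_det, ← Algebra.norm_eq_matrix_det]

end BaseChange

section Specialization

variable {K L A : Type*} [Field K] [Infinite K] [CommRing L] [Nontrivial L] [Algebra K L]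
  [Ring A] [Algebra K A] [FiniteDimensional K A]

theorem exists_isUnit_map_aeval {x : K[X] ⊗[K] A} {z : L}
    (h : IsUnit (Algebra.TensorProduct.map (aeval z) (AlgHom.id K A) x)) :
    ∃ r : K, IsUnit (Algebra.TensorProduct.map (aeval r) (AlgHom.id K A) x) := by
  have aeval_norm_isUnit : IsUnit (aeval z (Algebra.norm K[X] x)) := by
    rwa [← norm_baseChange_map, isUnit_norm_iff]
  have norm_ne_zero : Algebra.norm K[X] x ≠ 0 := fun h_zero ↦
    aeval_norm_isUnit.ne_zero (by rw [h_zero, map_zero])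
  obtain ⟨r, hr⟩ : ∃ r : K, (Algebra.norm K[X] x).eval r ≠ 0 := by
    by_contra! h_eval
    exact norm_ne_zero (zero_of_eval_zero _ h_eval)
  refine ⟨r, isUnit_norm_iff (R := K).mp ?_⟩
  rw [norm_baseChange_map, coe_aeval_eq_eval]
  exact hr.isUnit

theorem exists_real_invertible_combination_general {a b : A} {z : L}
    (h : IsUnit ((1 : L) ⊗ₜ[K] a + z ⊗ₜ[K] b)) : ∃ r : K, IsUnit (a + r • b) := by
  let pencil : K[X] ⊗[K] A := 1 ⊗ₜ a + X ⊗ₜ b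
  obtain ⟨r, hr⟩ : ∃ r : K, IsUnit (Algebra.TensorProduct.map (aeval r) (AlgHom.id K A) pencil) :=
    exists_isUnit_map_aeval (z := z) (by simpa [pencil] using h)
  exact ⟨r, by simpa [pencil] using hr.map (Algebra.TensorProduct.lid K A)⟩

end Specialization

/-- If `1 ⊗ a + i ⊗ b` is invertible in the complexification `ℂ ⊗[ℝ] A` of a
finite-dimensional ℝ-algebra `A`, then `a + r·b` is invertible in `A` for some
real number `r`. -/
theorem exists_real_invertible_combination
    (A : Type*) [Ring A] [Algebra ℝ A] [FiniteDimensional ℝ A] (a b : A)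
    (h : IsUnit ((1 : ℂ) ⊗ₜ[ℝ] a + Complex.I ⊗ₜ[ℝ] b : ℂ ⊗[ℝ] A)) :
    ∃ r : ℝ, IsUnit (a + r • b) :=
  exists_real_invertible_combination_general h
end
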